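/- arXiv:1302.3961 — 5 statements merged into one kernel-verified Lean document; each statement's English description precedes it below -/
import Mathlib

section
/- Let p > 1 and on the interval (0,1) set d(x) := min{x, 1−x}. There exists a constant c = c(p) > 0 such that for every u ∈ C_c^∞((0,1)) and every D ≥ 1/2, one has sup_{x ∈ (0,1)} { |u(x)| · (d(x))^{1/p − 1} · X^{1/p}(d(x)/D) } ≤ c · ( ∫_0^1 |u'(t)|^p dt − ((p−1)/p)^p ∫_0^1 |u(t)|^p / (d(t))^p dt )^{1/p}. -/
open MeasureTheory Metric Set

lemma hm_young (p : ℝ) (hp : 1 < p) (f y z : ℝ) (hf : 0 ≤ f) :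
    f * (p * |y| ^ (p - 2) * y * z) ≤ |z| ^ p + (p - 1) * f ^ (p / (p - 1)) * |y| ^ p := by
  have hp0 : 0 < p := by linarith
  have hp1 : 0 < p - 1 := by linarith
  have hpq : p.HolderConjugate (p / (p - 1)) := Real.HolderConjugate.conjExponent hp
  have h := Real.young_inequality_of_nonneg (abs_nonneg z)
    (mul_nonneg hf (Real.rpow_nonneg (abs_nonneg y) (p - 1))) hpq
  have e : (f * |y| ^ (p - 1)) ^ (p / (p - 1)) = f ^ (p / (p - 1)) * |y| ^ p := by
    rw [Real.mul_rpow hf (by positivity), ← Real.rpow_mul (abs_nonneg y)]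
    congr 2
    field_simp
  rw [e] at h
  have h2 : |y| ^ (p - 2) * y * z ≤ |z| * |y| ^ (p - 1) := by
    rcases eq_or_ne y 0 with rfl | hy
    · simp; positivity
    · have hy' : 0 < |y| := abs_pos.mpr hy
      have e2 : |y| ^ (p - 1) = |y| ^ (p - 2) * |y| := by
        rw [show p - 1 = (p - 2) + 1 by ring, Real.rpow_add hy', Real.rpow_one]
      rw [e2]
      have : y * z ≤ |y| * |z| := by rw [← abs_mul]; exact le_abs_self _
      have h3 : 0 ≤ |y| ^ (p - 2) := by positivity
      nlinarith [mul_le_mul_of_nonneg_left this h3]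
  have h4 : f * (p * |y| ^ (p - 2) * y * z) ≤ p * (|z| * (f * |y| ^ (p - 1))) := by
    have := mul_le_mul_of_nonneg_left h2 (mul_nonneg hf hp0.le)
    linarith
  have h5 := mul_le_mul_of_nonneg_left h hp0.le
  have h6 : p * (|z| ^ p / p + f ^ (p / (p - 1)) * |y| ^ p / (p / (p - 1))) =
      |z| ^ p + (p - 1) * f ^ (p / (p - 1)) * |y| ^ p := by field_simp
  linarith

lemma hm_cont (p : ℝ) (hp : 1 < p) (u : ℝ → ℝ) (hu : ContDiff ℝ 1 u) (C a b : ℝ)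
    (ha : 0 < a) :
    ContinuousOn (fun t => |deriv u t| ^ p - C * (|u t| ^ p / t ^ p)) (Icc a b) := by
  have hd : Continuous (deriv u) := hu.continuous_deriv le_rfl
  have hc := hu.continuous
  have hp0 : 0 ≤ p := by linarith
  apply ContinuousOn.sub
  · exact (hd.abs.rpow_const (fun _ => Or.inr hp0)).continuousOn
  · apply ContinuousOn.mul continuousOn_const
    apply ContinuousOn.div
    · exact (hc.abs.rpow_const (fun _ => Or.inr hp0)).continuousOn
    · exact (Real.continuous_rpow_const hp0).continuousOn
    · intro t ht
      exact (Real.rpow_pos_of_pos (lt_of_lt_of_le ha ht.1) p).ne'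

lemma hm_core (p : ℝ) (hp : 1 < p) (u : ℝ → ℝ) (hu : ContDiff ℝ 1 u) (C a b : ℝ)
    (ha : 0 < a) (hab : a ≤ b) (f f' : ℝ → ℝ) (hf0 : ∀ t ∈ Icc a b, 0 ≤ f t)
    (hf : ∀ t ∈ Icc a b, HasDerivAt f (f' t) t)
    (hode : ∀ t ∈ Icc a b, f' t + (p - 1) * (f t) ^ (p / (p - 1)) ≤ - (C / t ^ p)) :
    f b * |u b| ^ p - f a * |u a| ^ p ≤
      ∫ t in a..b, (|deriv u t| ^ p - C * (|u t| ^ p / t ^ p)) := by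
  have hg : ∀ t ∈ Icc a b, HasDerivAt (fun t => f t * |u t| ^ p)
      (f' t * |u t| ^ p + f t * (p * |u t| ^ (p - 2) * u t * deriv u t)) t := by
    intro t ht
    have h1 : HasDerivAt u (deriv u t) t :=
      (hu.differentiable (by norm_num) t).hasDerivAt
    have h2 := (hasDerivAt_abs_rpow (u t) hp).comp t h1
    exact (hf t ht).mul h2
  refine intervalIntegral.sub_le_integral_of_hasDeriv_right_of_le hab
    (fun t ht => (hg t ht).continuousAt.continuousWithinAt)
    (fun t ht => (hg t (Ioo_subset_Icc_self ht)).hasDerivWithinAt)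
    ((hm_cont p hp u hu C a b ha).integrableOn_Icc) ?_
  intro t ht
  have ht' := Ioo_subset_Icc_self ht
  have h1 := hm_young p hp (f t) (u t) (deriv u t) (hf0 t ht')
  have h2 := mul_le_mul_of_nonneg_right (hode t ht') (Real.rpow_nonneg (abs_nonneg (u t)) p)
  have e : C * (|u t| ^ p / t ^ p) = C / t ^ p * |u t| ^ p := by ring
  simp only [e]
  nlinarith

lemma hm_one_sub (q η : ℝ) (hq : 0 ≤ q) (h0 : 0 ≤ η) (h1 : η ≤ 1) :
    (1 - η) ^ q ≤ 1 - q * η + (q * η) ^ 2 := by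
  have hz : 0 ≤ q * η := mul_nonneg hq h0
  have a1 : (1 - η) ^ q ≤ (Real.exp (-η)) ^ q :=
    Real.rpow_le_rpow (by linarith) (by linarith [Real.add_one_le_exp (-η)]) hq
  have a2 : (Real.exp (-η)) ^ q = Real.exp (-(q * η)) := by
    rw [← Real.exp_mul]; congr 1; ring
  have a3 : Real.exp (-(q * η)) ≤ 1 - q * η + (q * η) ^ 2 := by
    rw [Real.exp_neg, inv_le_iff_one_le_mul₀ (Real.exp_pos _)]
    have h3 := Real.add_one_le_exp (q * η)
    have h4 : 0 ≤ 1 - q * η + (q * η) ^ 2 := by nlinarith [sq_nonneg (q * η - 1)]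
    have h5 := mul_le_mul_of_nonneg_left h3 h4
    have h6 : 0 ≤ (q * η) ^ 3 := by positivity
    nlinarith
  linarith

/-- the algebraic inequality for `f = κ^(p-1) t^(1-p) (1-η)` -/
lemma hm_ode (p : ℝ) (hp : 1 < p) (t η : ℝ) (ht : 0 < t) (h0 : 0 ≤ η) (h1 : η ≤ 1) :
    ((p - 1) / p) ^ (p - 1) * ((1 - p) * t ^ (-p) * (1 - η) - t ^ (-p) * (p * η ^ 2))
      + (p - 1) * (((p - 1) / p) ^ (p - 1) * (t ^ (1 - p) * (1 - η))) ^ (p / (p - 1))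
      ≤ - (((p - 1) / p) ^ p / t ^ p) := by
  have hp0 : 0 < p := by linarith
  have hp1 : 0 < p - 1 := by linarith
  set k := (p - 1) / p with hk
  have hk0 : 0 < k := by positivity
  have ek : k ^ p = k ^ (p - 1) * k := by
    conv_lhs => rw [show p = (p - 1) + 1 by ring]
    rw [Real.rpow_add hk0, Real.rpow_one]
  have e1 : (k ^ (p - 1) * (t ^ (1 - p) * (1 - η))) ^ (p / (p - 1))
      = k ^ p * (t ^ (-p) * (1 - η) ^ (p / (p - 1))) := by
    rw [Real.mul_rpow (by positivity) (mul_nonneg (by positivity) (by linarith)),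
      Real.mul_rpow (by positivity) (by linarith), ← Real.rpow_mul hk0.le,
      ← Real.rpow_mul ht.le]
    have : (p - 1) * (p / (p - 1)) = p := by field_simp
    rw [this, show (1 - p) * (p / (p - 1)) = - p by
      rw [show (1 - p) = -(p-1) by ring, neg_mul, this]]
  have h := hm_one_sub (p / (p - 1)) η (by positivity) h0 h1
  rw [e1, div_eq_mul_inv (k ^ p) (t ^ p), ← Real.rpow_neg ht.le, ek]
  have hA : 0 ≤ k ^ (p - 1) * t ^ (-p) := by positivity
  have h2 := mul_le_mul_of_nonneg_left h (mul_nonneg (mul_nonneg hp1.le hk0.le) hA)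
  have key : (1 - p) * (1 - η) - p * η ^ 2 +
      (p - 1) * k * (1 - p / (p - 1) * η + (p / (p - 1) * η) ^ 2) = - k := by
    rw [hk]; field_simp; ring
  have key2 := congrArg (fun z => (k ^ (p - 1) * t ^ (-p)) * z) key
  linarith

lemma hm_left (p : ℝ) (hp : 1 < p) (u : ℝ → ℝ) (hu : ContDiff ℝ 1 u) (δ x : ℝ)
    (hδ : 0 < δ) (hx : δ ≤ x) (hx2 : x ≤ 1 / 2) (h0 : u δ = 0) :
    ((p - 1) / p) ^ (p - 1) / p * (x ^ (1 - p) * (1 - Real.log (2 * x))⁻¹ * |u x| ^ p) ≤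
      ∫ t in δ..(1 / 2), (|deriv u t| ^ p - ((p - 1) / p) ^ p * (|u t| ^ p / t ^ p)) := by
  have hp0 : 0 < p := by linarith
  have hp1 : 0 < p - 1 := by linarith
  have hx0 : 0 < x := by linarith
  set K := ((p - 1) / p) ^ (p - 1) with hK
  have hK0 : 0 < K := by positivity
  have hlog : ∀ t, 0 < t → t ≤ 1 / 2 → 1 ≤ 1 - Real.log (2 * t) := by
    intro t h1 h2
    have := Real.log_nonpos (x := 2 * t) (by linarith) (by linarith)
    linarith
  have hη : ∀ t, 0 < t → t ≤ 1 / 2 → 0 ≤ (1 - Real.log (2 * t))⁻¹ / p ∧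
      (1 - Real.log (2 * t))⁻¹ / p ≤ 1 := by
    intro t h1 h2
    have h := hlog t h1 h2
    refine ⟨div_nonneg (inv_nonneg.mpr (by linarith)) hp0.le, ?_⟩
    rw [div_le_one hp0]
    have := inv_le_one_of_one_le₀ h
    linarith
  have hpow : ∀ t, 0 < t → HasDerivAt (fun t : ℝ => t ^ (1 - p)) ((1 - p) * t ^ (-p)) t := by
    intro t ht
    have := Real.hasDerivAt_rpow_const (x := t) (p := 1 - p) (Or.inl ht.ne')
    rwa [show 1 - p - 1 = - p by ring] at this
  have A := hm_core p hp u hu (((p - 1) / p) ^ p) δ x hδ hx (fun t => K * t ^ (1 - p))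
    (fun t => K * ((1 - p) * t ^ (-p)))
    (fun t ht => by
      have : 0 < t := lt_of_lt_of_le hδ ht.1
      positivity)
    (fun t ht => (hpow t (lt_of_lt_of_le hδ ht.1)).const_mul K)
    (fun t ht => by
      have := hm_ode p hp t 0 (lt_of_lt_of_le hδ ht.1) le_rfl zero_le_one
      simpa using this)
  have B := hm_core p hp u hu (((p - 1) / p) ^ p) x (1 / 2) hx0 hx2
    (fun t => K * (t ^ (1 - p) * (1 - (1 - Real.log (2 * t))⁻¹ / p)))
    (fun t => K * ((1 - p) * t ^ (-p) * (1 - (1 - Real.log (2 * t))⁻¹ / p) -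
      t ^ (-p) * (p * ((1 - Real.log (2 * t))⁻¹ / p) ^ 2)))
    (fun t ht => by
      have h1 : 0 < t := lt_of_lt_of_le hx0 ht.1
      have := (hη t h1 ht.2).2
      exact mul_nonneg hK0.le (mul_nonneg (by positivity) (by linarith)))
    (fun t ht => by
      have h1 : 0 < t := lt_of_lt_of_le hx0 ht.1
      have h2 := hlog t h1 ht.2
      have d1 : HasDerivAt (fun t : ℝ => Real.log (2 * t)) (2 * 1 / (2 * t)) t :=
        ((hasDerivAt_id t).const_mul 2).log (by simp; exact h1.ne')
      have d2 := ((((d1.const_sub 1).inv (by linarith)).div_const p).const_sub 1)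
      have d3 := ((hpow t h1).mul d2).const_mul K
      refine HasDerivAt.congr_deriv (f := fun t => K * (t ^ (1 - p) * (1 - (1 - Real.log (2 * t))⁻¹ / p))) d3 ?_
      have e : t ^ (1 - p) = t ^ (-p) * t := by
        rw [show 1 - p = -p + 1 by ring, Real.rpow_add h1, Real.rpow_one]
      have h3 : (1 - Real.log (2 * t)) ≠ 0 := by linarith
      rw [e]
      simp only [Pi.inv_apply]
      field_simp
      ring)
    (fun t ht => by
      have h1 : 0 < t := lt_of_lt_of_le hx0 ht.1
      have := hη t h1 ht.2
      exact hm_ode p hp t _ h1 this.1 this.2)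
  have I1 : IntervalIntegrable (fun t => |deriv u t| ^ p - ((p - 1) / p) ^ p * (|u t| ^ p / t ^ p))
      volume δ x := ContinuousOn.intervalIntegrable_of_Icc hx (hm_cont p hp u hu _ _ _ hδ)
  have I2 : IntervalIntegrable (fun t => |deriv u t| ^ p - ((p - 1) / p) ^ p * (|u t| ^ p / t ^ p))
      volume x (1 / 2) := ContinuousOn.intervalIntegrable_of_Icc hx2 (hm_cont p hp u hu _ _ _ hx0)
  rw [← intervalIntegral.integral_add_adjacent_intervals I1 I2]
  have h3 : 0 ≤ K * ((1 / 2 : ℝ) ^ (1 - p) * (1 - (1 - Real.log (2 * (1 / 2)))⁻¹ / p)) *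
      |u (1 / 2)| ^ p := by
    have := (hη (1 / 2) (by norm_num) le_rfl).2
    exact mul_nonneg (mul_nonneg hK0.le (mul_nonneg (by positivity) (by linarith)))
      (by positivity)
  simp only [h0, abs_zero, Real.zero_rpow hp0.ne', mul_zero, sub_zero] at A
  have e : K / p * (x ^ (1 - p) * (1 - Real.log (2 * x))⁻¹ * |u x| ^ p) =
    K * x ^ (1 - p) * |u x| ^ p -
      K * (x ^ (1 - p) * (1 - (1 - Real.log (2 * x))⁻¹ / p)) * |u x| ^ p := by
    field_simp
    ring
  rw [e]
  linarith

lemma hm_margin (u : ℝ → ℝ) (hc : HasCompactSupport u) (hs : tsupport u ⊆ Ioo (0 : ℝ) 1) (x : ℝ)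
    (hx : x ∈ Ioo (0 : ℝ) 1) :
    ∃ δ, 0 < δ ∧ δ ≤ 1 / 2 ∧ δ ≤ x ∧ δ ≤ 1 - x ∧ tsupport u ⊆ Ioo δ (1 - δ) := by
  obtain ⟨ε, hε, h⟩ : ∃ ε, 0 < ε ∧ ∀ t ∈ tsupport u, ε ≤ min t (1 - t) := by
    rcases (tsupport u).eq_empty_or_nonempty with he | hne
    · exact ⟨1, one_pos, by simp [he]⟩
    · obtain ⟨t, ht, hm⟩ := IsCompact.exists_isMinOn (f := fun t : ℝ => min t (1 - t)) hc hne
        (by fun_prop)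
      refine ⟨min t (1 - t), ?_, fun s hs => hm hs⟩
      have := hs ht
      exact lt_min this.1 (by linarith [this.2])
  refine ⟨min (ε / 2) (min (1 / 2) (min x (1 - x))), ?_, ?_, ?_, ?_, ?_⟩
  · have := hx.1; have := hx.2
    refine lt_min (by linarith) (lt_min (by norm_num) (lt_min (by linarith) (by linarith)))
  · exact (min_le_right _ _).trans (min_le_left _ _)
  · exact (min_le_right _ _).trans ((min_le_right _ _).trans (min_le_left _ _))
  · exact (min_le_right _ _).trans ((min_le_right _ _).trans (min_le_right _ _))
  · intro t ht
    have h1 := h t ht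
    have h2 := min_le_left (ε / 2) (min (1 / 2) (min x (1 - x)))
    have h3 := min_le_left t (1 - t)
    have h4 := min_le_right t (1 - t)
    constructor <;> linarith

lemma hm_deriv_refl (u : ℝ → ℝ) (t : ℝ) :
    deriv (fun s => u (1 - s)) t = - deriv u (1 - t) := by
  exact deriv_comp_const_sub (f := u) 1 t

lemma hm_split (p : ℝ) (hp : 1 < p) (u : ℝ → ℝ) (hu : ContDiff ℝ 1 u) (δ : ℝ)
    (hδ : 0 < δ) (hδ2 : δ ≤ 1 / 2) (hs : tsupport u ⊆ Ioo δ (1 - δ)) (C : ℝ) :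
    (∫ t in Ioo (0 : ℝ) 1, |deriv u t| ^ p)
      - C * ∫ t in Ioo (0 : ℝ) 1, |u t| ^ p / (min t (1 - t)) ^ p =
    (∫ t in δ..(1 / 2), (|deriv u t| ^ p - C * (|u t| ^ p / t ^ p))) +
    ∫ t in δ..(1 / 2), (|deriv (fun s => u (1 - s)) t| ^ p - C * (|u (1 - t)| ^ p / t ^ p)) := by
  have hp0 : 0 < p := by linarith
  have hd : Continuous (deriv u) := hu.continuous_deriv le_rfl
  have hc := hu.continuous
  have z1 : ∀ t, t ∉ Ioc δ (1 - δ) → u t = 0 := fun t ht =>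
    image_eq_zero_of_notMem_tsupport (fun h => ht (Ioo_subset_Ioc_self (hs h)))
  have z2 : ∀ t, t ∉ Ioc δ (1 - δ) → deriv u t = 0 := fun t ht => by
    by_contra h
    exact ht (Ioo_subset_Ioc_self (hs (support_deriv_subset h)))
  have sub : Ioc δ (1 - δ) ⊆ Ioo (0 : ℝ) 1 := fun t ht =>
    ⟨hδ.trans ht.1, by linarith [ht.2]⟩
  have hle : δ ≤ 1 - δ := by linarith
  have E1 : (∫ t in Ioo (0 : ℝ) 1, |deriv u t| ^ p) = ∫ t in δ..(1 - δ), |deriv u t| ^ p := by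
    rw [intervalIntegral.integral_of_le hle]
    refine setIntegral_eq_of_subset_of_forall_sdiff_eq_zero measurableSet_Ioo sub ?_
    intro t ht
    simp [z2 t ht.2, Real.zero_rpow hp0.ne']
  have E2 : (∫ t in Ioo (0 : ℝ) 1, |u t| ^ p / (min t (1 - t)) ^ p) =
      ∫ t in δ..(1 - δ), |u t| ^ p / (min t (1 - t)) ^ p := by
    rw [intervalIntegral.integral_of_le hle]
    refine setIntegral_eq_of_subset_of_forall_sdiff_eq_zero measurableSet_Ioo sub ?_
    intro t ht
    simp [z1 t ht.2, Real.zero_rpow hp0.ne']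
  have c1 : Continuous (fun t => |deriv u t| ^ p) := hd.abs.rpow_const (fun _ => Or.inr hp0.le)
  have c2 : ContinuousOn (fun t => |u t| ^ p / (min t (1 - t)) ^ p) (Icc δ (1 - δ)) := by
    apply ContinuousOn.div
    · exact (hc.abs.rpow_const (fun _ => Or.inr hp0.le)).continuousOn
    · have : Continuous (fun t : ℝ => min t (1 - t)) := by fun_prop
      exact (this.rpow_const (fun _ => Or.inr hp0.le)).continuousOn
    · intro t ht
      have : 0 < min t (1 - t) := lt_min (by linarith [ht.1]) (by linarith [ht.2])
      exact (Real.rpow_pos_of_pos this p).ne'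
  have c3 : ContinuousOn (fun t => |deriv u t| ^ p - C * (|u t| ^ p / (min t (1 - t)) ^ p))
      (Icc δ (1 - δ)) := c1.continuousOn.sub (continuousOn_const.mul c2)
  rw [E1, E2, ← intervalIntegral.integral_const_mul, ← intervalIntegral.integral_sub
    (c1.intervalIntegrable _ _)
    ((ContinuousOn.intervalIntegrable_of_Icc hle c2).const_mul C)]
  have I1 := ContinuousOn.intervalIntegrable_of_Icc (μ := volume) hδ2
    (c3.mono (Icc_subset_Icc_right (show (1 / 2 : ℝ) ≤ 1 - δ by linarith)))
  have I2 := ContinuousOn.intervalIntegrable_of_Icc (μ := volume)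
    (show (1 / 2 : ℝ) ≤ 1 - δ by linarith) (c3.mono (Icc_subset_Icc_left hδ2))
  rw [← intervalIntegral.integral_add_adjacent_intervals I1 I2]
  congr 1
  · apply intervalIntegral.integral_congr
    intro t ht
    rw [uIcc_of_le hδ2] at ht
    simp only
    rw [min_eq_left (by linarith [ht.2])]
  · have r := intervalIntegral.integral_comp_sub_left (a := δ) (b := 1 / 2)
      (fun t => |deriv u t| ^ p - C * (|u t| ^ p / (min t (1 - t)) ^ p)) 1
    rw [show (1 : ℝ) - 1 / 2 = 1 / 2 by norm_num] at r
    rw [← r]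
    apply intervalIntegral.integral_congr
    intro t ht
    rw [uIcc_of_le hδ2] at ht
    simp only
    rw [hm_deriv_refl, abs_neg, min_eq_right (by linarith [ht.2]),
      show 1 - (1 - t) = t by ring]

lemma hm_final (p : ℝ) (hp : 1 < p) (K m U J D : ℝ) (hK : 0 < K) (hm : 0 < m) (hm2 : m ≤ 1 / 2)
    (hD : 1 / 2 ≤ D) (hU : 0 ≤ U)
    (h : K * (m ^ (1 - p) * (1 - Real.log (2 * m))⁻¹ * U ^ p) ≤ J) :
    U * m ^ (1 / p - 1) * ((1 - Real.log (m / D))⁻¹) ^ (1 / p) ≤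
      (1 / K) ^ (1 / p) * J ^ (1 / p) := by
  have hp0 : 0 < p := by linarith
  have hl : Real.log (2 * m) ≤ 0 := Real.log_nonpos (by linarith) (by linarith)
  have hl2 : Real.log (m / D) ≤ Real.log (2 * m) := by
    apply Real.log_le_log (by positivity)
    rw [div_le_iff₀ (by linarith)]
    nlinarith
  have hX : (1 - Real.log (m / D))⁻¹ ≤ (1 - Real.log (2 * m))⁻¹ :=
    inv_anti₀ (by linarith) (by linarith)
  have hX0 : 0 ≤ (1 - Real.log (m / D))⁻¹ := inv_nonneg.mpr (by linarith)
  have hX1 : 0 ≤ (1 - Real.log (2 * m))⁻¹ := hX0.trans hX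
  have hJ : 0 ≤ J := le_trans (by positivity) h
  have e : U * m ^ (1 / p - 1) * ((1 - Real.log (m / D))⁻¹) ^ (1 / p) =
      (m ^ (1 - p) * (1 - Real.log (m / D))⁻¹ * U ^ p) ^ (1 / p) := by
    rw [Real.mul_rpow (by positivity) (by positivity), Real.mul_rpow (by positivity) hX0,
      ← Real.rpow_mul hm.le, ← Real.rpow_mul hU,
      show (1 - p) * (1 / p) = 1 / p - 1 by field_simp,
      show p * (1 / p) = 1 by field_simp, Real.rpow_one]
    ring
  rw [e, ← Real.mul_rpow (by positivity) hJ]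
  apply Real.rpow_le_rpow (by positivity) _ (by positivity)
  rw [one_div, ← div_eq_inv_mul, le_div_iff₀ hK, mul_comm]
  refine le_trans ?_ h
  gcongr

/-- one-dimensional pointwise Hardy–Morrey estimate on `(0,1)`,
distance to the boundary. -/
theorem hardy_morrey_pointwise_interval (p : ℝ) (hp : 1 < p) :
    ∃ c : ℝ, 0 < c ∧
      ∀ u : ℝ → ℝ, ContDiff ℝ (⊤ : ℕ∞) u → HasCompactSupport u →
        tsupport u ⊆ Set.Ioo (0 : ℝ) 1 →
        ∀ D : ℝ, 1 / 2 ≤ D → ∀ x ∈ Set.Ioo (0 : ℝ) 1,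
          |u x| * (min x (1 - x)) ^ (1 / p - 1) *
              ((1 - Real.log (min x (1 - x) / D))⁻¹) ^ (1 / p) ≤
            c * ((∫ t in Set.Ioo (0 : ℝ) 1, |deriv u t| ^ p)
              - ((p - 1) / p) ^ p *
                  ∫ t in Set.Ioo (0 : ℝ) 1, |u t| ^ p / (min t (1 - t)) ^ p) ^ (1 / p) := by
  have hp0 : 0 < p := by linarith
  have hp1 : 0 < p - 1 := by linarith
  have hK : 0 < ((p - 1) / p) ^ (p - 1) / p := by positivity
  refine ⟨(1 / (((p - 1) / p) ^ (p - 1) / p)) ^ (1 / p), by positivity, ?_⟩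
  intro u hu hc hs D hD x hx
  have hu1 : ContDiff ℝ 1 u := hu.of_le (by exact_mod_cast le_top)
  obtain ⟨δ, hδ, hδ2, hδx, hδx', hsup⟩ := hm_margin u hc hs x hx
  have hv1 : ContDiff ℝ 1 (fun s => u (1 - s)) := hu1.comp (contDiff_const.sub contDiff_id)
  have u0 : u δ = 0 := image_eq_zero_of_notMem_tsupport (fun h => lt_irrefl _ (hsup h).1)
  have v0 : (fun s => u (1 - s)) δ = 0 :=
    image_eq_zero_of_notMem_tsupport (fun h => lt_irrefl _ (hsup h).2)
  rw [hm_split p hp u hu1 δ hδ hδ2 hsup]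
  have hl := hm_left p hp u hu1 δ
  have hr := hm_left p hp _ hv1 δ
  have nl := hl δ hδ le_rfl hδ2 u0
  have nr := hr δ hδ le_rfl hδ2 v0
  simp only at v0
  simp only [u0, v0, abs_zero, Real.zero_rpow hp0.ne', mul_zero] at nl nr
  have hx0 := hx.1
  have hx1 := hx.2
  rcases le_total x (1 / 2) with h | h
  · rw [min_eq_left (by linarith)]
    refine hm_final p hp _ x |u x| _ D hK hx0 h hD (abs_nonneg _) ?_
    have := hl x hδ hδx h u0
    linarith
  · rw [min_eq_right (by linarith)]
    refine hm_final p hp _ (1 - x) |u x| _ D hK (by linarith) (by linarith) hD (abs_nonneg _) ?_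
    have := hr (1 - x) hδ hδx' (by linarith) v0
    simp only [sub_sub_cancel] at this
    linarith
end

section
/- Let n ≥ 1 and let Ω ⊊ ℝⁿ be a nonempty open set with d(x) := dist(x, ℝⁿ∖Ω). Then for every s > n and every u ∈ C_c^∞(Ω), one has ∫_Ω |∇u| / d^{s−1} dx ≥ (s−n) · ∫_Ω |u| / d^s dx. -/
open MeasureTheory Metric Set

lemma aux_volume {n : ℕ} (S : EuclideanSpace ℝ (Fin n) → EuclideanSpace ℝ (Fin n))
    (K : NNReal) (hS : AntilipschitzWith K S) (A : Set (EuclideanSpace ℝ (Fin n))) :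
    volume A ≤ (K : ENNReal) ^ n * volume (S '' A) := by
  have h := hS.le_hausdorffMeasure_image (d := (Module.finrank ℝ (EuclideanSpace ℝ (Fin n)) : ℝ))
    (by positivity) A
  have e := Measure.isAddLeftInvariant_eq_smul
    (volume : Measure (EuclideanSpace ℝ (Fin n)))
    (Measure.hausdorffMeasure (Module.finrank ℝ (EuclideanSpace ℝ (Fin n)) : ℝ))
  rw [e]
  simp only [Measure.smul_apply]
  rw [ENNReal.rpow_natCast] at h
  rw [mul_smul_comm]
  simp only [finrank_euclideanSpace, Fintype.card_fin] at h ⊢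
  gcongr

lemma aux_lintegral {n : ℕ} (S : EuclideanSpace ℝ (Fin n) → EuclideanSpace ℝ (Fin n))
    (K : NNReal) (hS : AntilipschitzWith K S) (f : EuclideanSpace ℝ (Fin n) → ℝ)
    (hf : Continuous f) (hf0 : ∀ x, 0 ≤ f x) :
    ∫⁻ x, ENNReal.ofReal (f (S x)) ≤ (K : ENNReal) ^ n * ∫⁻ x, ENNReal.ofReal (f x) := by
  obtain ⟨φ, hφm, hφle, hφ⟩ := exists_measurable_le_lintegral_eq (μ := volume)
    (fun x => ENNReal.ofReal (f (S x)))
  rw [hφ]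
  have h1 : ∀ x, φ x = ENNReal.ofReal (φ x).toReal := fun x =>
    (ENNReal.ofReal_toReal (ne_top_of_le_ne_top ENNReal.ofReal_ne_top (hφle x))).symm
  have h2 : ∀ x, (φ x).toReal ≤ f (S x) := fun x =>
    ENNReal.toReal_le_of_le_ofReal (hf0 _) (hφle x)
  rw [lintegral_congr h1, lintegral_eq_lintegral_meas_lt _ (Filter.Eventually.of_forall fun x =>
    ENNReal.toReal_nonneg) hφm.ennreal_toReal.aemeasurable,
    lintegral_eq_lintegral_meas_lt _ (Filter.Eventually.of_forall hf0) hf.aemeasurable,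
    ← lintegral_const_mul' _ _ (by finiteness)]
  refine lintegral_mono fun r => ?_
  refine (aux_volume S K hS _).trans ?_
  gcongr
  rintro _ ⟨x, hx, rfl⟩
  exact lt_of_lt_of_le hx (h2 x)

lemma aux_cont {n : ℕ} (Ω : Set (EuclideanSpace ℝ (Fin n))) (hΩo : IsOpen Ω)
    (hne : Ωᶜ.Nonempty) (a : ℝ) (v : EuclideanSpace ℝ (Fin n) → ℝ) (hv : Continuous v)
    (hsupp : tsupport v ⊆ Ω) : Continuous fun x => v x / (Metric.infDist x Ωᶜ) ^ a := by
  rw [continuous_iff_continuousAt]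
  intro x
  by_cases hx : x ∈ Ω
  · have hd : 0 < infDist x Ωᶜ :=
      (hΩo.isClosed_compl.notMem_iff_infDist_pos hne).1 (by simpa using hx)
    refine hv.continuousAt.div ?_ (Real.rpow_pos_of_pos hd a).ne'
    exact (continuous_infDist_pt _).continuousAt.rpow_const (Or.inl hd.ne')
  · have h0 : v =ᶠ[nhds x] 0 := notMem_tsupport_iff_eventuallyEq.1 fun h => hx (hsupp h)
    have : (fun x => v x / (Metric.infDist x Ωᶜ) ^ a) =ᶠ[nhds x] fun _ => (0:ℝ) := by
      filter_upwards [h0] with y hy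
      simp [hy]
    exact continuousAt_const.congr this.symm

lemma aux_taylor {n : ℕ} (u : EuclideanSpace ℝ (Fin n) → ℝ) (hu : Differentiable ℝ u)
    (L : NNReal) (hL : LipschitzWith L (fderiv ℝ u)) (x y : EuclideanSpace ℝ (Fin n)) :
    |u x| ≤ |u y| + ‖fderiv ℝ u x‖ * ‖y - x‖ + L * ‖y - x‖ ^ 2 := by
  have h := (convex_closedBall x ‖y - x‖).norm_image_sub_le_of_norm_fderiv_le'
    (𝕜 := ℝ) (f := u) (φ := fderiv ℝ u x) (C := L * ‖y - x‖) (x := x) (y := y)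
    (fun z _ => hu z) (fun z hz => by
      rw [← dist_eq_norm]
      refine (hL.dist_le_mul z x).trans ?_
      gcongr
      exact hz) (by simp) (by simp [dist_eq_norm])
  have h2 := (fderiv ℝ u x).le_opNorm (y - x)
  rw [Real.norm_eq_abs] at h h2
  rw [abs_le] at h h2
  have h3 : |u x| - |u y| ≤ |u x - u y| := abs_sub_abs_le_abs_sub _ _
  have h4 : |u x - u y| ≤ ‖fderiv ℝ u x‖ * ‖y - x‖ + L * ‖y - x‖ ^ 2 := by
    rw [abs_le]
    constructor <;> nlinarith [h.1, h.2, h2.1, h2.2]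
  linarith

/-- `L^1` weighted Hardy inequality on a general open set. -/
theorem l1_weighted_hardy_general (n : ℕ) (hn : 1 ≤ n)
    (Ω : Set (EuclideanSpace ℝ (Fin n))) (hΩo : IsOpen Ω) (hΩne : Ω.Nonempty)
    (hΩuniv : Ω ≠ Set.univ) :
    ∀ s : ℝ, (n : ℝ) < s →
    ∀ u : EuclideanSpace ℝ (Fin n) → ℝ, ContDiff ℝ (⊤ : ℕ∞) u →
      HasCompactSupport u → tsupport u ⊆ Ω →
      (∫ x in Ω, ‖fderiv ℝ u x‖ / (Metric.infDist x Ωᶜ) ^ (s - 1)) ≥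
        (s - n) * ∫ x in Ω, |u x| / (Metric.infDist x Ωᶜ) ^ s := by
  intro s hs u hu huc hsupp
  have hne : Ωᶜ.Nonempty := nonempty_compl.2 hΩuniv
  have hcl : IsClosed Ωᶜ := hΩo.isClosed_compl
  have hdpos : ∀ x ∈ Ω, 0 < infDist x Ωᶜ := fun x hx =>
    (hcl.notMem_iff_infDist_pos hne).1 (by simpa using hx)
  have hsuppd : tsupport (fderiv ℝ u) ⊆ Ω := (tsupport_fderiv_subset ℝ).trans hsupp
  have hu0 : ∀ x, x ∉ tsupport u → u x = 0 := fun x hx => image_eq_zero_of_notMem_tsupport hx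
  have hdu0 : ∀ x, x ∉ Ω → fderiv ℝ u x = 0 := fun x hx =>
    image_eq_zero_of_notMem_tsupport fun h => hx (hsuppd h)
  rw [setIntegral_eq_integral_of_forall_compl_eq_zero (fun x hx => by simp [hdu0 x hx]),
    setIntegral_eq_integral_of_forall_compl_eq_zero
      (fun x hx => by simp [hu0 x fun h => hx (hsupp h)])]
  set f : EuclideanSpace ℝ (Fin n) → ℝ := fun x => |u x| / (Metric.infDist x Ωᶜ) ^ s with hfdef
  set g : EuclideanSpace ℝ (Fin n) → ℝ :=
    fun x => ‖fderiv ℝ u x‖ / (Metric.infDist x Ωᶜ) ^ (s - 1) with hgdef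
  set R : EuclideanSpace ℝ (Fin n) → ℝ :=
    (tsupport u).indicator fun x => (infDist x Ωᶜ) ^ 2 / (Metric.infDist x Ωᶜ) ^ s with hRdef
  have hf0 : ∀ x, 0 ≤ f x := fun x => div_nonneg (abs_nonneg _) (Real.rpow_nonneg infDist_nonneg _)
  have hg0 : ∀ x, 0 ≤ g x := fun x => div_nonneg (norm_nonneg _) (Real.rpow_nonneg infDist_nonneg _)
  have hR0 : ∀ x, 0 ≤ R x := fun x => indicator_nonneg (fun y _ =>
    div_nonneg (sq_nonneg _) (Real.rpow_nonneg infDist_nonneg _)) x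
  have hdc : Continuous (fderiv ℝ u) := hu.continuous_fderiv (by simp)
  have hfc : Continuous f := by
    refine aux_cont Ω hΩo hne s (fun x => |u x|) hu.continuous.abs ?_
    exact (closure_mono (fun x hx => by simpa using hx)).trans hsupp
  have hgc : Continuous g := by
    refine aux_cont Ω hΩo hne (s-1) (fun x => ‖fderiv ℝ u x‖) hdc.norm ?_
    exact (closure_mono (fun x hx => by simpa using hx)).trans hsuppd
  have hfi : Integrable f := by
    refine hfc.integrable_of_hasCompactSupport (huc.mono fun x hx => ?_)
    intro h
    exact hx (by simp [hfdef, h])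
  have hgi : Integrable g := by
    refine hgc.integrable_of_hasCompactSupport ((huc.fderiv ℝ).mono fun x hx => ?_)
    intro h
    exact hx (by simp [hgdef, h])
  have hRi : Integrable R := by
    rw [hRdef, integrable_indicator_iff (isClosed_tsupport u).measurableSet]
    refine ContinuousOn.integrableOn_compact huc ?_
    refine ContinuousOn.div (by fun_prop) ?_ (fun x hx => (Real.rpow_pos_of_pos
      (hdpos x (hsupp hx)) s).ne')
    exact (continuous_infDist_pt _).continuousOn.rpow_const
      fun x hx => Or.inl (hdpos x (hsupp hx)).ne'
  obtain ⟨L, hL⟩ : ∃ L, LipschitzWith L (fderiv ℝ u) :=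
    ContDiff.lipschitzWith_of_hasCompactSupport (𝕂 := ℝ) (n := 1) (huc.fderiv ℝ)
      (hu.fderiv_right (by norm_cast)) (by simp)
  choose P hPm hP using fun x => hcl.exists_infDist_eq_dist hne x
  have hmono : ∀ x y, 0 ≤ inner ℝ (P x - P y) (x - y) := by
    intro x y
    have h1 : dist x (P x) ≤ dist x (P y) := hP x ▸ infDist_le_dist_of_mem (hPm y)
    have h2 : dist y (P y) ≤ dist y (P x) := hP y ▸ infDist_le_dist_of_mem (hPm x)
    rw [dist_eq_norm, dist_eq_norm] at h1 h2
    have h1' := pow_le_pow_left₀ (norm_nonneg _) h1 2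
    have h2' := pow_le_pow_left₀ (norm_nonneg _) h2 2
    simp only [norm_sub_sq_real] at h1' h2'
    simp only [inner_sub_left, inner_sub_right]
    rw [real_inner_comm x (P x), real_inner_comm x (P y), real_inner_comm y (P x),
      real_inner_comm y (P y)]
    first
    | linarith
    | (rw [real_inner_comm x (P x), real_inner_comm x (P y), real_inner_comm y (P x),
        real_inner_comm y (P y)] at *; linarith)
  have key : ∀ t : ℝ, 0 < t → t < 1 →
      (∫ x, f x) ≤ (1 - t) ^ (s - n) * (∫ x, f x) + (t * (∫ x, g x) + L * t ^ 2 * ∫ x, R x) := by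
    intro t ht0 ht1
    have ht : 0 < 1 - t := by linarith
    set S : EuclideanSpace ℝ (Fin n) → EuclideanSpace ℝ (Fin n) :=
      fun x => x + t • (P x - x) with hSdef
    have hS : AntilipschitzWith (Real.toNNReal (1 - t)⁻¹) S := by
      refine AntilipschitzWith.of_le_mul_dist fun x y => ?_
      rw [Real.coe_toNNReal _ (by positivity), inv_mul_eq_div, le_div_iff₀ ht, dist_eq_norm,
        dist_eq_norm]
      have e : S x - S y = (1 - t) • (x - y) + t • (P x - P y) := by
        simp only [hSdef]; module
      have h1 : (1 - t) * ‖x - y‖ ^ 2 ≤ inner ℝ (S x - S y) (x - y) := by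
        rw [e, inner_add_left, real_inner_smul_left, real_inner_smul_left,
          real_inner_self_eq_norm_sq]
        nlinarith [mul_nonneg ht0.le (hmono x y)]
      have h2 := real_inner_le_norm (S x - S y) (x - y)
      rcases (norm_nonneg (x - y)).eq_or_lt with h | h
      · rw [← h]; simp
      · nlinarith
    have hSx : ∀ x, ‖S x - x‖ = t * infDist x Ωᶜ := by
      intro x
      simp only [hSdef, add_sub_cancel_left, norm_smul, Real.norm_eq_abs, abs_of_pos ht0]
      rw [hP x, dist_comm, dist_eq_norm]
    have hdS : ∀ x, infDist (S x) Ωᶜ = (1 - t) * infDist x Ωᶜ := by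
      intro x
      apply le_antisymm
      · refine (infDist_le_dist_of_mem (hPm x)).trans (le_of_eq ?_)
        rw [hP x, dist_eq_norm, dist_eq_norm]
        have : S x - P x = (1 - t) • (x - P x) := by simp only [hSdef]; module
        rw [this, norm_smul, Real.norm_eq_abs, abs_of_pos ht]
      · have := infDist_le_infDist_add_dist (s := Ωᶜ) (x := x) (y := S x)
        rw [dist_comm, dist_eq_norm, hSx] at this
        linarith
    have hpt : ∀ x, f x ≤ (1 - t) ^ s * f (S x) + (t * g x + L * t ^ 2 * R x) := by
      intro x
      by_cases hx : x ∈ tsupport u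
      · have hd := hdpos x (hsupp hx)
        have hT := aux_taylor u (hu.differentiable (by simp)) L hL x (S x)
        rw [hSx] at hT
        have hds : 0 < (infDist x Ωᶜ) ^ s := Real.rpow_pos_of_pos hd s
        have hts : 0 < (1 - t) ^ s := Real.rpow_pos_of_pos ht s
        simp only [hfdef, hgdef, hRdef, indicator_of_mem hx]
        rw [hdS, Real.mul_rpow ht.le hd.le, Real.rpow_sub_one hd.ne', div_le_iff₀ hds]
        refine hT.trans (le_of_eq ?_)
        field_simp
        ring
      · have : f x = 0 := by simp [hfdef, hu0 x hx]
        rw [this]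
        have := hf0 (S x)
        have := hg0 x
        have := hR0 x
        have := Real.rpow_nonneg ht.le s
        positivity
    have hI0 : 0 ≤ ∫ x, f x := integral_nonneg hf0
    have hint : Integrable fun x => t * g x + L * t ^ 2 * R x :=
      (hgi.const_mul t).add (hRi.const_mul _)
    have hnn : ∀ x, 0 ≤ t * g x + L * t ^ 2 * R x := fun x => by
      have := hg0 x
      have := hR0 x
      positivity
    have hE : (∫ x, (t * g x + L * t ^ 2 * R x)) = t * (∫ x, g x) + L * t ^ 2 * ∫ x, R x := by
      rw [integral_add (hgi.const_mul t) (hRi.const_mul _), integral_const_mul, integral_const_mul]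
    have hE0 : 0 ≤ ∫ x, (t * g x + L * t ^ 2 * R x) := integral_nonneg hnn
    rw [← hE]
    have hts : 0 ≤ (1 - t) ^ s := Real.rpow_nonneg ht.le s
    rw [← ENNReal.ofReal_le_ofReal_iff (by positivity), ENNReal.ofReal_add (by positivity) hE0,
      ofReal_integral_eq_lintegral_ofReal hint (Filter.Eventually.of_forall hnn),
      ENNReal.ofReal_mul (by positivity),
      ofReal_integral_eq_lintegral_ofReal hfi (Filter.Eventually.of_forall hf0)]
    calc ∫⁻ x, ENNReal.ofReal (f x)
        ≤ ∫⁻ x, (ENNReal.ofReal ((1 - t) ^ s) * ENNReal.ofReal (f (S x))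
            + ENNReal.ofReal (t * g x + L * t ^ 2 * R x)) := by
          refine lintegral_mono fun x => ?_
          rw [← ENNReal.ofReal_mul hts, ← ENNReal.ofReal_add (mul_nonneg hts (hf0 _)) (hnn x)]
          exact ENNReal.ofReal_le_ofReal (hpt x)
      _ = ENNReal.ofReal ((1 - t) ^ s) * (∫⁻ x, ENNReal.ofReal (f (S x)))
            + ∫⁻ x, ENNReal.ofReal (t * g x + L * t ^ 2 * R x) := by
          rw [lintegral_add_right' _ hint.aemeasurable.ennreal_ofReal,
            lintegral_const_mul' _ _ ENNReal.ofReal_ne_top]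
      _ ≤ _ := by
          refine add_le_add_left ?_ _
          refine (mul_le_mul_right (aux_lintegral S _ hS f hfc hf0) _).trans (le_of_eq ?_)
          rw [← mul_assoc]
          congr 1
          change _ * (ENNReal.ofReal _) ^ n = _
          rw [← ENNReal.ofReal_pow (by positivity), ← ENNReal.ofReal_mul hts,
            Real.rpow_sub ht, Real.rpow_natCast, inv_pow, div_eq_mul_inv]
  set I := ∫ x, f x
  set J := ∫ x, g x
  set C := ∫ x, R x
  have hI0 : 0 ≤ I := integral_nonneg hf0
  have key2 : ∀ t : ℝ, 0 < t → t < 1 →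
      (s - n) * I ≤ (J + L * t * C) * (1 + (s - n) * t) := by
    intro t ht0 ht1
    have ha : 0 < s - n := by linarith
    have h := key t ht0 ht1
    have hx : 0 < 1 + (s - n) * t := by positivity
    have h1 : (1 - t) ^ (s - n) ≤ (1 + (s - n) * t)⁻¹ := by
      calc (1 - t) ^ (s - n) ≤ (Real.exp (-t)) ^ (s - n) := by
            refine Real.rpow_le_rpow (by linarith) ?_ ha.le
            linarith [Real.add_one_le_exp (-t)]
        _ = (Real.exp ((s - n) * t))⁻¹ := by
            rw [← Real.exp_mul, ← Real.exp_neg]; ring_nf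
        _ ≤ _ := by
            apply inv_anti₀ hx
            linarith [Real.add_one_le_exp ((s - n) * t)]
    have h2 : I ≤ (1 + (s - n) * t)⁻¹ * I + t * (J + L * t * C) := by
      nlinarith [mul_le_mul_of_nonneg_right h1 hI0]
    have h3 := mul_le_mul_of_nonneg_right h2 hx.le
    have h4 : ((1 + (s - n) * t)⁻¹ * I + t * (J + L * t * C)) * (1 + (s - n) * t)
        = I + t * ((J + L * t * C) * (1 + (s - n) * t)) := by
      field_simp
    rw [h4] at h3
    have h5 : t * ((s - n) * I) ≤ t * ((J + L * t * C) * (1 + (s - n) * t)) := by linarith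
    exact le_of_mul_le_mul_left h5 ht0
  have hlim : Filter.Tendsto (fun t : ℝ => (J + L * t * C) * (1 + (s - n) * t))
      (nhdsWithin 0 (Ioi 0)) (nhds J) := by
    have hc : Continuous (fun t : ℝ => (J + L * t * C) * (1 + (s - n) * t)) := by fun_prop
    have := hc.tendsto 0
    simp only [mul_zero, zero_mul, add_zero, mul_one] at this
    exact this.mono_left nhdsWithin_le_nhds
  refine ge_of_tendsto hlim ?_
  filter_upwards [Ioo_mem_nhdsGT (zero_lt_one' ℝ)] with t ht
  exact key2 t ht.1 ht.2
end

section
/- Let n ≥ 1 and let Ω ⊊ ℝⁿ be a nonempty open set with d(x) := dist(x, ℝⁿ∖Ω) and finite inner radius R := sup_{x ∈ Ω} d(x) < ∞. Then for every s ≥ n, every γ > 1, and every u ∈ C_c^∞(Ω), one has ∫_Ω |∇u| / d^{s−1} dx ≥ (s−n) · ∫_Ω |u| / d^s dx + ((γ−1)/R^{s−n}) · ∫_Ω (|u| / dⁿ) · X^γ(d/R) dx. -/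
open MeasureTheory Metric Set

noncomputable def hw (n : ℕ) (s γ R r : ℝ) : ℝ :=
  (s - n) * r ^ (-s) + (γ - 1) * R ^ ((n:ℝ) - s) * r ^ (-(n:ℝ)) * ((1 - Real.log (r / R))⁻¹) ^ γ

noncomputable def hwT (n : ℕ) (s γ R r : ℝ) : ℝ :=
  if 0 < r ∧ r ≤ R then hw n s γ R r else 0

lemma X_pos {R r : ℝ} (hr : 0 < r) (hrR : r ≤ R) : 1 ≤ 1 - Real.log (r / R) := by
  have : Real.log (r / R) ≤ 0 :=
    Real.log_nonpos (div_nonneg hr.le (hr.le.trans hrR)) ((div_le_one (hr.trans_le hrR)).2 hrR)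
  linarith

lemma hw_nonneg {n : ℕ} {s γ R r : ℝ} (hs : (n:ℝ) ≤ s) (hγ : 1 < γ) (hr : 0 < r) (hrR : r ≤ R) :
    0 ≤ hw n s γ R r := by
  have h1 := X_pos hr hrR
  have h2 : 0 ≤ (1 - Real.log (r / R))⁻¹ := by positivity
  have h3 : 0 ≤ s - n := by linarith
  have h4 : 0 ≤ γ - 1 := by linarith
  have h5 : 0 < R := by linarith
  unfold hw
  positivity

lemma hwT_nonneg {n : ℕ} {s γ R : ℝ} (hs : (n:ℝ) ≤ s) (hγ : 1 < γ) (r : ℝ) :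
    0 ≤ hwT n s γ R r := by
  unfold hwT
  split_ifs with h
  · exact hw_nonneg hs hγ h.1 h.2
  · exact le_rfl

lemma hw_meas (n : ℕ) (s γ R : ℝ) : Measurable (hw n s γ R) := by
  unfold hw
  fun_prop

lemma hwT_meas (n : ℕ) (s γ R : ℝ) : Measurable (hwT n s γ R) := by
  unfold hwT
  refine Measurable.ite ?_ (hw_meas n s γ R) measurable_const
  exact measurableSet_Ioc

lemma G_deriv {n : ℕ} {s γ R r : ℝ} (hr : 0 < r) (hrR : r ≤ R) :
    HasDerivAt (fun r : ℝ => r ^ ((n:ℝ) - s) - R ^ ((n:ℝ) - s) * (1 - Real.log (r / R)) ^ (1 - γ))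
      (-(r ^ ((n:ℝ) - 1) * hw n s γ R r)) r := by
  have hR : 0 < R := hr.trans_le hrR
  have h1 := X_pos hr hrR
  have a := Real.hasDerivAt_rpow_const (x := r) (p := (n:ℝ) - s) (Or.inl hr.ne')
  have b : HasDerivAt (fun r : ℝ => 1 - Real.log (r / R)) (-(1/r)) r := by
    have := ((((hasDerivAt_id r).div_const R)).log (by simp; exact ⟨hr.ne', hR.ne'⟩)).const_sub 1
    refine this.congr_deriv ?_
    simp; field_simp
  have c := (b.rpow_const (p := 1 - γ) (Or.inl (by positivity))).const_mul (R ^ ((n:ℝ) - s))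
  refine (a.sub c).congr_deriv ?_
  symm
  unfold hw
  rw [Real.inv_rpow (by linarith), ← Real.rpow_neg (by linarith),
    show (1 - γ - 1) = -γ by ring, mul_add]
  have e1 : r ^ ((n:ℝ) - 1) * r ^ (-s) = r ^ ((n:ℝ) - s - 1) := by
    rw [← Real.rpow_add hr]; congr 1; ring
  have e2 : r ^ ((n:ℝ) - 1) * r ^ (-(n:ℝ)) = 1 / r := by
    rw [← Real.rpow_add hr, one_div, ← Real.rpow_neg_one]; congr 1; ring
  calc _ = -((s - n) * (r ^ ((n:ℝ) - 1) * r ^ (-s)) + (γ - 1) * R ^ ((n:ℝ) - s) *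
      (r ^ ((n:ℝ) - 1) * r ^ (-(n:ℝ))) * (1 - Real.log (r / R)) ^ (-γ)) := by ring
    _ = _ := by rw [e1, e2]; ring

lemma hw_cont {n : ℕ} {s γ R : ℝ} : ContinuousOn (hw n s γ R) (Ioc 0 R) := by
  intro r hr
  have hR : 0 < R := hr.1.trans_le hr.2
  have h1 := X_pos hr.1 hr.2
  have h0 := hr.1.ne'
  have h2 : r / R ≠ 0 := by have := hr.1; positivity
  have h3 : 1 - Real.log (r / R) ≠ 0 := by linarith
  apply ContinuousAt.continuousWithinAt
  unfold hw
  fun_prop (disch := first | assumption | (left; assumption) | (left; exact inv_ne_zero h3))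

lemma inner_1d {n : ℕ} {s γ R : ℝ} (hs : (n:ℝ) ≤ s) (hγ : 1 < γ) {ρ : ℝ} (hρ : 0 ≤ ρ) :
    ∫⁻ c in Ioo (0:ℝ) 1, ENNReal.ofReal ((c ^ n)⁻¹ * (ρ / c * hwT n s γ R (ρ / c)))
      ≤ ENNReal.ofReal (ρ ^ (1 - s)) := by
  rcases hρ.eq_or_lt with rfl | hρ
  · simp
  rcases lt_or_ge R ρ with hR | hR
  · refine le_trans (le_of_eq ?_) (zero_le (a := ENNReal.ofReal (ρ ^ (1 - s))))
    rw [lintegral_eq_zero_iff' ]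
    · filter_upwards [ae_restrict_mem measurableSet_Ioo] with c hc
      have : ρ < ρ / c := by
        rw [lt_div_iff₀ hc.1]; nlinarith [hc.2]
      have : hwT n s γ R (ρ / c) = 0 := by
        unfold hwT; rw [if_neg]; rintro ⟨_, h⟩; linarith
      simp [this]
    · have := hwT_meas n s γ R
      fun_prop
  have hR0 : 0 < R := hρ.trans_le hR
  set a := ρ / R with ha
  have ha0 : 0 < a := by positivity
  have ha1 : a ≤ 1 := (div_le_one hR0).2 hR
  set g : ℝ → ℝ := fun c => (c ^ n)⁻¹ * (ρ / c * hw n s γ R (ρ / c)) with hg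
  have hmem : ∀ c ∈ Icc a 1, ρ / c ∈ Ioc 0 R := by
    intro c hc
    have hc0 : 0 < c := ha0.trans_le hc.1
    refine ⟨by positivity, ?_⟩
    rw [div_le_iff₀ hc0]
    have := hc.1
    rw [ha, div_le_iff₀ hR0] at this
    linarith
  have hgc : ContinuousOn g (Icc a 1) := by
    have h0 : ∀ c ∈ Icc a 1, c ≠ 0 := fun c hc => (ha0.trans_le hc.1).ne'
    have h1 : ContinuousOn (fun c => hw n s γ R (ρ / c)) (Icc a 1) :=
      hw_cont.comp (continuousOn_const.div continuousOn_id h0) hmem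
    exact ((continuousOn_id.pow n).inv₀ (fun c hc => pow_ne_zero _ (h0 c hc))).mul
      ((continuousOn_const.div continuousOn_id h0).mul h1)
  have hgn : ∀ c ∈ Icc a 1, 0 ≤ g c := by
    intro c hc
    have hc0 : 0 < c := ha0.trans_le hc.1
    have := hw_nonneg hs hγ (hmem c hc).1 (hmem c hc).2
    positivity
  let G : ℝ → ℝ := fun r => r ^ ((n:ℝ) - s) - R ^ ((n:ℝ) - s) * (1 - Real.log (r / R)) ^ (1 - γ)
  have hder : ∀ c ∈ Icc a 1, HasDerivAt (fun c => ρ ^ (1 - (n:ℝ)) * G (ρ / c)) (g c) c := by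
    intro c hc
    have hc0 : 0 < c := ha0.trans_le hc.1
    have h1 := G_deriv (n := n) (s := s) (γ := γ) (hmem c hc).1 (hmem c hc).2
    have h2 : HasDerivAt (fun c : ℝ => ρ / c) (-(ρ / c ^ 2)) c := by
      have := (hasDerivAt_inv hc0.ne').const_mul ρ
      refine this.congr_deriv ?_
      ring
    have h3 := (HasDerivAt.comp c h1 h2).const_mul (ρ ^ (1 - (n:ℝ)))
    refine h3.congr_deriv ?_
    symm
    rw [hg]
    simp only
    have e : ρ ^ (1 - (n:ℝ)) * (ρ / c) ^ ((n:ℝ) - 1) = c / c ^ n := by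
      rw [Real.div_rpow hρ.le hc0.le, Real.rpow_sub hc0, Real.rpow_sub hρ, Real.rpow_sub hρ]
      simp only [Real.rpow_one, Real.rpow_natCast]
      field_simp
    calc _ = (c / c ^ n) * hw n s γ R (ρ / c) * (ρ / c ^ 2) := by field_simp
      _ = _ := by rw [← e]; ring
  have hint : ∫ c in a..1, g c = ρ ^ (1 - (n:ℝ)) * G (ρ / 1) - ρ ^ (1 - (n:ℝ)) * G (ρ / a) := by
    apply intervalIntegral.integral_eq_sub_of_hasDerivAt (f := fun c => ρ ^ (1 - (n:ℝ)) * G (ρ / c))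
    · rw [uIcc_of_le ha1]; exact hder
    · apply ContinuousOn.intervalIntegrable; rwa [uIcc_of_le ha1]
  have hGR : G (ρ / a) = 0 := by
    have : ρ / a = R := by rw [ha]; field_simp
    rw [this]; simp [G, div_self hR0.ne']
  have hle : ∫ c in a..1, g c ≤ ρ ^ (1 - s) := by
    rw [hint, hGR, div_one, mul_zero, sub_zero]
    have : G ρ ≤ ρ ^ ((n:ℝ) - s) := by
      have := X_pos hρ hR
      have : 0 ≤ R ^ ((n:ℝ) - s) * (1 - Real.log (ρ / R)) ^ (1 - γ) := by positivity
      simp only [G]; linarith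
    calc _ ≤ ρ ^ (1 - (n:ℝ)) * ρ ^ ((n:ℝ) - s) := by gcongr
      _ = _ := by rw [← Real.rpow_add hρ]; congr 1; ring
  calc _ ≤ ∫⁻ c in Icc a 1, ENNReal.ofReal (g c) := by
        rw [← lintegral_indicator measurableSet_Ioo, ← lintegral_indicator measurableSet_Icc]
        apply lintegral_mono
        intro c
        by_cases hc : c ∈ Ioo (0:ℝ) 1
        · rw [indicator_of_mem hc]
          by_cases hc' : c ∈ Icc a 1
          · rw [indicator_of_mem hc']
            simp only [hwT, hg]
            have h : 0 < ρ / c ∧ ρ / c ≤ R := hmem c hc'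
            rw [if_pos h]
          · have : hwT n s γ R (ρ / c) = 0 := by
              unfold hwT; rw [if_neg]; rintro ⟨_, h⟩
              apply hc'
              refine ⟨?_, hc.2.le⟩
              rw [div_le_iff₀ hc.1] at h
              rw [ha, div_le_iff₀ hR0]; linarith
            simp [this]
        · rw [indicator_of_notMem hc]; exact zero_le
    _ = ENNReal.ofReal (∫ c in Icc a 1, g c) := by
        rw [ofReal_integral_eq_lintegral_ofReal]
        · exact hgc.integrableOn_Icc
        · filter_upwards [ae_restrict_mem measurableSet_Icc] with c hc using hgn c hc
    _ ≤ _ := by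
        apply ENNReal.ofReal_le_ofReal
        rw [integral_Icc_eq_integral_Ioc, ← intervalIntegral.integral_of_le ha1]
        exact hle

lemma lint_homothety {n : ℕ} (y : EuclideanSpace ℝ (Fin n)) {c : ℝ} (hc : 0 < c)
    (Ψ : EuclideanSpace ℝ (Fin n) → ENNReal) (hΨ : Measurable Ψ) :
    ∫⁻ x, Ψ (y + c • (x - y)) = ENNReal.ofReal ((c ^ n)⁻¹) * ∫⁻ z, Ψ z := by
  rw [lintegral_sub_right_eq_self (fun x => Ψ (y + c • x)) y]
  have h := Measure.map_addHaar_smul (volume : Measure (EuclideanSpace ℝ (Fin n))) hc.ne'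
  have h2 : ∫⁻ x, Ψ (y + c • x) = ∫⁻ x, Ψ (y + x) ∂(Measure.map (c • ·) volume) := by
    rw [lintegral_map]
    · fun_prop
    · fun_prop
  rw [h2, h, lintegral_smul_measure, lintegral_add_left_eq_self]
  simp [abs_of_pos hc]

lemma star_ineq {n : ℕ} {s γ R : ℝ} (hs : (n:ℝ) ≤ s) (hγ : 1 < γ)
    (V : Set (EuclideanSpace ℝ (Fin n))) (hV : MeasurableSet V) (y : EuclideanSpace ℝ (Fin n))
    (hstar : ∀ x ∈ V, ∀ c : ℝ, 0 < c → c < 1 → y + c • (x - y) ∈ V)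
    (u : EuclideanSpace ℝ (Fin n) → ℝ) (hu : ContDiff ℝ 1 u) (huy : u y = 0)
    (hR : ∀ x ∈ V, u x ≠ 0 → dist x y ≤ R) :
    ∫⁻ x in V, ENNReal.ofReal (|u x| * hw n s γ R (dist x y)) ≤
      ∫⁻ x in V, ENNReal.ofReal (‖fderiv ℝ u x‖ * dist x y ^ (1 - s)) := by
  have hcd : Continuous (fderiv ℝ u) := hu.continuous_fderiv (by simp)
  have hm := hwT_meas n s γ R
  have step_a : ∀ x ∈ V, ENNReal.ofReal (|u x| * hw n s γ R (dist x y)) ≤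
      ∫⁻ c in Ioo (0:ℝ) 1, ENNReal.ofReal (‖fderiv ℝ u (y + c • (x - y))‖ *
        (dist x y * hwT n s γ R (dist x y))) := by
    intro x hx
    by_cases hux : u x = 0
    · simp [hux]
    have hxy : 0 < dist x y := dist_pos.2 (by rintro rfl; exact hux huy)
    have hw_eq : hwT n s γ R (dist x y) = hw n s γ R (dist x y) := by
      unfold hwT; rw [if_pos ⟨hxy, hR x hx hux⟩]
    have hw0 := hwT_nonneg (R := R) hs hγ (dist x y)
    have hder : ∀ c : ℝ, HasDerivAt (fun c : ℝ => u (y + c • (x - y)))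
        (fderiv ℝ u (y + c • (x - y)) (x - y)) c := by
      intro c
      have h1 : HasDerivAt (fun c : ℝ => y + c • (x - y)) (x - y) c := by
        have := ((hasDerivAt_id c).smul_const (x - y)).const_add y
        simpa using this
      exact (hu.differentiable (by simp) _).hasFDerivAt.comp_hasDerivAt c h1
    have hcont : Continuous (fun c : ℝ => fderiv ℝ u (y + c • (x - y)) (x - y)) := by fun_prop
    have hftc : ∫ c in (0:ℝ)..1, fderiv ℝ u (y + c • (x - y)) (x - y) = u x := by
      rw [intervalIntegral.integral_eq_sub_of_hasDerivAt (fun c _ => hder c)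
        (hcont.intervalIntegrable _ _)]
      simp [huy]
    have hc2 : Continuous (fun c : ℝ => ‖fderiv ℝ u (y + c • (x - y))‖ * dist x y) := by fun_prop
    have hbd : |u x| ≤ ∫ c in (0:ℝ)..1, ‖fderiv ℝ u (y + c • (x - y))‖ * dist x y := by
      rw [← hftc, ← Real.norm_eq_abs]
      refine intervalIntegral.norm_integral_le_of_norm_le zero_le_one ?_
        (hc2.intervalIntegrable _ _)
      filter_upwards with c _
      rw [dist_eq_norm]
      exact ContinuousLinearMap.le_opNorm _ _
    rw [← hw_eq]
    calc _ ≤ ENNReal.ofReal (∫ c in (0:ℝ)..1, ‖fderiv ℝ u (y + c • (x - y))‖ *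
            (dist x y * hwT n s γ R (dist x y))) := by
          apply ENNReal.ofReal_le_ofReal
          simp_rw [← mul_assoc]
          rw [intervalIntegral.integral_mul_const]
          gcongr
      _ = _ := by
          rw [intervalIntegral.integral_of_le zero_le_one, integral_Ioc_eq_integral_Ioo,
            ofReal_integral_eq_lintegral_ofReal]
          · have : Continuous (fun c : ℝ => ‖fderiv ℝ u (y + c • (x - y))‖ *
              (dist x y * hwT n s γ R (dist x y))) := by fun_prop
            exact (this.integrableOn_Icc (a := 0) (b := 1)).mono_set Ioo_subset_Icc_self
          · filter_upwards with c
            simp only [Pi.zero_apply]; positivity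
  have step_c : ∀ c ∈ Ioo (0:ℝ) 1,
      ∫⁻ x in V, ENNReal.ofReal (‖fderiv ℝ u (y + c • (x - y))‖ *
        (dist x y * hwT n s γ R (dist x y))) ≤
      ∫⁻ z in V, ENNReal.ofReal (‖fderiv ℝ u z‖ * ((c ^ n)⁻¹ *
        (dist z y / c * hwT n s γ R (dist z y / c)))) := by
    intro c hc
    let Ψ : EuclideanSpace ℝ (Fin n) → ENNReal := V.indicator fun z =>
      ENNReal.ofReal (‖fderiv ℝ u z‖ * (dist z y / c * hwT n s γ R (dist z y / c)))
    have hΨ : Measurable Ψ := by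
      refine Measurable.indicator ?_ hV
      fun_prop
    have hcn : 0 ≤ (c ^ n)⁻¹ := by have := hc.1; positivity
    calc _ ≤ ∫⁻ x, Ψ (y + c • (x - y)) := by
          rw [← lintegral_indicator hV]
          apply lintegral_mono
          intro x
          by_cases hx : x ∈ V
          · rw [indicator_of_mem hx]
            simp only [Ψ]
            rw [indicator_of_mem (hstar x hx c hc.1 hc.2)]
            have : dist (y + c • (x - y)) y / c = dist x y := by
              rw [dist_eq_norm, add_sub_cancel_left, norm_smul, Real.norm_of_nonneg hc.1.le,
                dist_eq_norm, mul_div_cancel_left₀ _ hc.1.ne']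
            rw [this]
          · rw [indicator_of_notMem hx]; exact zero_le
      _ = ENNReal.ofReal ((c ^ n)⁻¹) * ∫⁻ z, Ψ z := lint_homothety y hc.1 Ψ hΨ
      _ = _ := by
          simp only [Ψ]
          rw [lintegral_indicator hV, ← lintegral_const_mul]
          · refine lintegral_congr fun z => ?_
            rw [← ENNReal.ofReal_mul hcn]
            congr 1; ring
          · fun_prop
  calc _ ≤ ∫⁻ x in V, ∫⁻ c in Ioo (0:ℝ) 1, ENNReal.ofReal (‖fderiv ℝ u (y + c • (x - y))‖ *
        (dist x y * hwT n s γ R (dist x y))) := setLIntegral_mono' hV step_a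
    _ = ∫⁻ c in Ioo (0:ℝ) 1, ∫⁻ x in V, ENNReal.ofReal (‖fderiv ℝ u (y + c • (x - y))‖ *
        (dist x y * hwT n s γ R (dist x y))) := by
        apply lintegral_lintegral_swap
        apply Measurable.aemeasurable
        unfold Function.uncurry
        fun_prop
    _ ≤ ∫⁻ c in Ioo (0:ℝ) 1, ∫⁻ z in V, ENNReal.ofReal (‖fderiv ℝ u z‖ * ((c ^ n)⁻¹ *
        (dist z y / c * hwT n s γ R (dist z y / c)))) :=
        setLIntegral_mono' measurableSet_Ioo step_c
    _ = ∫⁻ z in V, ∫⁻ c in Ioo (0:ℝ) 1, ENNReal.ofReal (‖fderiv ℝ u z‖ * ((c ^ n)⁻¹ *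
        (dist z y / c * hwT n s γ R (dist z y / c)))) := by
        apply lintegral_lintegral_swap
        apply Measurable.aemeasurable
        unfold Function.uncurry
        fun_prop
    _ ≤ _ := by
        apply lintegral_mono
        intro z
        simp only
        simp_rw [ENNReal.ofReal_mul (norm_nonneg (fderiv ℝ u z))]
        rw [lintegral_const_mul]
        · gcongr
          exact inner_1d hs hγ dist_nonneg
        · fun_prop

lemma finite_ineq {n : ℕ} {s γ R : ℝ} (hs : (n:ℝ) ≤ s) (hγ : 1 < γ) {m : ℕ} (hm : 0 < m)
    (y : Fin m → EuclideanSpace ℝ (Fin n))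
    (u : EuclideanSpace ℝ (Fin n) → ℝ) (hu : ContDiff ℝ 1 u) (huy : ∀ i, u (y i) = 0)
    (hR : ∀ x, u x ≠ 0 → infDist x (range y) ≤ R) :
    ∫⁻ x, ENNReal.ofReal (|u x| * hw n s γ R (infDist x (range y))) ≤
      ∫⁻ x, ENNReal.ofReal (‖fderiv ℝ u x‖ * infDist x (range y) ^ (1 - s)) := by
  have : Nonempty (Fin m) := ⟨⟨0, hm⟩⟩
  let V : Fin m → Set (EuclideanSpace ℝ (Fin n)) := fun i =>
    {x | (∀ j, dist x (y i) ≤ dist x (y j)) ∧ ∀ j < i, dist x (y i) < dist x (y j)}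
  have hVm : ∀ i, MeasurableSet (V i) := by
    intro i
    have : V i = (⋂ j, {x | dist x (y i) ≤ dist x (y j)}) ∩
        ⋂ j, ⋂ (_ : j < i), {x | dist x (y i) < dist x (y j)} := by
      ext x; simp [V]
    rw [this]
    refine (MeasurableSet.iInter fun j => ?_).inter
      (MeasurableSet.iInter fun j => MeasurableSet.iInter fun _ => ?_)
    · exact measurableSet_le (by fun_prop) (by fun_prop)
    · exact measurableSet_lt (by fun_prop) (by fun_prop)
  have hdisj : Pairwise (Function.onFun Disjoint V) := by
    intro i j hij
    rw [Function.onFun, Set.disjoint_left]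
    intro x hi hj
    rcases lt_or_gt_of_ne hij with h | h
    · exact absurd (hj.2 i h) (not_lt.2 (hi.1 j))
    · exact absurd (hi.2 j h) (not_lt.2 (hj.1 i))
  have hcov : ⋃ i, V i = univ := by
    rw [eq_univ_iff_forall]
    intro x
    rw [mem_iUnion]
    obtain ⟨i0, h0⟩ := Finite.exists_min (fun i => dist x (y i))
    obtain ⟨i, hi, hmin⟩ := WellFounded.has_min (wellFounded_lt (α := Fin m))
      {i | ∀ j, dist x (y i) ≤ dist x (y j)} ⟨i0, h0⟩
    refine ⟨i, hi, fun j hj => ?_⟩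
    by_contra hcon
    exact hmin j (fun k => (not_lt.1 hcon).trans (hi k)) hj
  have hd : ∀ i, ∀ x ∈ V i, infDist x (range y) = dist x (y i) := by
    intro i x hx
    apply le_antisymm (infDist_le_dist_of_mem (mem_range_self i))
    rw [le_infDist (range_nonempty y)]
    rintro _ ⟨j, rfl⟩
    exact hx.1 j
  rw [← setLIntegral_univ, ← setLIntegral_univ (fun x => ENNReal.ofReal (‖fderiv ℝ u x‖ * _)),
    ← hcov, lintegral_iUnion hVm hdisj, lintegral_iUnion hVm hdisj]
  refine ENNReal.tsum_le_tsum fun i => ?_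
  have e1 : ∫⁻ x in V i, ENNReal.ofReal (|u x| * hw n s γ R (infDist x (range y))) =
      ∫⁻ x in V i, ENNReal.ofReal (|u x| * hw n s γ R (dist x (y i))) :=
    setLIntegral_congr_fun (hVm i) fun x hx => by simp only [hd i x hx]
  have e2 : ∫⁻ x in V i, ENNReal.ofReal (‖fderiv ℝ u x‖ * infDist x (range y) ^ (1 - s)) =
      ∫⁻ x in V i, ENNReal.ofReal (‖fderiv ℝ u x‖ * dist x (y i) ^ (1 - s)) :=
    setLIntegral_congr_fun (hVm i) fun x hx => by simp only [hd i x hx]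
  rw [e1, e2]
  refine star_ineq hs hγ (V i) (hVm i) (y i) ?_ u hu (huy i) ?_
  · intro x hx c hc0 hc1
    have key : ∀ j, dist (y i + c • (x - y i)) (y i) ≤ dist x (y i) - dist x (y j) +
        dist (y i + c • (x - y i)) (y j) := by
      intro j
      have h1 : dist (y i + c • (x - y i)) (y i) = c * dist x (y i) := by
        rw [dist_eq_norm, add_sub_cancel_left, norm_smul, Real.norm_of_nonneg hc0.le, dist_eq_norm]
      have h2 : dist x (y i + c • (x - y i)) = (1 - c) * dist x (y i) := by
        rw [dist_eq_norm, dist_eq_norm, ← Real.norm_of_nonneg (by linarith : 0 ≤ 1 - c),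
          ← norm_smul]
        congr 1
        module
      have h3 := dist_triangle x (y i + c • (x - y i)) (y j)
      rw [h1]; rw [h2] at h3; linarith
    refine ⟨fun j => ?_, fun j hj => ?_⟩
    · have := key j; have := hx.1 j; linarith
    · have := key j; have := hx.2 j hj; linarith
  · intro x hx hux
    rw [← hd i x hx]; exact hR x hux

lemma finite_approx {n : ℕ} (C K : Set (EuclideanSpace ℝ (Fin n))) (hC : IsClosed C)
    (hCne : C.Nonempty) (hK : IsCompact K) {ε : ℝ} (hε : 0 < ε) :
    ∃ m : ℕ, 0 < m ∧ ∃ y : Fin m → EuclideanSpace ℝ (Fin n), (∀ i, y i ∈ C) ∧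
      ∀ x ∈ K, infDist x (range y) ≤ infDist x C + ε := by
  obtain ⟨y0, hy0⟩ := hCne
  choose p hpC hp using fun x => hC.exists_infDist_eq_dist ⟨y0, hy0⟩ x
  obtain ⟨t, -, ht⟩ := hK.elim_nhds_subcover (fun x => ball x (ε/2))
    (fun x _ => ball_mem_nhds x (by positivity))
  classical
  let F : Finset (EuclideanSpace ℝ (Fin n)) := insert y0 (t.image p)
  refine ⟨F.card, Finset.card_pos.2 ⟨y0, by simp [F]⟩, fun i => (F.equivFin.symm i : _), ?_, ?_⟩
  · intro i
    have := (F.equivFin.symm i).2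
    simp only [F, Finset.mem_insert, Finset.mem_image] at this
    rcases this with h | ⟨a, -, h⟩
    · simp only [F] at h ⊢; rw [h]; exact hy0
    · simp only [F] at h ⊢; rw [← h]; exact hpC a
  · intro x hx
    obtain ⟨a, hat, hxa⟩ := mem_iUnion₂.1 (ht hx)
    have hmem : p a ∈ range (fun i => (F.equivFin.symm i : EuclideanSpace ℝ (Fin n))) := by
      have hF : p a ∈ F := by simp only [F]; exact Finset.mem_insert_of_mem (Finset.mem_image_of_mem p hat)
      exact ⟨F.equivFin ⟨p a, hF⟩, by simp⟩
    have h1 := infDist_le_dist_of_mem (x := x) hmem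
    have h2 := dist_triangle x a (p a)
    have h3 := infDist_le_infDist_add_dist (s := C) (x := a) (y := x)
    rw [mem_ball] at hxa
    rw [dist_comm a x] at h3
    have h4 := hp a
    linarith

lemma hw_tendsto {n : ℕ} {s γ R r : ℝ} (hr : 0 < r) (hrR : r ≤ R) {rk Rk : ℕ → ℝ}
    (h1 : Filter.Tendsto rk Filter.atTop (nhds r)) (h2 : Filter.Tendsto Rk Filter.atTop (nhds R)) :
    Filter.Tendsto (fun k => hw n s γ (Rk k) (rk k)) Filter.atTop (nhds (hw n s γ R r)) := by
  have hR : 0 < R := hr.trans_le hrR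
  have h3 := X_pos hr hrR
  have h0 := hr.ne'
  unfold hw
  have hlog : Filter.Tendsto (fun k => 1 - Real.log (rk k / Rk k)) Filter.atTop
      (nhds (1 - Real.log (r / R))) :=
    ((h1.div h2 hR.ne').log (by positivity)).const_sub 1
  have hX := (hlog.inv₀ (by positivity)).rpow_const (p := γ) (Or.inl (by positivity))
  exact ((h1.rpow_const (Or.inl h0)).const_mul _).add
    ((((h2.rpow_const (Or.inl hR.ne')).const_mul _).mul (h1.rpow_const (Or.inl h0))).mul hX)

lemma lint_ineq {n : ℕ} (hn : 1 ≤ n)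
    (Ω : Set (EuclideanSpace ℝ (Fin n))) (hΩo : IsOpen Ω)
    (hΩuniv : Ω ≠ Set.univ)
    (R : ℝ) (hR : IsLUB ((fun x => Metric.infDist x Ωᶜ) '' Ω) R)
    {s γ : ℝ} (hs : (n:ℝ) ≤ s) (hγ : 1 < γ)
    (u : EuclideanSpace ℝ (Fin n) → ℝ) (hu : ContDiff ℝ 1 u)
    (hc : HasCompactSupport u) (hsupp : tsupport u ⊆ Ω) :
    ∫⁻ x, ENNReal.ofReal (|u x| * hw n s γ R (infDist x Ωᶜ)) ≤
      ∫⁻ x, ENNReal.ofReal (‖fderiv ℝ u x‖ * infDist x Ωᶜ ^ (1 - s)) := by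
  have hCne : (Ωᶜ).Nonempty := by rwa [nonempty_compl]
  have hCc : IsClosed Ωᶜ := hΩo.isClosed_compl
  have hpos : ∀ x ∈ Ω, 0 < infDist x Ωᶜ := fun x hx =>
    (hCc.notMem_iff_infDist_pos hCne).1 (by simpa using hx)
  have hle : ∀ x ∈ Ω, infDist x Ωᶜ ≤ R := fun x hx => hR.1 ⟨x, hx, rfl⟩
  have hs1 : 1 - s ≤ 0 := by
    have : (1:ℝ) ≤ n := by exact_mod_cast hn
    linarith
  choose m hm y hyC hy using fun k : ℕ => finite_approx Ωᶜ (tsupport u) hCc hCne hc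
    (ε := 1 / ((k:ℝ) + 1)) (by positivity)
  have hge : ∀ k x, infDist x Ωᶜ ≤ infDist x (range (y k)) := fun k x => by
    apply infDist_le_infDist_of_subset
    · rintro _ ⟨i, rfl⟩; exact hyC k i
    · have : Nonempty (Fin (m k)) := ⟨⟨0, hm k⟩⟩
      exact range_nonempty _
  have hmemΩ : ∀ x, u x ≠ 0 → x ∈ Ω := fun x hx => hsupp (subset_tsupport u hx)
  have hk : ∀ k : ℕ, ∫⁻ x, ENNReal.ofReal (|u x| *
      hw n s γ (R + 1 / ((k:ℝ) + 1)) (infDist x (range (y k)))) ≤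
      ∫⁻ x, ENNReal.ofReal (‖fderiv ℝ u x‖ * infDist x Ωᶜ ^ (1 - s)) := by
    intro k
    refine (finite_ineq hs hγ (hm k) (y k) u hu ?_ ?_).trans ?_
    · intro i
      by_contra hcon
      exact hyC k i (hmemΩ _ hcon)
    · intro x hx
      have := hy k x (subset_tsupport u hx)
      have := hle x (hmemΩ x hx)
      linarith
    · apply lintegral_mono
      intro x
      apply ENNReal.ofReal_le_ofReal
      by_cases hx : x ∈ tsupport u
      · exact mul_le_mul_of_nonneg_left
          (Real.rpow_le_rpow_of_nonpos (hpos x (hsupp hx)) (hge k x) hs1) (norm_nonneg _)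
      · have : fderiv ℝ u x = 0 := by
          by_contra hcon
          exact hx (support_fderiv_subset ℝ hcon)
        simp [this]
  have h1k : Filter.Tendsto (fun k : ℕ => 1 / ((k:ℝ) + 1)) Filter.atTop (nhds 0) :=
    tendsto_one_div_add_atTop_nhds_zero_nat
  calc _ ≤ ∫⁻ x, Filter.liminf (fun k : ℕ => ENNReal.ofReal (|u x| *
      hw n s γ (R + 1 / ((k:ℝ) + 1)) (infDist x (range (y k))))) Filter.atTop := by
        apply lintegral_mono
        intro x
        by_cases hx : u x = 0
        · simp [hx]
        · apply le_of_eq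
          symm
          apply Filter.Tendsto.liminf_eq
          apply ENNReal.tendsto_ofReal
          apply Filter.Tendsto.const_mul
          have hxΩ := hmemΩ x hx
          apply hw_tendsto (hpos x hxΩ) (hle x hxΩ)
          · refine tendsto_of_tendsto_of_tendsto_of_le_of_le tendsto_const_nhds
              (h := fun k : ℕ => infDist x Ωᶜ + 1 / ((k:ℝ) + 1)) ?_ (fun k => hge k x)
              (fun k => hy k x (subset_tsupport u hx))
            simpa using h1k.const_add (infDist x Ωᶜ)
          · simpa using h1k.const_add R
    _ ≤ Filter.liminf (fun k : ℕ => ∫⁻ x, ENNReal.ofReal (|u x| *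
      hw n s γ (R + 1 / ((k:ℝ) + 1)) (infDist x (range (y k))))) Filter.atTop := by
        apply lintegral_liminf_le
        intro k
        have h1 := hw_meas n s γ (R + 1 / ((k:ℝ) + 1))
        have h2 : Measurable fun x => infDist x (range (y k)) := measurable_infDist
        have h3 := hu.continuous.measurable
        have h4 := h1.comp h2
        exact ((_root_.measurable_norm.comp h3).mul h4).ennreal_ofReal
    _ ≤ _ := Filter.liminf_le_of_le (by isBoundedDefault) (fun b hb => by
        obtain ⟨k, hkb⟩ := hb.exists
        exact hkb.trans (hk k))

/-- `L^1` weighted Hardy inequality with logarithmic remainder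
on a general open set of finite inner radius. -/
theorem l1_weighted_hardy_log_remainder (n : ℕ) (hn : 1 ≤ n)
    (Ω : Set (EuclideanSpace ℝ (Fin n))) (hΩo : IsOpen Ω) (hΩne : Ω.Nonempty)
    (hΩuniv : Ω ≠ Set.univ)
    (R : ℝ) (hR : IsLUB ((fun x => Metric.infDist x Ωᶜ) '' Ω) R) :
    ∀ s : ℝ, (n : ℝ) ≤ s → ∀ γ : ℝ, 1 < γ →
    ∀ u : EuclideanSpace ℝ (Fin n) → ℝ, ContDiff ℝ (⊤ : ℕ∞) u →
      HasCompactSupport u → tsupport u ⊆ Ω →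
      (∫ x in Ω, ‖fderiv ℝ u x‖ / (Metric.infDist x Ωᶜ) ^ (s - 1)) ≥
        (s - n) * (∫ x in Ω, |u x| / (Metric.infDist x Ωᶜ) ^ s)
        + ((γ - 1) / R ^ (s - n)) *
            ∫ x in Ω, (|u x| / (Metric.infDist x Ωᶜ) ^ (n : ℝ)) *
              ((1 - Real.log (Metric.infDist x Ωᶜ / R))⁻¹) ^ γ := by
  intro s hs γ hγ u hu' hc hsupp
  have hu : ContDiff ℝ 1 u := hu'.of_le (by exact_mod_cast le_top)
  have hcd : Continuous (fderiv ℝ u) := hu.continuous_fderiv (by simp)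
  have hCne : (Ωᶜ).Nonempty := by rwa [nonempty_compl]
  have hCc : IsClosed Ωᶜ := hΩo.isClosed_compl
  have hpos : ∀ x ∈ Ω, 0 < infDist x Ωᶜ := fun x hx =>
    (hCc.notMem_iff_infDist_pos hCne).1 (by simpa using hx)
  have hle : ∀ x ∈ Ω, infDist x Ωᶜ ≤ R := fun x hx => hR.1 ⟨x, hx, rfl⟩
  obtain ⟨x0, hx0⟩ := hΩne
  have hR0 : 0 < R := (hpos x0 hx0).trans_le (hle x0 hx0)
  have hΩm := hΩo.measurableSet
  have hKm : MeasurableSet (tsupport u) := (isClosed_tsupport u).measurableSet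
  have hu0 : ∀ x, x ∉ tsupport u → u x = 0 := fun x hx => image_eq_zero_of_notMem_tsupport hx
  have hf0 : ∀ x, x ∉ tsupport u → fderiv ℝ u x = 0 := fun x hx => by
    by_contra hcon
    exact hx (support_fderiv_subset ℝ hcon)
  have hint : ∀ f : EuclideanSpace ℝ (Fin n) → ℝ, ContinuousOn f (tsupport u) →
      (∀ x, x ∉ tsupport u → f x = 0) → IntegrableOn f Ω := by
    intro f hf hf0
    exact (hf.integrableOn_compact hc).of_forall_sdiff_eq_zero hΩm (fun x hx => hf0 x hx.2)
  have hdc : ContinuousOn (fun x => infDist x Ωᶜ) (tsupport u) :=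
    (continuous_infDist_pt _).continuousOn
  have hd0 : ∀ x ∈ tsupport u, infDist x Ωᶜ ≠ 0 := fun x hx => (hpos x (hsupp hx)).ne'
  have hrp : ∀ p : ℝ, ContinuousOn (fun x => infDist x Ωᶜ ^ p) (tsupport u) := fun p =>
    hdc.rpow_const (fun x hx => Or.inl (hd0 x hx))
  have hrp0 : ∀ p : ℝ, ∀ x ∈ tsupport u, infDist x Ωᶜ ^ p ≠ 0 := fun p x hx =>
    (Real.rpow_pos_of_pos (hpos x (hsupp hx)) p).ne'
  have hX1 : ∀ x ∈ tsupport u, 1 ≤ 1 - Real.log (infDist x Ωᶜ / R) := fun x hx =>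
    X_pos (hpos x (hsupp hx)) (hle x (hsupp hx))
  have hXc : ContinuousOn (fun x => ((1 - Real.log (infDist x Ωᶜ / R))⁻¹) ^ γ) (tsupport u) := by
    apply ContinuousOn.rpow_const
    · apply ContinuousOn.inv₀
      · exact continuousOn_const.sub ((hdc.div_const R).log
          (fun x hx => div_ne_zero (hd0 x hx) hR0.ne'))
      · intro x hx; have := hX1 x hx; positivity
    · intro x hx; have := hX1 x hx; left; positivity
  have huc : ContinuousOn (fun x => |u x|) (tsupport u) := hu.continuous.abs.continuousOn
  have i1 : IntegrableOn (fun x => ‖fderiv ℝ u x‖ / (infDist x Ωᶜ) ^ (s - 1)) Ω :=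
    hint _ (hcd.norm.continuousOn.div (hrp _) (hrp0 _)) (fun x hx => by simp [hf0 x hx])
  have i2 : IntegrableOn (fun x => |u x| / (infDist x Ωᶜ) ^ s) Ω :=
    hint _ (huc.div (hrp _) (hrp0 _)) (fun x hx => by simp [hu0 x hx])
  have i3 : IntegrableOn (fun x => (|u x| / (infDist x Ωᶜ) ^ (n : ℝ)) *
              ((1 - Real.log (infDist x Ωᶜ / R))⁻¹) ^ γ) Ω :=
    hint _ ((huc.div (hrp _) (hrp0 _)).mul hXc) (fun x hx => by simp [hu0 x hx])
  have hL := lint_ineq hn Ω hΩo hΩuniv R hR hs hγ u hu hc hsupp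
  have i4 : Integrable (fun x => (s - n) * (|u x| / (infDist x Ωᶜ) ^ s) +
      ((γ - 1) / R ^ (s - n)) *
      ((|u x| / (infDist x Ωᶜ) ^ (n : ℝ)) * ((1 - Real.log (infDist x Ωᶜ / R))⁻¹) ^ γ))
      (volume.restrict Ω) :=
    (i2.const_mul (s - n)).add (i3.const_mul ((γ - 1) / R ^ (s - n)))
  have e4 : ∀ x ∈ Ω, (s - n) * (|u x| / (infDist x Ωᶜ) ^ s) + ((γ - 1) / R ^ (s - n)) *
      ((|u x| / (infDist x Ωᶜ) ^ (n : ℝ)) * ((1 - Real.log (infDist x Ωᶜ / R))⁻¹) ^ γ) =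
      |u x| * hw n s γ R (infDist x Ωᶜ) := by
    intro x hx
    have h := (hpos x hx).le
    unfold hw
    rw [Real.rpow_neg h, Real.rpow_neg h, show (n:ℝ) - s = -(s - n) by ring, Real.rpow_neg hR0.le]
    ring
  have e1 : ∀ x ∈ Ω, ‖fderiv ℝ u x‖ / (infDist x Ωᶜ) ^ (s - 1) =
      ‖fderiv ℝ u x‖ * (infDist x Ωᶜ) ^ (1 - s) := by
    intro x hx
    rw [show (1 - s) = -(s - 1) by ring, Real.rpow_neg (hpos x hx).le, div_eq_mul_inv]
  rw [ge_iff_le, ← integral_const_mul, ← integral_const_mul,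
    ← integral_add (i2.const_mul (s - n)) (i3.const_mul ((γ - 1) / R ^ (s - n)))]
  have hn1 : 0 ≤ᵐ[volume.restrict Ω] fun x => ‖fderiv ℝ u x‖ / (infDist x Ωᶜ) ^ (s - 1) := by
    filter_upwards [ae_restrict_mem hΩm] with x hx
    have := hpos x hx
    simp only [Pi.zero_apply]; positivity
  have hn4 : 0 ≤ᵐ[volume.restrict Ω] fun x => (s - n) * (|u x| / (infDist x Ωᶜ) ^ s) +
      ((γ - 1) / R ^ (s - n)) *
      ((|u x| / (infDist x Ωᶜ) ^ (n : ℝ)) * ((1 - Real.log (infDist x Ωᶜ / R))⁻¹) ^ γ) := by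
    filter_upwards [ae_restrict_mem hΩm] with x hx
    rw [e4 x hx]
    exact mul_nonneg (abs_nonneg _) (hw_nonneg hs hγ (hpos x hx) (hle x hx))
  rw [← ENNReal.ofReal_le_ofReal_iff (integral_nonneg_of_ae hn1),
    ofReal_integral_eq_lintegral_ofReal i4 hn4, ofReal_integral_eq_lintegral_ofReal i1 hn1]
  calc _ = ∫⁻ x in Ω, ENNReal.ofReal (|u x| * hw n s γ R (infDist x Ωᶜ)) :=
        setLIntegral_congr_fun hΩm (fun x hx => by simp only [← e4 x hx])
    _ ≤ _ := setLIntegral_le_lintegral _ _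
    _ ≤ _ := hL
    _ = ∫⁻ x in Ω, ENNReal.ofReal (‖fderiv ℝ u x‖ * infDist x Ωᶜ ^ (1 - s)) := by
        rw [← lintegral_indicator hΩm]
        refine lintegral_congr fun x => ?_
        by_cases hx : x ∈ Ω
        · rw [indicator_of_mem hx]
        · rw [indicator_of_notMem hx, hf0 x (fun h => hx (hsupp h))]; simp
    _ = _ := setLIntegral_congr_fun hΩm (fun x hx => by simp only [← e1 x hx])
end

section
/- Let n ≥ 1 and let Ω ⊊ ℝⁿ be a nonempty open set with d(x) := dist(x, ℝⁿ∖Ω) and finite inner radius R := sup_{x ∈ Ω} d(x) < ∞. Then for every s > n and every u ∈ C_c^∞(Ω), one has ∫_Ω |∇u| / d^{s−1} dx − (s−n) · ∫_Ω |u| / d^s dx ≥ (1/R^{s−n}) · ∫_Ω |∇u| / d^{n−1} dx. -/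
open MeasureTheory Metric Set

theorem aux_dist {n : ℕ} {C : Set (EuclideanSpace ℝ (Fin n))} {x q : EuclideanSpace ℝ (Fin n)}
    (hq : q ∈ C) (hx : infDist x C = dist x q) {t : ℝ} (h0 : 0 ≤ t) (h1 : t ≤ 1) :
    infDist (q + t • (x - q)) C = t * infDist x C := by
  have e1 : dist (q + t • (x - q)) q = t * dist x q := by
    rw [dist_eq_norm, dist_eq_norm, add_sub_cancel_left, norm_smul, Real.norm_of_nonneg h0]
  have e2 : dist x (q + t • (x - q)) = (1 - t) * dist x q := by
    rw [dist_eq_norm, dist_eq_norm, show x - (q + t • (x - q)) = (1 - t) • (x - q) by module,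
      norm_smul, Real.norm_of_nonneg (by linarith)]
  have h2 := infDist_le_dist_of_mem (x := q + t • (x - q)) hq
  have h3 : infDist x C ≤ infDist (q + t • (x - q)) C + dist x (q + t • (x - q)) :=
    infDist_le_infDist_add_dist
  rw [hx] at *
  linarith

theorem aux_proj {n : ℕ} {C : Set (EuclideanSpace ℝ (Fin n))} (hC : IsClosed C)
    (hne : C.Nonempty) :
    ∃ p : EuclideanSpace ℝ (Fin n) → EuclideanSpace ℝ (Fin n), Measurable p ∧
      ∀ᵐ x, p x ∈ C ∧ infDist x C = dist x (p x) := by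
  let E := EuclideanSpace ℝ (Fin n)
  let w : E → E := fun x => (InnerProductSpace.toDual ℝ E).symm (fderiv ℝ (fun x => infDist x C) x)
  have hL : LipschitzWith 1 (fun x : E => infDist x C) := lipschitz_infDist_pt C
  refine ⟨fun x => x - infDist x C • w x, ?_, ?_⟩
  · have : Measurable w :=
      (InnerProductSpace.toDual ℝ E).symm.continuous.measurable.comp (measurable_fderiv ℝ _)
    exact measurable_id.sub ((continuous_infDist_pt C).measurable.smul this)
  · filter_upwards [hL.ae_differentiableAt] with x hx
    obtain ⟨q, hq, hqd⟩ := hC.exists_infDist_eq_dist hne x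
    suffices infDist x C • w x = x - q by
      rw [this, sub_sub_cancel]; exact ⟨hq, hqd⟩
    have hD : ‖w x‖ ≤ 1 := by
      simp only [w, LinearIsometryEquiv.norm_map]
      simpa using norm_fderiv_le_of_lipschitz ℝ hL (x₀ := x)
    have hin : inner ℝ (w x) (x - q) = dist x q := by
      simp only [w, InnerProductSpace.toDual_symm_apply]
      have hl : HasDerivAt (fun t : ℝ => q + t • (x - q)) (x - q) 1 := by
        simpa using ((hasDerivAt_id (1:ℝ)).smul_const (x - q)).const_add q
      have hx' : HasFDerivAt (fun x => infDist x C) (fderiv ℝ (fun x => infDist x C) x)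
          (q + (1:ℝ) • (x - q)) := by
        have : q + (1:ℝ) • (x - q) = x := by module
        rw [this]; exact hx.hasFDerivAt
      have h1 := (hx'.comp_hasDerivAt (1:ℝ) hl).hasDerivWithinAt (s := Icc 0 1)
      have h2 : HasDerivWithinAt (fun t : ℝ => t * infDist x C) (infDist x C) (Icc 0 1) 1 := by
        simpa using ((hasDerivAt_id (1:ℝ)).mul_const (infDist x C)).hasDerivWithinAt
      have h3 := h2.congr (f₁ := ((fun x => infDist x C) ∘ fun t : ℝ => q + t • (x - q)))
        (fun t ht => aux_dist hq hqd ht.1 ht.2) (aux_dist hq hqd zero_le_one le_rfl)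
      have := (uniqueDiffOn_Icc (zero_lt_one (α := ℝ)) 1 (by simp)).eq_deriv _ h1 h3
      rw [this, hqd]
    rw [← sub_eq_zero, ← norm_eq_zero, ← sq_eq_zero_iff]
    apply le_antisymm _ (sq_nonneg _)
    rw [norm_sub_sq_real, inner_smul_left, hin, norm_smul, Real.norm_of_nonneg infDist_nonneg, hqd,
      ← dist_eq_norm]
    simp only [conj_trivial]
    have : ‖w x‖ ^ 2 ≤ 1 := by nlinarith [norm_nonneg (w x)]
    nlinarith [sq_nonneg (dist x q)]

theorem aux_expand {n : ℕ} {C : Set (EuclideanSpace ℝ (Fin n))}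
    {x y p q : EuclideanSpace ℝ (Fin n)}
    (hp : p ∈ C) (hx : infDist x C = dist x p) (hq : q ∈ C) (hy : infDist y C = dist y q)
    {t : ℝ} (h0 : 0 < t) (h1 : t ≤ 1) :
    dist x y ≤ t⁻¹ * dist (p + t • (x - p)) (q + t • (y - q)) := by
  have a1 : dist x p ≤ dist x q := hx ▸ infDist_le_dist_of_mem hq
  have a2 : dist y q ≤ dist y p := hy ▸ infDist_le_dist_of_mem hp
  have b1 : dist x p ^ 2 ≤ dist x q ^ 2 := by gcongr
  have b2 : dist y q ^ 2 ≤ dist y p ^ 2 := by gcongr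
  have mono : 0 ≤ inner ℝ (p - q) (x - y) := by
    simp only [dist_eq_norm, norm_sub_sq_real] at b1 b2
    simp only [inner_sub_left, inner_sub_right]
    rw [real_inner_comm x p, real_inner_comm y p, real_inner_comm x q, real_inner_comm y q]
    linarith
  have key : t * dist x y ^ 2 ≤ dist (p + t • (x - p)) (q + t • (y - q)) * dist x y := by
    rw [dist_eq_norm, dist_eq_norm]
    refine le_trans ?_ (real_inner_le_norm _ _)
    rw [show p + t • (x - p) - (q + t • (y - q)) = (1 - t) • (p - q) + t • (x - y) by module,
      inner_add_left, inner_smul_left, inner_smul_left, real_inner_self_eq_norm_sq]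
    simp only [conj_trivial]
    nlinarith
  rw [inv_mul_eq_div, le_div_iff₀ h0]
  rcases (dist_nonneg (x := x) (y := y)).eq_or_lt with h | h
  · rw [← h]; simp
  · nlinarith

theorem aux_vol {n : ℕ} (K : NNReal) (f : EuclideanSpace ℝ (Fin n) → EuclideanSpace ℝ (Fin n))
    (S : Set (EuclideanSpace ℝ (Fin n))) (hf : LipschitzOnWith K f S) :
    volume (f '' S) ≤ (K : ENNReal) ^ (n : ℝ) * volume S := by
  have h := hf.hausdorffMeasure_image_le (d := n) (by positivity)
  have hH : (Measure.hausdorffMeasure (n:ℝ) : Measure (EuclideanSpace ℝ (Fin n))).IsAddHaarMeasure := by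
    have := isAddHaarMeasure_hausdorffMeasure (E := EuclideanSpace ℝ (Fin n))
    simpa using this
  obtain ⟨c, hc⟩ : ∃ c : NNReal, (volume : Measure (EuclideanSpace ℝ (Fin n))) =
      c • (Measure.hausdorffMeasure (n:ℝ) : Measure (EuclideanSpace ℝ (Fin n))) :=
    ⟨_, Measure.isAddLeftInvariant_eq_smul _ _⟩
  rw [hc]
  simp only [Measure.smul_apply, ENNReal.smul_def, smul_eq_mul]
  rw [mul_left_comm]
  gcongr

theorem aux_map {n : ℕ} {C G : Set (EuclideanSpace ℝ (Fin n))} 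
    {p : EuclideanSpace ℝ (Fin n) → EuclideanSpace ℝ (Fin n)} (hp : Measurable p)
    (h : ∀ x ∈ G, p x ∈ C ∧ infDist x C = dist x (p x)) {t : ℝ} (h0 : 0 < t) (h1 : t ≤ 1)
    {f : EuclideanSpace ℝ (Fin n) → ENNReal} (hf : Measurable f) :
    ∫⁻ x in G, f (p x + t • (x - p x)) ≤ ENNReal.ofReal (t ^ (-(n:ℝ))) * ∫⁻ y, f y := by
  have hT : Measurable (fun x => p x + t • (x - p x)) := by fun_prop
  rw [← lintegral_map hf hT, ← smul_eq_mul, ← lintegral_smul_measure]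
  refine lintegral_mono' ?_ le_rfl
  refine Measure.le_iff.2 fun A hA => ?_
  rw [Measure.map_apply hT hA, Measure.restrict_apply (hT hA), Measure.smul_apply, smul_eq_mul]
  set T := (fun x => p x + t • (x - p x)) with hTdef
  set S := T ⁻¹' A ∩ G with hS
  have hSG : ∀ x ∈ S, x ∈ G := fun x hx => hx.2
  have hinj : InjOn T S := by
    intro x hx y hy hxy
    have := aux_expand (h x hx.2).1 (h x hx.2).2 (h y hy.2).1 (h y hy.2).2 h0 h1
    simp only [hTdef] at hxy
    rw [hxy, dist_self, mul_zero] at this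
    exact dist_le_zero.1 this
  have hL : LipschitzOnWith (Real.toNNReal t⁻¹) (Function.invFunOn T S) (T '' S) := by
    apply LipschitzOnWith.of_dist_le_mul
    rintro _ ⟨x, hx, rfl⟩ _ ⟨y, hy, rfl⟩
    rw [hinj.leftInvOn_invFunOn hx, hinj.leftInvOn_invFunOn hy, Real.coe_toNNReal _ (by positivity)]
    exact aux_expand (h x hx.2).1 (h x hx.2).2 (h y hy.2).1 (h y hy.2).2 h0 h1
  have h2 := aux_vol _ _ _ hL
  rw [hinj.invFunOn_image subset_rfl] at h2
  refine h2.trans ?_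
  have e : ((Real.toNNReal t⁻¹ : NNReal) : ENNReal) ^ (n:ℝ) = ENNReal.ofReal (t ^ (-(n:ℝ))) := by
    rw [← ENNReal.ofReal, ENNReal.ofReal_rpow_of_pos (by positivity), Real.inv_rpow h0.le,
      Real.rpow_neg h0.le]
  rw [e]
  gcongr
  rintro _ ⟨x, hx, rfl⟩
  exact hx.1

theorem aux_line {n : ℕ} {u : EuclideanSpace ℝ (Fin n) → ℝ} (hu : ContDiff ℝ (⊤ : ℕ∞) u)
    {x q : EuclideanSpace ℝ (Fin n)} (hq : u q = 0) :
    ENNReal.ofReal |u x| ≤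
      ∫⁻ t in Ioc (0:ℝ) 1, ENNReal.ofReal (‖fderiv ℝ u (q + t • (x - q))‖ * dist x q) := by
  have hd : ∀ t : ℝ, HasDerivAt (fun t : ℝ => u (q + t • (x - q)))
      (fderiv ℝ u (q + t • (x - q)) (x - q)) t := by
    intro t
    have hl : HasDerivAt (fun t : ℝ => q + t • (x - q)) (x - q) t := by
      simpa using ((hasDerivAt_id t).smul_const (x - q)).const_add q
    exact ((hu.differentiable (by simp)) _).hasFDerivAt.comp_hasDerivAt t hl
  have hc : Continuous (fun t : ℝ => fderiv ℝ u (q + t • (x - q)) (x - q)) := by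
    have := hu.continuous_fderiv (by simp)
    fun_prop
  have hi := intervalIntegral.integral_eq_sub_of_hasDerivAt (a := 0) (b := 1)
    (fun t _ => hd t) (hc.intervalIntegrable _ _)
  have hux : u x = ∫ t in Ioc (0:ℝ) 1, fderiv ℝ u (q + t • (x - q)) (x - q) := by
    rw [← intervalIntegral.integral_of_le zero_le_one, hi]
    simp [hq]
  have : ENNReal.ofReal |u x| = ‖u x‖ₑ := by rw [← Real.norm_eq_abs, ofReal_norm]
  rw [this, hux]
  refine (enorm_integral_le_lintegral_enorm _).trans ?_
  refine lintegral_mono fun t => ?_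
  rw [← ofReal_norm, dist_eq_norm]
  exact ENNReal.ofReal_le_ofReal (ContinuousLinearMap.le_opNorm _ _)

theorem aux_inner {g d R s m : ℝ} (hg : 0 ≤ g) (hd : 0 < d) (hdR : d ≤ R) (hs : m < s) :
    ∫⁻ t in Ioc (0:ℝ) 1, ENNReal.ofReal (t ^ (-m)) *
      (if d ≤ t * R then ENNReal.ofReal (g * (d / t) ^ (1 - s)) else 0) ≤
    ENNReal.ofReal ((g / d ^ (s - 1) - (1 / R ^ (s - m)) * (g / d ^ (m - 1))) / (s - m)) := by
  have hR : 0 < R := hd.trans_le hdR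
  have hdR0 : 0 < d / R := by positivity
  have hdR1 : d / R ≤ 1 := (div_le_one hR).2 hdR
  calc _ ≤ ∫⁻ t in Icc (d / R) 1, ENNReal.ofReal (g * d ^ (1 - s) * t ^ (s - m - 1)) := by
        rw [← lintegral_indicator measurableSet_Ioc, ← lintegral_indicator measurableSet_Icc]
        refine lintegral_mono fun t => ?_
        by_cases ht : t ∈ Ioc (0:ℝ) 1
        · rw [indicator_of_mem ht]
          split_ifs with h
          · rw [indicator_of_mem (show t ∈ Icc (d / R) 1 from ⟨(div_le_iff₀ hR).2 h, ht.2⟩),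
              ← ENNReal.ofReal_mul (by have := ht.1; positivity)]
            apply ENNReal.ofReal_le_ofReal
            apply le_of_eq
            have ht0 := ht.1
            rw [Real.div_rpow hd.le ht0.le, show s - m - 1 = -m - (1 - s) by ring,
              Real.rpow_sub ht0 (-m) (1 - s)]
            generalize t ^ (1 - s) = b
            ring
          · simp
        · rw [indicator_of_notMem ht]; exact zero_le
    _ = ENNReal.ofReal (∫ t in (d/R)..1, g * d ^ (1 - s) * t ^ (s - m - 1)) := by
        rw [Measure.restrict_congr_set Ioc_ae_eq_Icc.symm, intervalIntegral.integral_of_le hdR1,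
          ofReal_integral_eq_lintegral_ofReal]
        · change IntegrableOn _ _ _
          rw [← intervalIntegrable_iff_integrableOn_Ioc_of_le hdR1]
          exact (intervalIntegral.intervalIntegrable_rpow' (by linarith)).const_mul _
        · refine (ae_restrict_mem measurableSet_Ioc).mono fun t ht => ?_
          have : 0 < t := hdR0.trans ht.1
          simp only [Pi.zero_apply]
          positivity
    _ ≤ _ := by
        apply ENNReal.ofReal_le_ofReal
        apply le_of_eq
        rw [intervalIntegral.integral_const_mul, integral_rpow (Or.inl (by linarith)),
          show s - m - 1 + 1 = s - m by ring, Real.one_rpow, Real.div_rpow hd.le hR.le,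
          show 1 - s = -(s - 1) by ring, Real.rpow_neg hd.le,
          show m - 1 = (s - 1) - (s - m) by ring, Real.rpow_sub hd (s-1) (s-m)]
        have h1 : 0 < d ^ (s - 1) := by positivity
        have h2 : 0 < d ^ (s - m) := by positivity
        have h3 : 0 < R ^ (s - m) := by positivity
        have h4 : s - m ≠ 0 := by linarith
        field_simp

theorem aux_lint (n : ℕ)
    (Ω : Set (EuclideanSpace ℝ (Fin n))) (hΩo : IsOpen Ω)
    (hΩuniv : Ω ≠ Set.univ)
    (R : ℝ) (hR : ∀ x ∈ Ω, infDist x Ωᶜ ≤ R) (s : ℝ) (hs : (n : ℝ) < s)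
    (u : EuclideanSpace ℝ (Fin n) → ℝ) (hu : ContDiff ℝ (⊤ : ℕ∞) u)
    (hsupp : tsupport u ⊆ Ω) :
    ∫⁻ x in Ω, ENNReal.ofReal (|u x| / (infDist x Ωᶜ) ^ s) ≤
    ∫⁻ x in Ω, ENNReal.ofReal ((‖fderiv ℝ u x‖ / (infDist x Ωᶜ) ^ (s - 1) -
      (1 / R ^ (s - n)) * (‖fderiv ℝ u x‖ / (infDist x Ωᶜ) ^ ((n:ℝ) - 1))) / (s - n)) := by
  have hne : (Ωᶜ).Nonempty := nonempty_compl.2 hΩuniv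
  have hcl : IsClosed Ωᶜ := hΩo.isClosed_compl
  have hpos : ∀ x ∈ Ω, 0 < infDist x Ωᶜ := fun x hx =>
    (hcl.notMem_iff_infDist_pos hne).1 (by simpa using hx)
  obtain ⟨p, hp, hae⟩ := aux_proj hcl hne
  obtain ⟨N, hN, hNm, hN0⟩ := exists_measurable_superset_of_null (ae_iff.1 hae)
  obtain ⟨G, hGdef⟩ : ∃ G, G = Ω \ N := ⟨_, rfl⟩
  have hGm : MeasurableSet G := hGdef ▸ hΩo.measurableSet.diff hNm
  have hG : ∀ x ∈ G, p x ∈ Ωᶜ ∧ infDist x Ωᶜ = dist x (p x) := by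
    intro x hx
    rw [hGdef] at hx
    by_contra h
    exact hx.2 (hN h)
  have hGs : ∀ x ∈ G, x ∈ Ω := fun x hx => by
    rw [hGdef] at hx
    exact hx.1
  have hGΩ : G =ᵐ[volume] Ω := hGdef ▸ sdiff_null_ae_eq_self hN0
  have hgm : Measurable (fun x => ‖fderiv ℝ u x‖) := (measurable_fderiv ℝ u).norm
  have hdm : Measurable (fun x => infDist x Ωᶜ) := (continuous_infDist_pt _).measurable
  obtain ⟨F, hFdef⟩ : ∃ F : ℝ → EuclideanSpace ℝ (Fin n) → ENNReal, ∀ t y, F t y =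
    if infDist y Ωᶜ ≤ t * R then
      ENNReal.ofReal (‖fderiv ℝ u y‖ * (infDist y Ωᶜ / t) ^ (1 - s)) else 0 := ⟨_, fun _ _ => rfl⟩
  have hF : Measurable (fun z : ℝ × EuclideanSpace ℝ (Fin n) => F z.1 z.2) := by
    simp only [hFdef]
    refine Measurable.ite (measurableSet_le (hdm.comp measurable_snd)
      (measurable_fst.mul_const R)) ?_ measurable_const
    exact ((hgm.comp measurable_snd).mul
      (((hdm.comp measurable_snd).div measurable_fst).pow_const _)).ennreal_ofReal
  have step1 : ∀ x ∈ G, ENNReal.ofReal (|u x| / (infDist x Ωᶜ) ^ s) ≤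
      ∫⁻ t in Ioc (0:ℝ) 1, F t (p x + t • (x - p x)) := by
    intro x hx
    obtain ⟨h1, h2⟩ := hG x hx
    have hd := hpos x (hGs x hx)
    have hup : u (p x) = 0 := by
      by_contra h
      exact h1 (hsupp (subset_tsupport u h))
    have hl := aux_line hu (x := x) hup
    rw [div_eq_mul_inv, mul_comm, ENNReal.ofReal_mul (by positivity)]
    refine (mul_le_mul_right hl _).trans ?_
    rw [← lintegral_const_mul' _ _ ENNReal.ofReal_ne_top]
    refine setLIntegral_mono' measurableSet_Ioc fun t ht => le_of_eq ?_
    have ht0 := ht.1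
    rw [hFdef]
    rw [aux_dist h1 h2 ht.1.le ht.2, if_pos (by have := hR x (hGs x hx); gcongr),
      ← ENNReal.ofReal_mul (by positivity), mul_div_cancel_left₀ _ ht0.ne', ← h2,
      Real.rpow_sub hd, Real.rpow_one]
    congr 1
    ring
  calc _ = ∫⁻ x in G, ENNReal.ofReal (|u x| / (infDist x Ωᶜ) ^ s) := by
        rw [Measure.restrict_congr_set hGΩ]
    _ ≤ ∫⁻ x in G, ∫⁻ t in Ioc (0:ℝ) 1, F t (p x + t • (x - p x)) :=
        setLIntegral_mono' hGm step1
    _ = ∫⁻ t in Ioc (0:ℝ) 1, ∫⁻ x in G, F t (p x + t • (x - p x)) := by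
        apply lintegral_lintegral_swap
        apply Measurable.aemeasurable
        have : Measurable (fun z : EuclideanSpace ℝ (Fin n) × ℝ =>
          (z.2, p z.1 + z.2 • (z.1 - p z.1))) := by fun_prop
        exact hF.comp this
    _ ≤ ∫⁻ t in Ioc (0:ℝ) 1, ∫⁻ y, ENNReal.ofReal (t ^ (-(n:ℝ))) * F t y := by
        refine setLIntegral_mono' measurableSet_Ioc fun t ht => ?_
        rw [lintegral_const_mul' _ _ ENNReal.ofReal_ne_top]
        exact aux_map hp hG ht.1 ht.2 (hF.comp measurable_prodMk_left)
    _ = ∫⁻ y, ∫⁻ t in Ioc (0:ℝ) 1, ENNReal.ofReal (t ^ (-(n:ℝ))) * F t y := by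
        apply lintegral_lintegral_swap
        apply Measurable.aemeasurable
        exact ((measurable_fst.pow_const _).ennreal_ofReal).mul hF
    _ ≤ _ := by
        rw [← lintegral_indicator hΩo.measurableSet]
        refine lintegral_mono fun y => ?_
        by_cases hy : y ∈ Ω
        · rw [indicator_of_mem hy]
          simp only [hFdef]
          exact aux_inner (norm_nonneg _) (hpos y hy) (hR y hy) hs
        · rw [indicator_of_notMem hy]
          have : fderiv ℝ u y = 0 := fderiv_of_notMem_tsupport _ (fun h => hy (hsupp h))
          simp [hFdef, this]

theorem aux_int {n : ℕ}
    {Ω : Set (EuclideanSpace ℝ (Fin n))} (hΩm : MeasurableSet Ω)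
    (hpos : ∀ x ∈ Ω, 0 < infDist x Ωᶜ)
    {K : Set (EuclideanSpace ℝ (Fin n))} (hK : IsCompact K) (hKΩ : K ⊆ Ω)
    {v : EuclideanSpace ℝ (Fin n) → ℝ} (hv : Continuous v) (h0 : ∀ x ∉ K, v x = 0) (a : ℝ) :
    IntegrableOn (fun x => v x / (infDist x Ωᶜ) ^ a) Ω := by
  have h1 : IntegrableOn (fun x => v x / (infDist x Ωᶜ) ^ a) K := by
    refine ContinuousOn.integrableOn_compact hK (hv.continuousOn.div ?_ ?_)
    · exact (continuous_infDist_pt _).continuousOn.rpow_const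
        fun x hx => Or.inl (hpos x (hKΩ hx)).ne'
    · intro x hx
      have := hpos x (hKΩ hx)
      positivity
  refine h1.of_forall_sdiff_eq_zero ?_ ?_
  · exact hΩm
  · intro x hx
    simp [h0 x hx.2]

/-- `L^1` weighted Hardy inequality with gradient remainder
on a general open set of finite inner radius. -/
theorem l1_weighted_hardy_gradient_remainder (n : ℕ) (hn : 1 ≤ n)
    (Ω : Set (EuclideanSpace ℝ (Fin n))) (hΩo : IsOpen Ω) (hΩne : Ω.Nonempty)
    (hΩuniv : Ω ≠ Set.univ)
    (R : ℝ) (hR : IsLUB ((fun x => Metric.infDist x Ωᶜ) '' Ω) R) :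
    ∀ s : ℝ, (n : ℝ) < s →
    ∀ u : EuclideanSpace ℝ (Fin n) → ℝ, ContDiff ℝ (⊤ : ℕ∞) u →
      HasCompactSupport u → tsupport u ⊆ Ω →
      (∫ x in Ω, ‖fderiv ℝ u x‖ / (Metric.infDist x Ωᶜ) ^ (s - 1))
          - (s - n) * (∫ x in Ω, |u x| / (Metric.infDist x Ωᶜ) ^ s) ≥
        (1 / R ^ (s - n)) *
          ∫ x in Ω, ‖fderiv ℝ u x‖ / (Metric.infDist x Ωᶜ) ^ ((n : ℝ) - 1) := by
  intro s hs u hu hcs hsupp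
  have hR' : ∀ x ∈ Ω, infDist x Ωᶜ ≤ R := fun x hx => hR.1 ⟨x, hx, rfl⟩
  have hpos : ∀ x ∈ Ω, 0 < infDist x Ωᶜ := fun x hx =>
    (hΩo.isClosed_compl.notMem_iff_infDist_pos (nonempty_compl.2 hΩuniv)).1 (by simpa using hx)
  have main := aux_lint n Ω hΩo hΩuniv R hR' s hs u hu hsupp
  have hgc : Continuous (fun x => ‖fderiv ℝ u x‖) := (hu.continuous_fderiv (by simp)).norm
  have hg0 : ∀ x ∉ tsupport u, ‖fderiv ℝ u x‖ = 0 := fun x hx => by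
    rw [fderiv_of_notMem_tsupport _ hx, norm_zero]
  have i1 := aux_int hΩo.measurableSet hpos hcs hsupp hgc hg0 (s - 1)
  have i2 := aux_int hΩo.measurableSet hpos hcs hsupp hgc hg0 ((n:ℝ) - 1)
  have i3 := aux_int hΩo.measurableSet hpos hcs hsupp hu.continuous.abs
    (fun x hx => by rw [image_eq_zero_of_notMem_tsupport hx, abs_zero]) s
  have i4 : IntegrableOn (fun x => (‖fderiv ℝ u x‖ / (infDist x Ωᶜ) ^ (s - 1) -
      (1 / R ^ (s - n)) * (‖fderiv ℝ u x‖ / (infDist x Ωᶜ) ^ ((n:ℝ) - 1))) / (s - n)) Ω :=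
    (i1.sub (i2.const_mul (1 / R ^ (s - n)))).div_const (s - n)
  have hsn : 0 < s - n := by linarith
  have nn : ∀ x ∈ Ω, 0 ≤ (‖fderiv ℝ u x‖ / (infDist x Ωᶜ) ^ (s - 1) -
      (1 / R ^ (s - n)) * (‖fderiv ℝ u x‖ / (infDist x Ωᶜ) ^ ((n:ℝ) - 1))) / (s - n) := by
    intro x hx
    have hd := hpos x hx
    have hdR := hR' x hx
    apply div_nonneg _ hsn.le
    rw [sub_nonneg, show s - 1 = (s - n) + (n - 1) by ring, Real.rpow_add hd, one_div,
      inv_mul_eq_div, div_div, mul_comm]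
    gcongr
  rw [← ofReal_integral_eq_lintegral_ofReal i3, ← ofReal_integral_eq_lintegral_ofReal i4] at main
  · have := (ENNReal.ofReal_le_ofReal_iff (setIntegral_nonneg hΩo.measurableSet nn)).1 main
    rw [integral_div, integral_sub i1 (i2.const_mul _), integral_const_mul, le_div_iff₀ hsn] at this
    linarith
  · exact (ae_restrict_mem hΩo.measurableSet).mono nn
  · refine (ae_restrict_mem hΩo.measurableSet).mono fun x hx => ?_
    have := hpos x hx
    simp only [Pi.zero_apply]
    positivity
end

section
/- Let n ≥ 1 and let Ω ⊊ ℝⁿ be a nonempty open set with d(x) := dist(x, ℝⁿ∖Ω), satisfying −Δd ≥ 0 in the sense of distributions on Ω, i.e. ∫_Ω d Δφ dx ≤ 0 for every nonnegative φ ∈ C_c^∞(Ω). Then for every s > 1 and every u ∈ C_c^∞(Ω), one has ∫_Ω |∇u| / d^{s−1} dx ≥ (s−1) · ∫_Ω |u| / d^s dx. Moreover the constant s−1 is sharp: for every ε > 0 there exists a nonzero u ∈ C_c^∞(Ω) with ∫_Ω |∇u| / d^{s−1} dx < (s−1+ε) · ∫_Ω |u| / d^s dx. -/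
open MeasureTheory Metric Set

/-- The (pointwise) Laplacian of a function on Euclidean space,
as the sum of its repeated directional derivatives along the coordinate directions. -/
noncomputable def lapl {n : ℕ} (φ : EuclideanSpace ℝ (Fin n) → ℝ)
    (x : EuclideanSpace ℝ (Fin n)) : ℝ :=
  ∑ i : Fin n,
    fderiv ℝ (fun y => fderiv ℝ φ y (EuclideanSpace.single i (1 : ℝ))) x
      (EuclideanSpace.single i (1 : ℝ))

section Aux

open Filter Topology
open scoped NNReal Convolution ContDiff

lemma aux_weak_smooth {n : ℕ} {d : EuclideanSpace ℝ (Fin n) → ℝ} (hd : LipschitzWith 1 d)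
    {φ : EuclideanSpace ℝ (Fin n) → ℝ} (hφ : ContDiff ℝ (⊤ : ℕ∞) φ) (hc : HasCompactSupport φ) :
    (∫ x, d x * lapl φ x) = - ∑ i : Fin n, ∫ x, lineDeriv ℝ d x (EuclideanSpace.single i (1 : ℝ))
      * fderiv ℝ φ x (EuclideanSpace.single i (1 : ℝ)) := by
  have key : ∀ i : Fin n, ContDiff ℝ (⊤ : ℕ∞)
      (fun y => fderiv ℝ φ y (EuclideanSpace.single i (1 : ℝ))) := fun i =>
    (hφ.fderiv_right (m := (⊤ : ℕ∞)) (by simp)).clm_apply contDiff_const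
  have keyc : ∀ i : Fin n, HasCompactSupport
      (fun y => fderiv ℝ φ y (EuclideanSpace.single i (1 : ℝ))) := fun i => by
    exact hc.fderiv_apply (𝕜 := ℝ) _
  have e : ∀ i : Fin n, ∫ x, lineDeriv ℝ d x (EuclideanSpace.single i (1 : ℝ))
      * fderiv ℝ φ x (EuclideanSpace.single i (1 : ℝ)) = - ∫ x, d x *
      fderiv ℝ (fun y => fderiv ℝ φ y (EuclideanSpace.single i (1 : ℝ))) x
      (EuclideanSpace.single i (1 : ℝ)) := by
    intro i
    obtain ⟨D, hD⟩ := (key i).lipschitzWith_of_hasCompactSupport (keyc i) (by simp)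
    rw [hd.integral_lineDeriv_mul_eq hD (keyc i), ← integral_neg]
    congr 1
    ext x
    rw [((key i).differentiable (by simp)).differentiableAt.lineDeriv_eq_fderiv]
    simp [mul_comm]
  simp_rw [e, Finset.sum_neg_distrib, neg_neg, lapl, Finset.mul_sum]
  rw [integral_finsetSum]
  intro i _
  refine Continuous.integrable_of_hasCompactSupport ?_ ?_
  · refine hd.continuous.mul ?_
    exact (((key i).fderiv_right (m := (⊤ : ℕ∞)) (by simp)).clm_apply contDiff_const).continuous
  · exact ((keyc i).fderiv_apply (𝕜 := ℝ) _).mul_left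

lemma aux_lineDeriv_sub {n : ℕ} (φ : EuclideanSpace ℝ (Fin n) → ℝ) (x t v) :
    lineDeriv ℝ (fun t => φ (x - t)) t v = - lineDeriv ℝ φ (x - t) v := by
  unfold lineDeriv
  have h := deriv_comp_neg (fun s : ℝ => φ (x - t + s • v)) 0
  rw [neg_zero] at h
  rw [← h]
  have e : ∀ s : ℝ, x - (t + s • v) = x - t + -s • v := fun s => by
    rw [neg_smul]; abel
  simp_rw [e]

lemma aux_conv_deriv {n : ℕ} {φ ρ : EuclideanSpace ℝ (Fin n) → ℝ} {C : ℝ≥0}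
    (hφ : LipschitzWith C φ) (hρ : ContDiff ℝ (⊤ : ℕ∞) ρ) (hρc : HasCompactSupport ρ) (x v) :
    fderiv ℝ (ρ ⋆[ContinuousLinearMap.lsmul ℝ ℝ, volume] φ) x v =
      (ρ ⋆[ContinuousLinearMap.lsmul ℝ ℝ, volume] (fun x => lineDeriv ℝ φ x v)) x := by
  have h1 := (hρc.hasFDerivAt_convolution_left (ContinuousLinearMap.lsmul ℝ ℝ) (μ := volume)
    (hρ.of_le (by simp)) hφ.continuous.locallyIntegrable x)
  obtain ⟨D, hD⟩ := hρ.lipschitzWith_of_hasCompactSupport hρc (by simp)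
  rw [h1.fderiv, convolution_def, convolution_def, ContinuousLinearMap.integral_apply]
  · simp only [ContinuousLinearMap.precompL_apply, ContinuousLinearMap.lsmul_apply, smul_eq_mul]
    have hl : LipschitzWith C (fun t => φ (x - t)) := by
      refine LipschitzWith.of_dist_le_mul fun a b => ?_
      have := hφ.dist_le_mul (x - a) (x - b)
      rwa [dist_sub_left] at this
    have h2 := hl.integral_lineDeriv_mul_eq (μ := volume) hD hρc v
    simp_rw [aux_lineDeriv_sub, (hρ.differentiable (by simp)).differentiableAt.lineDeriv_eq_fderiv]
      at h2
    simp only [neg_mul, map_neg, integral_neg, neg_inj] at h2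
    rw [← h2]
    congr 1; ext t; ring
  · exact (hρc.fderiv (𝕜 := ℝ)).convolutionExists_left _ (hρ.continuous_fderiv (by simp))
      hφ.continuous.locallyIntegrable x

lemma aux_weak_lip {n : ℕ} {Ω : Set (EuclideanSpace ℝ (Fin n))} (hΩo : IsOpen Ω)
    {d : EuclideanSpace ℝ (Fin n) → ℝ} (hd : LipschitzWith 1 d)
    (hsub : ∀ φ : EuclideanSpace ℝ (Fin n) → ℝ, ContDiff ℝ (⊤ : ℕ∞) φ →
      HasCompactSupport φ → tsupport φ ⊆ Ω → (∀ z, 0 ≤ φ z) →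
      (∫ x, d x * lapl φ x) ≤ 0)
    {φ : EuclideanSpace ℝ (Fin n) → ℝ} {C : ℝ≥0} (hφ : LipschitzWith C φ)
    (hc : HasCompactSupport φ) (hs : tsupport φ ⊆ Ω) (h0 : ∀ z, 0 ≤ φ z) :
    0 ≤ ∑ i : Fin n, ∫ x, lineDeriv ℝ d x (EuclideanSpace.single i (1 : ℝ))
      * lineDeriv ℝ φ x (EuclideanSpace.single i (1 : ℝ)) := by
  obtain ⟨δ, hδ, hδs⟩ := IsCompact.exists_cthickening_subset_open hc hΩo hs
  let ρ : ℕ → ContDiffBump (0 : EuclideanSpace ℝ (Fin n)) := fun k =>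
    ⟨δ / (k + 1) / 2, δ / (k + 1), by positivity, by
      have : 0 < δ / (k + 1) := by positivity
      linarith⟩
  have hout : ∀ k, (ρ k).rOut ≤ δ := fun k => by
    show δ / (k + 1) ≤ δ
    apply div_le_self hδ.le
    simp
  let Φ : ℕ → EuclideanSpace ℝ (Fin n) → ℝ := fun k =>
    ((ρ k).normed volume) ⋆[ContinuousLinearMap.lsmul ℝ ℝ, volume] φ
  have hΦs : ∀ k, ContDiff ℝ (⊤ : ℕ∞) (Φ k) := fun k =>
    (ρ k).hasCompactSupport_normed.contDiff_convolution_left _ (ρ k).contDiff_normed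
      hφ.continuous.locallyIntegrable
  have hsupp : ∀ k, tsupport (Φ k) ⊆ cthickening δ (tsupport φ) := by
    intro k
    refine closure_minimal ?_ isClosed_cthickening
    refine (support_convolution_subset_swap _).trans ?_
    rintro _ ⟨a, ha, b, hb, rfl⟩
    rw [(ρ k).support_normed_eq] at hb
    refine mem_cthickening_of_dist_le _ a _ _ (subset_closure ha) ?_
    simp only [mem_ball, dist_zero_right] at hb
    simp only [dist_self_add_left]
    exact hb.le.trans (hout k)
  have hcK : IsCompact (cthickening δ (tsupport φ)) := IsCompact.cthickening hc
  have hΦc : ∀ k, HasCompactSupport (Φ k) := fun k =>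
    hcK.of_isClosed_subset (isClosed_tsupport _) (hsupp k)
  have hΦ0 : ∀ k z, 0 ≤ Φ k z := fun k z => by
    refine integral_nonneg fun t => ?_
    simp only [ContinuousLinearMap.lsmul_apply, smul_eq_mul]
    exact mul_nonneg ((ρ k).nonneg_normed _) (h0 _)
  have hder : ∀ k x v, fderiv ℝ (Φ k) x v = ((ρ k).normed volume
      ⋆[ContinuousLinearMap.lsmul ℝ ℝ, volume] (fun x => lineDeriv ℝ φ x v)) x := fun k x v =>
    aux_conv_deriv hφ (ρ k).contDiff_normed (ρ k).hasCompactSupport_normed x v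
  have hge : ∀ k, 0 ≤ ∑ i : Fin n, ∫ x, lineDeriv ℝ d x (EuclideanSpace.single i (1 : ℝ))
      * fderiv ℝ (Φ k) x (EuclideanSpace.single i (1 : ℝ)) := fun k => by
    have := hsub (Φ k) (hΦs k) (hΦc k) ((hsupp k).trans hδs) (hΦ0 k)
    rw [aux_weak_smooth hd (hΦs k) (hΦc k)] at this
    linarith
  refine ge_of_tendsto' (b := 0) (x := atTop) ?_ hge
  refine tendsto_finsetSum _ fun i _ => ?_
  set v := EuclideanSpace.single i (1 : ℝ)
  have hv : ‖v‖ = 1 := by simp [v]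
  have hconv : ∀ᵐ x₀ ∂(volume : Measure (EuclideanSpace ℝ (Fin n))),
      Tendsto (fun k => fderiv ℝ (Φ k) x₀ v) atTop (𝓝 (lineDeriv ℝ φ x₀ v)) := by
    simp_rw [hder]
    refine ContDiffBump.ae_convolution_tendsto_right_of_locallyIntegrable (K := 2) ?_ ?_
      (hφ.locallyIntegrable_lineDeriv v)
    · exact tendsto_const_div_atTop_nhds_zero_nat δ |>.comp (tendsto_add_atTop_nat 1) |>.congr
        (fun k => by simp [ρ])
    · refine Eventually.of_forall fun k => ?_
      simp only [ρ]
      apply le_of_eq; ring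
  have hlipΦ : ∀ k x, |fderiv ℝ (Φ k) x v| ≤ C := by
    intro k x
    rw [hder, convolution_def, ← Real.norm_eq_abs]
    refine (norm_integral_le_integral_norm _).trans ?_
    calc _ ≤ ∫ t, (ρ k).normed volume t * (C : ℝ) := by
          refine integral_mono_of_nonneg (Eventually.of_forall fun t => norm_nonneg _) ?_ ?_
          · exact (ρ k).integrable_normed.mul_const _
          · refine Eventually.of_forall fun t => ?_
            simp only [ContinuousLinearMap.lsmul_apply, smul_eq_mul, norm_mul]
            rw [Real.norm_of_nonneg ((ρ k).nonneg_normed _)]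
            refine mul_le_mul_of_nonneg_left ?_ ((ρ k).nonneg_normed _)
            have := norm_lineDeriv_le_of_lipschitz ℝ hφ (x₀ := x - t) (v := v)
            simpa [hv] using this
      _ = C := by rw [integral_mul_const, (ρ k).integral_normed, one_mul]
  refine tendsto_integral_of_dominated_convergence
    ((cthickening δ (tsupport φ)).indicator fun _ => (C : ℝ)) ?_ ?_ ?_ ?_
  · intro k
    refine (aestronglyMeasurable_lineDeriv hd.continuous _).mul ?_
    exact ((hΦs k).continuous_fderiv (by simp)).clm_apply continuous_const |>.aestronglyMeasurable
  · rw [integrable_indicator_iff hcK.measurableSet]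
    exact integrableOn_const hcK.measure_lt_top.ne
  · intro k
    refine Eventually.of_forall fun x => ?_
    by_cases hx : x ∈ cthickening δ (tsupport φ)
    · rw [indicator_of_mem hx, norm_mul]
      have h1 := norm_lineDeriv_le_of_lipschitz ℝ hd (x₀ := x) (v := v)
      rw [hv] at h1
      have h2 := hlipΦ k x
      rw [← Real.norm_eq_abs] at h2
      calc _ ≤ 1 * (C : ℝ) := mul_le_mul (by simpa using h1) h2 (norm_nonneg _) zero_le_one
        _ = C := one_mul _
    · rw [indicator_of_notMem hx]
      have : fderiv ℝ (Φ k) x = 0 := by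
        apply image_eq_zero_of_notMem_tsupport
        intro h
        exact hx (hsupp k (tsupport_fderiv_subset ℝ h))
      simp [this]
  · filter_upwards [hconv] with x hx
    exact hx.const_mul _

lemma aux_fderiv_grad {n : ℕ} {d φ : EuclideanSpace ℝ (Fin n) → ℝ} (x) :
    ∑ i : Fin n, fderiv ℝ d x (EuclideanSpace.single i (1 : ℝ)) *
      fderiv ℝ φ x (EuclideanSpace.single i (1 : ℝ)) = fderiv ℝ φ x (gradient d x) := by
  have h : gradient d x = ∑ i : Fin n, (fderiv ℝ d x (EuclideanSpace.single i (1 : ℝ))) •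
      EuclideanSpace.single i (1 : ℝ) := by
    rw [← (EuclideanSpace.basisFun (Fin n) ℝ).sum_repr (gradient d x)]
    refine Finset.sum_congr rfl fun i _ => ?_
    rw [OrthonormalBasis.repr_apply_apply]
    simp only [EuclideanSpace.basisFun_apply]
    rw [real_inner_comm]
    simp [gradient]
  rw [h, map_sum]
  simp

lemma aux_weak_grad {n : ℕ} {Ω : Set (EuclideanSpace ℝ (Fin n))} (hΩo : IsOpen Ω)
    {d : EuclideanSpace ℝ (Fin n) → ℝ} (hd : LipschitzWith 1 d)
    (hsub : ∀ φ : EuclideanSpace ℝ (Fin n) → ℝ, ContDiff ℝ (⊤ : ℕ∞) φ →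
      HasCompactSupport φ → tsupport φ ⊆ Ω → (∀ z, 0 ≤ φ z) →
      (∫ x, d x * lapl φ x) ≤ 0)
    {φ : EuclideanSpace ℝ (Fin n) → ℝ} {C : ℝ≥0} (hφ : LipschitzWith C φ)
    (hc : HasCompactSupport φ) (hs : tsupport φ ⊆ Ω) (h0 : ∀ z, 0 ≤ φ z) :
    Integrable (fun x => fderiv ℝ φ x (gradient d x)) ∧ 0 ≤ ∫ x, fderiv ℝ φ x (gradient d x) := by
  have h := aux_weak_lip hΩo hd hsub hφ hc hs h0
  have hae : (fun x => ∑ i : Fin n, lineDeriv ℝ d x (EuclideanSpace.single i (1 : ℝ))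
      * lineDeriv ℝ φ x (EuclideanSpace.single i (1 : ℝ))) =ᵐ[volume]
      fun x => fderiv ℝ φ x (gradient d x) := by
    filter_upwards [hd.ae_differentiableAt, hφ.ae_differentiableAt] with x h1 h2
    rw [← aux_fderiv_grad]
    refine Finset.sum_congr rfl fun i _ => ?_
    rw [h1.lineDeriv_eq_fderiv, h2.lineDeriv_eq_fderiv]
  have hint : ∀ i ∈ (Finset.univ : Finset (Fin n)),
      Integrable (fun x => lineDeriv ℝ d x (EuclideanSpace.single i (1 : ℝ))
      * lineDeriv ℝ φ x (EuclideanSpace.single i (1 : ℝ))) := by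
    intro i _
    refine Integrable.bdd_mul (c := 1) ?_ (aestronglyMeasurable_lineDeriv hd.continuous _) ?_
    · refine Integrable.mono' (g := (tsupport φ).indicator fun _ => (C : ℝ)) ?_
        (aestronglyMeasurable_lineDeriv hφ.continuous _) ?_
      · rw [integrable_indicator_iff (isClosed_tsupport _).measurableSet]
        exact integrableOn_const (IsCompact.measure_lt_top hc).ne
      · filter_upwards [hφ.ae_differentiableAt] with x h2
        by_cases hx : x ∈ tsupport φ
        · rw [indicator_of_mem hx]
          simpa using norm_lineDeriv_le_of_lipschitz ℝ hφ (x₀ := x)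
            (v := EuclideanSpace.single i (1 : ℝ))
        · rw [indicator_of_notMem hx, h2.lineDeriv_eq_fderiv]
          have : fderiv ℝ φ x = 0 := by
            apply image_eq_zero_of_notMem_tsupport
            intro h
            exact hx (tsupport_fderiv_subset ℝ h)
          simp [this]
    · refine Eventually.of_forall fun x => ?_
      simpa using norm_lineDeriv_le_of_lipschitz ℝ hd (x₀ := x)
            (v := EuclideanSpace.single i (1 : ℝ))
  rw [← integral_finsetSum _ hint] at h
  exact ⟨(integrable_finsetSum _ hint).congr hae, h.trans_eq (integral_congr_ae hae)⟩

lemma aux_rpow_lip {a c x y : ℝ} (ha : 0 ≤ a) (hc : 0 < c) (hx : c ≤ x) (hy : c ≤ y) :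
    |x ^ (-a) - y ^ (-a)| ≤ a * c ^ (-a - 1) * |x - y| := by
  have h := Convex.norm_image_sub_le_of_norm_hasDerivWithin_le (f := fun t : ℝ => t ^ (-a))
    (f' := fun t => (-a) * t ^ (-a - 1)) (s := Ici c) (C := a * c ^ (-a - 1)) (x := y) (y := x)
    (fun t ht => (Real.hasDerivAt_rpow_const (Or.inl (hc.trans_le ht).ne')).hasDerivWithinAt)
    (fun t ht => by
      have ht0 : 0 < t := hc.trans_le ht
      rw [norm_mul, norm_neg, Real.norm_of_nonneg ha,
        Real.norm_of_nonneg (Real.rpow_nonneg ht0.le _)]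
      exact mul_le_mul_of_nonneg_left
        (Real.rpow_le_rpow_of_nonpos hc ht (by linarith)) ha)
    (convex_Ici c) hy hx
  simpa using h

lemma aux_abs_fderiv {n : ℕ} {u : EuclideanSpace ℝ (Fin n) → ℝ} {x : EuclideanSpace ℝ (Fin n)}
    (hu : DifferentiableAt ℝ u x) (hu' : DifferentiableAt ℝ (fun x => |u x|) x) :
    ‖fderiv ℝ (fun x => |u x|) x‖ ≤ ‖fderiv ℝ u x‖ := by
  refine ContinuousLinearMap.opNorm_le_bound _ (norm_nonneg _) fun h => ?_
  refine le_trans ?_ ((fderiv ℝ u x).le_opNorm h)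
  have h1 := (hu'.hasFDerivAt.hasLineDerivAt h).tendsto_slope_zero.norm
  have h2 := (hu.hasFDerivAt.hasLineDerivAt h).tendsto_slope_zero.norm
  refine le_of_tendsto_of_tendsto' h1 h2 fun t => ?_
  rw [norm_smul, norm_smul]
  refine mul_le_mul_of_nonneg_left ?_ (norm_nonneg _)
  exact abs_abs_sub_abs_le_abs_sub _ _

lemma aux_grad_dist {n : ℕ} {Ω : Set (EuclideanSpace ℝ (Fin n))} (hΩo : IsOpen Ω)
    (hne : Ωᶜ.Nonempty) {x : EuclideanSpace ℝ (Fin n)} (hx : x ∈ Ω)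
    (hd : DifferentiableAt ℝ (fun x => infDist x Ωᶜ) x) :
    ‖gradient (fun x => infDist x Ωᶜ) x‖ = 1 ∧
    fderiv ℝ (fun x => infDist x Ωᶜ) x (gradient (fun x => infDist x Ωᶜ) x) = 1 := by
  set d : EuclideanSpace ℝ (Fin n) → ℝ := fun x => infDist x Ωᶜ with hdd
  have hlip : LipschitzWith 1 d := lipschitz_infDist_pt _
  have hle : ‖fderiv ℝ d x‖ ≤ 1 := by simpa using norm_fderiv_le_of_lipschitz ℝ hlip (x₀ := x)
  obtain ⟨y, hy, hxy⟩ := hΩo.isClosed_compl.exists_infDist_eq_dist hne x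
  have hr : 0 < dist x y := dist_pos.2 (by rintro rfl; exact hy hx)
  have hm : fderiv ℝ d x (y - x) ≤ - dist x y := by
    have h1 := (hd.hasFDerivAt.hasLineDerivAt (y - x)).tendsto_slope_zero_right
    refine le_of_tendsto h1 ?_
    filter_upwards [Ioo_mem_nhdsGT (zero_lt_one' ℝ)] with t ht
    have : d (x + t • (y - x)) ≤ (1 - t) * dist x y := by
      refine (infDist_le_dist_of_mem hy).trans ?_
      rw [dist_eq_norm, dist_eq_norm]
      have : x + t • (y - x) - y = (1 - t) • (x - y) := by module
      rw [this, norm_smul, Real.norm_of_nonneg (by linarith [ht.2])]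
    have hx0 : d x = dist x y := hxy
    rw [smul_eq_mul, inv_mul_le_iff₀ ht.1, hx0]
    linarith
  have hge : 1 ≤ ‖fderiv ℝ d x‖ := by
    have h1 := (fderiv ℝ d x).le_opNorm (y - x)
    rw [Real.norm_eq_abs, ← dist_eq_norm, dist_comm] at h1
    have h2 := neg_le_abs (fderiv ℝ d x (y - x))
    have h3 : dist x y ≤ ‖fderiv ℝ d x‖ * dist x y := by linarith
    by_contra hcon
    nlinarith
  have h1 : ‖gradient d x‖ = 1 := by
    rw [gradient, LinearIsometryEquiv.norm_map]; exact le_antisymm hle hge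
  refine ⟨h1, ?_⟩
  have : fderiv ℝ d x (gradient d x) = inner ℝ (gradient d x) (gradient d x) :=
    (InnerProductSpace.toDual_symm_apply (y := fderiv ℝ d x) (x := gradient d x)).symm
  rw [this, real_inner_self_eq_norm_sq, h1, one_pow]

lemma aux_hardy {n : ℕ} {Ω : Set (EuclideanSpace ℝ (Fin n))} (hΩo : IsOpen Ω)
    (hne : Ωᶜ.Nonempty)
    (hsub : ∀ φ : EuclideanSpace ℝ (Fin n) → ℝ, ContDiff ℝ (⊤ : ℕ∞) φ →
      HasCompactSupport φ → tsupport φ ⊆ Ω → (∀ z, 0 ≤ φ z) →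
      (∫ x, infDist x Ωᶜ * lapl φ x) ≤ 0) {s : ℝ} (hs : 1 < s)
    {u : EuclideanSpace ℝ (Fin n) → ℝ} (hu : ContDiff ℝ (⊤ : ℕ∞) u)
    (huc : HasCompactSupport u) (hus : tsupport u ⊆ Ω) :
    (∫ x in Ω, ‖fderiv ℝ u x‖ / (Metric.infDist x Ωᶜ) ^ (s - 1)) ≥
        (s - 1) * ∫ x in Ω, |u x| / (Metric.infDist x Ωᶜ) ^ s := by
  set d : EuclideanSpace ℝ (Fin n) → ℝ := fun x => infDist x Ωᶜ with hdd
  have hlip : LipschitzWith 1 d := lipschitz_infDist_pt _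
  have hdpos : ∀ x ∈ Ω, 0 < d x := fun x hx =>
    (hΩo.isClosed_compl.notMem_iff_infDist_pos hne).1 (by simpa using hx)
  obtain ⟨c', hc', hcK'⟩ := IsCompact.exists_forall_le' huc (f := d) (a := 0)
    hlip.continuous.continuousOn (fun x hx => hdpos x (hus hx))
  set c := c' / 2 with hcdef
  have hc : 0 < c := by positivity
  have hcK : ∀ x ∈ tsupport u, c < d x := fun x hx => by have := hcK' x hx; linarith
  set a := s - 1 with ha
  have ha0 : 0 < a := by linarith
  have hm0 : ∀ x, 0 < max (d x) c := fun x => lt_max_of_lt_right hc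
  have hmlip : LipschitzWith 1 (fun x => max (d x) c) := hlip.max_const c
  have hcont : ∀ b : ℝ, Continuous (fun x => (max (d x) c) ^ b) := fun b =>
    hmlip.continuous.rpow_const fun x => Or.inl (hm0 x).ne'
  have hmc : ∀ x ∈ tsupport u, max (d x) c = d x := fun x hx => max_eq_left (hcK x hx).le
  have hu0 : ∀ x ∉ tsupport u, u x = 0 := fun x hx => image_eq_zero_of_notMem_tsupport hx
  have hfu0 : ∀ x ∉ tsupport u, fderiv ℝ u x = 0 := fun x hx =>
    image_eq_zero_of_notMem_tsupport fun h => hx (tsupport_fderiv_subset ℝ h)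
  let φ : EuclideanSpace ℝ (Fin n) → ℝ := fun x => |u x| * (max (d x) c) ^ (-a)
  have hφs : tsupport φ ⊆ tsupport u := by
    refine closure_mono fun x hx => ?_
    simp only [φ, Function.mem_support] at hx ⊢
    intro h; exact hx (by simp [h])
  have hφc : HasCompactSupport φ := IsCompact.of_isClosed_subset huc (isClosed_tsupport _) hφs
  obtain ⟨D, hD⟩ := hu.lipschitzWith_of_hasCompactSupport huc (by simp)
  obtain ⟨B, hB⟩ := huc.exists_bound_of_continuous hu.continuous
  have hDabs : LipschitzWith D (fun x => |u x|) := by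
    refine LipschitzWith.of_dist_le_mul fun x y => ?_
    refine le_trans ?_ (hD.dist_le_mul x y)
    simp only [Real.dist_eq]
    exact abs_abs_sub_abs_le_abs_sub _ _
  have hφlip : LipschitzWith (Real.toNNReal (B * (a * c ^ (-a - 1)) + c ^ (-a) * D)) φ := by
    refine LipschitzWith.of_dist_le' fun x y => ?_
    have e1 : |(max (d x) c) ^ (-a) - (max (d y) c) ^ (-a)| ≤ a * c ^ (-a - 1) * dist x y := by
      refine (aux_rpow_lip ha0.le hc (le_max_right _ _) (le_max_right _ _)).trans ?_
      refine mul_le_mul_of_nonneg_left ?_ (by positivity)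
      have := hmlip.dist_le_mul x y
      simpa [Real.dist_eq] using this
    have e2 : |(max (d y) c) ^ (-a)| ≤ c ^ (-a) := by
      rw [abs_of_nonneg (Real.rpow_nonneg (hm0 y).le _)]
      exact Real.rpow_le_rpow_of_nonpos hc (le_max_right _ _) (by linarith)
    have e3 := hDabs.dist_le_mul x y
    have e4 := hB x
    rw [Real.norm_eq_abs] at e4
    rw [Real.dist_eq] at e3 ⊢
    have : φ x - φ y = |u x| * ((max (d x) c) ^ (-a) - (max (d y) c) ^ (-a)) +
      (max (d y) c) ^ (-a) * (|u x| - |u y|) := by simp only [φ]; ring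
    rw [this]
    refine (abs_add_le _ _).trans ?_
    rw [abs_mul, abs_mul, abs_abs, add_mul]
    refine add_le_add ?_ ?_
    · rw [mul_assoc]; exact mul_le_mul e4 e1 (abs_nonneg _) ((abs_nonneg _).trans e4)
    · rw [mul_assoc]; exact mul_le_mul e2 e3 (abs_nonneg _) ((abs_nonneg _).trans e2)
  have hφ0 : ∀ x, 0 ≤ φ x := fun x => mul_nonneg (abs_nonneg _) (Real.rpow_nonneg (hm0 x).le _)
  obtain ⟨hint, hpos⟩ := aux_weak_grad hΩo hlip hsub hφlip hφc (hφs.trans hus) hφ0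
  have hI1 : Integrable (fun x => ‖fderiv ℝ u x‖ * (max (d x) c) ^ (-a)) := by
    refine Continuous.integrable_of_hasCompactSupport ?_ ?_
    · exact (hu.continuous_fderiv (by simp)).norm.mul (hcont _)
    · exact (huc.fderiv (𝕜 := ℝ)).norm.mul_right
  have hI2 : Integrable (fun x => |u x| * (max (d x) c) ^ (-s)) := by
    refine Continuous.integrable_of_hasCompactSupport ?_ ?_
    · exact hu.continuous.abs.mul (hcont _)
    · exact huc.norm.mul_right
  have hle : (∫ x, fderiv ℝ φ x (gradient d x)) ≤ ∫ x, (‖fderiv ℝ u x‖ * (max (d x) c) ^ (-a)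
      - a * (|u x| * (max (d x) c) ^ (-s))) := by
    refine integral_mono_ae hint (hI1.sub (hI2.const_mul a)) ?_
    filter_upwards [hlip.ae_differentiableAt, hDabs.ae_differentiableAt] with x h1 h2
    by_cases hx : x ∈ tsupport u
    · obtain ⟨g1, g2⟩ := aux_grad_dist hΩo hne (hus hx) h1
      change fderiv ℝ d x (gradient d x) = 1 at g2
      have hdx := hdpos x (hus hx)
      have hev : φ =ᶠ[𝓝 x] fun x => |u x| * (d x) ^ (-a) := by
        filter_upwards [hlip.continuous.continuousAt.eventually_const_lt (hcK x hx)] with y hy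
        simp only [φ]
        rw [max_eq_left hy.le]
      have hder := h2.hasFDerivAt.mul ((Real.hasDerivAt_rpow_const (p := -a)
        (Or.inl hdx.ne')).comp_hasFDerivAt x h1.hasFDerivAt)
      have hder' := hder.congr_of_eventuallyEq (f₁ := φ) hev
      rw [hder'.fderiv]
      have hU : (fderiv ℝ (fun x => |u x|) x) (gradient d x) ≤ ‖fderiv ℝ u x‖ := by
        refine (le_abs_self _).trans (((fderiv ℝ (fun x => |u x|) x).le_opNorm _).trans ?_)
        rw [g1, mul_one]
        exact aux_abs_fderiv (hu.differentiable (by simp)).differentiableAt h2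
      simp only [add_apply, smul_apply, smul_eq_mul,
        Function.comp_apply, g2, hmc x hx]
      have : -a - 1 = -s := by rw [ha]; ring
      rw [this]
      have hp : 0 ≤ d x ^ (-a) := Real.rpow_nonneg hdx.le _
      nlinarith
    · have : fderiv ℝ φ x = 0 :=
        image_eq_zero_of_notMem_tsupport fun h => hx (hφs (tsupport_fderiv_subset ℝ h))
      simp [this, hu0 x hx, hfu0 x hx]
  rw [integral_sub hI1 (hI2.const_mul a), integral_const_mul] at hle
  have t1 : (∫ x in Ω, ‖fderiv ℝ u x‖ / (d x) ^ (s - 1)) =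
      ∫ x, ‖fderiv ℝ u x‖ * (max (d x) c) ^ (-a) := by
    rw [setIntegral_eq_integral_of_forall_compl_eq_zero]
    · congr 1; ext x
      by_cases hx : x ∈ tsupport u
      · rw [hmc x hx, Real.rpow_neg (hdpos x (hus hx)).le, div_eq_mul_inv]
      · simp [hfu0 x hx]
    · intro x hx
      simp [hfu0 x fun h => hx (hus h)]
  have t2 : (∫ x in Ω, |u x| / (d x) ^ s) =
      ∫ x, |u x| * (max (d x) c) ^ (-s) := by
    rw [setIntegral_eq_integral_of_forall_compl_eq_zero]
    · congr 1; ext x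
      by_cases hx : x ∈ tsupport u
      · rw [hmc x hx, Real.rpow_neg (hdpos x (hus hx)).le, div_eq_mul_inv]
      · simp [hu0 x hx]
    · intro x hx
      simp [hu0 x fun h => hx (hus h)]
  rw [← ha] at t1
  rw [t1, t2]
  linarith

lemma aux_cv {n : ℕ} (g : EuclideanSpace ℝ (Fin n) → ℝ) (y : EuclideanSpace ℝ (Fin n))
    (A : EuclideanSpace ℝ (Fin n) ≃ₗᵢ[ℝ] EuclideanSpace ℝ (Fin n)) {T : ℝ} (hT : 0 < T) :
    ∫ z, g (y + T • A z) = (T ^ n)⁻¹ * ∫ x, g x := by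
  rw [MeasureTheory.integral_comp A (fun w => g (y + T • w)),
    Measure.integral_comp_smul volume (fun w => g (y + w)) T, integral_add_left_eq_self]
  rw [finrank_euclideanSpace_fin, abs_of_pos (by positivity), smul_eq_mul]

lemma aux_mean_deriv {n : ℕ} {Ω : Set (EuclideanSpace ℝ (Fin n))} (hΩo : IsOpen Ω)
    {d : EuclideanSpace ℝ (Fin n) → ℝ} (hd : LipschitzWith 1 d)
    (hsub : ∀ φ : EuclideanSpace ℝ (Fin n) → ℝ, ContDiff ℝ (⊤ : ℕ∞) φ →
      HasCompactSupport φ → tsupport φ ⊆ Ω → (∀ z, 0 ≤ φ z) →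
      (∫ x, d x * lapl φ x) ≤ 0) {p : EuclideanSpace ℝ (Fin n)} {t : ℝ} (ht : 0 < t)
    (hp : closedBall p t ⊆ Ω) :
    ∫ z in closedBall (0 : EuclideanSpace ℝ (Fin n)) 1, fderiv ℝ d (p + t • z) z ≤ 0 := by
  let m : EuclideanSpace ℝ (Fin n) → ℝ := fun x => min ‖x - p‖ t
  have hm0 : ∀ x, 0 ≤ m x := fun x => le_min (norm_nonneg _) ht.le
  have hmt : ∀ x, m x ≤ t := fun x => min_le_right _ _
  have hmlip : LipschitzWith 1 m := by
    have : LipschitzWith 1 (fun x : EuclideanSpace ℝ (Fin n) => ‖x - p‖) := by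
      refine LipschitzWith.of_dist_le_mul fun x y => ?_
      rw [Real.dist_eq, NNReal.coe_one, one_mul]
      refine (abs_norm_sub_norm_le _ _).trans ?_
      rw [dist_eq_norm]; simp
    exact this.min_const t
  let φ : EuclideanSpace ℝ (Fin n) → ℝ := fun x => t ^ 2 - (m x) ^ 2
  have hφlip : LipschitzWith (Real.toNNReal (2 * t)) φ := by
    refine LipschitzWith.of_dist_le' fun x y => ?_
    have h := hmlip.dist_le_mul x y
    rw [Real.dist_eq, NNReal.coe_one, one_mul] at h
    rw [Real.dist_eq]
    have : φ x - φ y = -((m x + m y) * (m x - m y)) := by simp only [φ]; ring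
    rw [this, abs_neg, abs_mul]
    refine mul_le_mul ?_ h (abs_nonneg _) (by positivity)
    rw [abs_of_nonneg (add_nonneg (hm0 x) (hm0 y))]
    linarith [hmt x, hmt y]
  have hφs : tsupport φ ⊆ closedBall p t := by
    refine closure_minimal (fun x hx => ?_) isClosed_closedBall
    by_contra hcon
    rw [mem_closedBall, dist_eq_norm, not_le] at hcon
    apply hx
    simp [φ, m, min_eq_right hcon.le]
  have hφc : HasCompactSupport φ :=
    (isCompact_closedBall p t).of_isClosed_subset (isClosed_tsupport _) hφs
  have hφ0 : ∀ x, 0 ≤ φ x := fun x => by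
    have := hm0 x; have := hmt x
    simp only [φ]; nlinarith
  obtain ⟨-, hpos⟩ := aux_weak_grad hΩo hd hsub hφlip hφc (hφs.trans hp) hφ0
  have hae : (fun x => fderiv ℝ φ x (gradient d x)) =ᵐ[volume]
      (fun x => (-2) * (closedBall p t).indicator (fun x => fderiv ℝ d x (x - p)) x) := by
    have hsph : ∀ᵐ x ∂(volume : Measure (EuclideanSpace ℝ (Fin n))), x ∉ sphere p t :=
      measure_eq_zero_iff_ae_notMem.1 (Measure.addHaar_sphere_of_ne_zero _ p ht.ne')
    filter_upwards [hsph] with x hx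
    rw [mem_sphere, dist_eq_norm] at hx
    rcases lt_or_gt_of_ne hx with h | h
    · have hev : φ =ᶠ[𝓝 x] fun x => t ^ 2 - ‖x - p‖ ^ 2 := by
        have : ContinuousAt (fun x => ‖x - p‖) x := by fun_prop
        filter_upwards [this.eventually_lt_const h] with y hy
        simp [φ, m, min_eq_left hy.le]
      have h1 : HasFDerivAt (fun x => t ^ 2 - ‖x - p‖ ^ 2) _ x :=
        (((hasFDerivAt_id x).sub_const p).norm_sq).const_sub (t ^ 2)
      rw [(h1.congr_of_eventuallyEq hev).fderiv, indicator_of_mem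
        (by rw [mem_closedBall, dist_eq_norm]; exact h.le)]
      have h2 : fderiv ℝ d x (x - p) = inner ℝ (x - p) (gradient d x) := by
        rw [real_inner_comm]
        exact (InnerProductSpace.toDual_symm_apply (y := fderiv ℝ d x) (x := x - p)).symm
      rw [h2]
      simp
    · have : fderiv ℝ φ x = 0 :=
        image_eq_zero_of_notMem_tsupport fun h' => by
          have := hφs (tsupport_fderiv_subset ℝ h')
          rw [mem_closedBall, dist_eq_norm] at this
          linarith
      rw [this, indicator_of_notMem (by rw [mem_closedBall, dist_eq_norm]; linarith)]
      simp
  rw [integral_congr_ae hae, integral_const_mul] at hpos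
  have hcv := aux_cv ((closedBall p t).indicator (fun x => fderiv ℝ d x (x - p))) p
    (LinearIsometryEquiv.refl ℝ _) ht
  have e : (fun z => (closedBall p t).indicator (fun x => fderiv ℝ d x (x - p))
      (p + t • (LinearIsometryEquiv.refl ℝ (EuclideanSpace ℝ (Fin n))) z)) =
      fun z => t * (closedBall (0 : EuclideanSpace ℝ (Fin n)) 1).indicator
        (fun z => fderiv ℝ d (p + t • z) z) z := by
    ext z
    by_cases hz : z ∈ closedBall (0 : EuclideanSpace ℝ (Fin n)) 1
    · have hz' : ‖z‖ ≤ 1 := by simpa using hz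
      rw [indicator_of_mem hz, indicator_of_mem]
      · simp
      · simp only [LinearIsometryEquiv.coe_refl, id, mem_closedBall, dist_self_add_left, norm_smul]
        rw [Real.norm_of_nonneg ht.le]; nlinarith
    · have hz' : 1 < ‖z‖ := by simpa using hz
      rw [indicator_of_notMem hz, indicator_of_notMem]
      · simp
      · simp only [LinearIsometryEquiv.coe_refl, id, mem_closedBall, dist_self_add_left, norm_smul]
        rw [Real.norm_of_nonneg ht.le]; nlinarith
  rw [e, integral_const_mul, integral_indicator measurableSet_closedBall] at hcv
  have h3 : (t ^ n)⁻¹ * ∫ x, (closedBall p t).indicator (fun x => fderiv ℝ d x (x - p)) x ≤ 0 :=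
    mul_nonpos_of_nonneg_of_nonpos (by positivity) (by linarith)
  rw [← hcv] at h3
  by_contra hcon
  push Not at hcon
  nlinarith [mul_pos ht hcon]

lemma aux_mean {n : ℕ} {Ω : Set (EuclideanSpace ℝ (Fin n))} (hΩo : IsOpen Ω)
    {d : EuclideanSpace ℝ (Fin n) → ℝ} (hd : LipschitzWith 1 d)
    (hsub : ∀ φ : EuclideanSpace ℝ (Fin n) → ℝ, ContDiff ℝ (⊤ : ℕ∞) φ →
      HasCompactSupport φ → tsupport φ ⊆ Ω → (∀ z, 0 ≤ φ z) →
      (∫ x, d x * lapl φ x) ≤ 0) {p : EuclideanSpace ℝ (Fin n)} {ρ : ℝ} (hρ : 0 < ρ)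
    (hp : ball p ρ ⊆ Ω) :
    ∫ z in closedBall (0 : EuclideanSpace ℝ (Fin n)) 1, (d (p + ρ • z) - d p) ≤ 0 := by
  let M : ℝ → ℝ := fun t => ∫ z in closedBall (0 : EuclideanSpace ℝ (Fin n)) 1,
    (d (p + t • z) - d p)
  have hMc : Continuous M := by
    refine continuous_parametric_integral_of_continuous ?_ (isCompact_closedBall _ _)
    have := hd.continuous
    simp only [Function.uncurry_def]
    fun_prop
  have hder : ∀ t ∈ Ioo 0 ρ, HasDerivAt M
      (∫ z in closedBall (0 : EuclideanSpace ℝ (Fin n)) 1, fderiv ℝ d (p + t • z) z) t := by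
    intro t ht
    have hfin : volume (closedBall (0 : EuclideanSpace ℝ (Fin n)) 1) < ⊤ :=
      measure_closedBall_lt_top
    refine (hasDerivAt_integral_of_dominated_loc_of_lip (bound := fun _ => 1)
      (F := fun t z => d (p + t • z) - d p)
      (F' := fun z => fderiv ℝ d (p + t • z) z) (s := univ) univ_mem ?_ ?_ ?_ ?_ ?_ ?_).2
    · refine Eventually.of_forall fun t => ?_
      have := hd.continuous
      exact Continuous.aestronglyMeasurable (by fun_prop)
    · have := hd.continuous
      exact ContinuousOn.integrableOn_compact (isCompact_closedBall _ _)
        (Continuous.continuousOn (by fun_prop))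
    · refine Measurable.aestronglyMeasurable ?_
      have h1 : Measurable (fun z => fderiv ℝ d (p + t • z)) :=
        (measurable_fderiv ℝ d).comp (by fun_prop)
      exact (isBoundedBilinearMap_apply (𝕜 := ℝ) (E := EuclideanSpace ℝ (Fin n))
        (F := ℝ)).continuous.measurable.comp (h1.prodMk measurable_id)
    · refine (ae_restrict_iff' measurableSet_closedBall).2 (Eventually.of_forall fun z hz => ?_)
      refine (LipschitzWith.of_dist_le_mul fun a b => ?_).lipschitzOnWith
      have hz' : ‖z‖ ≤ 1 := by simpa using hz
      have := hd.dist_le_mul (p + a • z) (p + b • z)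
      rw [dist_add_left, dist_eq_norm (a • z), ← sub_smul, norm_smul] at this
      simp only [dist_sub_right]
      refine this.trans ?_
      simp only [NNReal.coe_one, one_mul, map_one, Real.dist_eq, Real.norm_eq_abs]
      nlinarith [abs_nonneg (a - b)]
    · exact integrableOn_const hfin.ne
    · have hl : LipschitzWith (Real.toNNReal t) (fun z => d (p + t • z)) := by
        refine LipschitzWith.of_dist_le' fun a b => ?_
        have := hd.dist_le_mul (p + t • a) (p + t • b)
        rw [dist_add_left, dist_smul₀] at this
        simpa [abs_of_pos ht.1] using this
      filter_upwards [ae_restrict_of_ae hl.ae_differentiableAt] with z hz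
      have hdz : DifferentiableAt ℝ d (p + t • z) := by
        have h1 : DifferentiableAt ℝ (fun x => t⁻¹ • (x - p)) (p + t • z) := by fun_prop
        have hz' : DifferentiableAt ℝ (fun z => d (p + t • z))
            ((fun x => t⁻¹ • (x - p)) (p + t • z)) := by
          simpa [smul_smul, inv_mul_cancel₀ ht.1.ne'] using hz
        have h2 := hz'.comp (p + t • z) h1
        refine h2.congr_of_eventuallyEq (Eventually.of_forall fun x => ?_)
        simp [smul_smul, mul_inv_cancel₀ ht.1.ne']
      have hline : HasDerivAt (fun t : ℝ => p + t • z) z t := by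
        simpa using ((hasDerivAt_id t).smul_const z).const_add p
      exact (hdz.hasFDerivAt.comp_hasDerivAt t hline).sub_const (d p)
  have hanti : AntitoneOn M (Icc 0 ρ) := by
    refine antitoneOn_of_deriv_nonpos (convex_Icc 0 ρ) hMc.continuousOn ?_ ?_
    · rw [interior_Icc]
      exact fun t ht => (hder t ht).differentiableAt.differentiableWithinAt
    · rw [interior_Icc]
      intro t ht
      rw [(hder t ht).deriv]
      exact aux_mean_deriv hΩo hd hsub ht.1 ((closedBall_subset_ball ht.2).trans hp)
  have := hanti (left_mem_Icc.2 hρ.le) (right_mem_Icc.2 hρ.le) hρ.le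
  refine this.trans ?_
  simp [M]

lemma aux_mean_blow {n : ℕ} {Ω : Set (EuclideanSpace ℝ (Fin n))} (hΩo : IsOpen Ω)
    {d : EuclideanSpace ℝ (Fin n) → ℝ} (hd : LipschitzWith 1 d)
    (hsub : ∀ φ : EuclideanSpace ℝ (Fin n) → ℝ, ContDiff ℝ (⊤ : ℕ∞) φ →
      HasCompactSupport φ → tsupport φ ⊆ Ω → (∀ z, 0 ≤ φ z) →
      (∫ x, d x * lapl φ x) ≤ 0) {y q : EuclideanSpace ℝ (Fin n)}
    (A : EuclideanSpace ℝ (Fin n) ≃ₗᵢ[ℝ] EuclideanSpace ℝ (Fin n)) {T Λ : ℝ} (hT : 0 < T)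
    (hΛ : 0 < Λ) (hp : ball (y + T • A q) (T * Λ) ⊆ Ω) :
    ∫ z in closedBall q Λ, (d (y + T • A z) - d (y + T • A q)) ≤ 0 := by
  set p := y + T • A q with hpdef
  have h := aux_mean hΩo hd hsub (mul_pos hT hΛ) hp
  let g : EuclideanSpace ℝ (Fin n) → ℝ := (closedBall p (T * Λ)).indicator fun x => d x - d p
  have h1 := aux_cv g p (LinearIsometryEquiv.refl ℝ _) (mul_pos hT hΛ)
  have h2 := aux_cv g y A hT
  have e1 : (fun z => g (p + (T * Λ) •
      (LinearIsometryEquiv.refl ℝ (EuclideanSpace ℝ (Fin n))) z)) =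
      (closedBall (0 : EuclideanSpace ℝ (Fin n)) 1).indicator
        (fun z => d (p + (T * Λ) • z) - d p) := by
    ext z
    simp only [g, indicator, LinearIsometryEquiv.coe_refl, id, mem_closedBall, dist_self_add_left,
      norm_smul, dist_zero_right]
    rw [Real.norm_of_nonneg (mul_pos hT hΛ).le]
    congr 1
    rw [mul_le_iff_le_one_right (mul_pos hT hΛ)]
  have e2 : (fun z => g (y + T • A z)) =
      (closedBall q Λ).indicator (fun z => d (y + T • A z) - d p) := by
    ext z
    simp only [g, indicator, mem_closedBall, hpdef, dist_add_left, dist_smul₀, A.dist_map]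
    rw [Real.norm_of_nonneg hT.le]
    congr 1
    rw [mul_le_mul_iff_right₀ hT]
  rw [e1, integral_indicator measurableSet_closedBall] at h1
  rw [e2, integral_indicator measurableSet_closedBall] at h2
  rw [h1] at h
  have h3 : 0 < ((T * Λ) ^ n)⁻¹ := by positivity
  have h4 : ∫ x, g x ≤ 0 := by
    by_contra hcon
    push Not at hcon
    nlinarith [mul_pos h3 hcon]
  rw [h2]
  exact mul_nonpos_of_nonneg_of_nonpos (by positivity) h4

lemma aux_int1 {g : ℝ → ℝ} (hg : Continuous g) {α β : ℝ} (hα : 0 < α)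
    (h : ∀ t, t ∉ Icc α β → g t = 0) (b : ℝ) : Integrable (fun t => g t * t ^ b) := by
  have e : (fun t => g t * t ^ b) = fun t => g t * (max t α) ^ b := by
    ext t
    by_cases ht : t ∈ Icc α β
    · rw [max_eq_left ht.1]
    · simp [h t ht]
  rw [e]
  refine Continuous.integrable_of_hasCompactSupport ?_ ?_
  · exact hg.mul ((continuous_id.max continuous_const).rpow_const
      fun x => Or.inl (lt_max_of_lt_right hα).ne')
  · exact (HasCompactSupport.intro isCompact_Icc h).mul_right

lemma aux_S : ∃ C : ℝ, 0 ≤ C ∧ ∀ x, |deriv Real.smoothTransition x| ≤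
    (Icc (0 : ℝ) 1).indicator (fun _ => C) x := by
  have hS : ContDiff ℝ (⊤ : ℕ∞) Real.smoothTransition := Real.smoothTransition.contDiff
  have hc : Continuous (deriv Real.smoothTransition) := hS.continuous_deriv (by simp)
  obtain ⟨C, hC⟩ := isCompact_Icc.exists_bound_of_continuousOn (s := Icc (0 : ℝ) 1) hc.continuousOn
  refine ⟨C, (norm_nonneg _).trans (hC 0 (by simp)), fun x => ?_⟩
  by_cases hx : x ∈ Icc (0 : ℝ) 1
  · rw [indicator_of_mem hx]; exact hC x hx
  · rw [indicator_of_notMem hx]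
    have : deriv Real.smoothTransition x = 0 := by
      rcases lt_or_ge x 0 with h | h
      · have : Real.smoothTransition =ᶠ[𝓝 x] fun _ => 0 := by
          filter_upwards [gt_mem_nhds h] with y hy
          exact Real.smoothTransition.zero_of_nonpos hy.le
        rw [this.deriv_eq]; simp
      · have h1 : 1 < x := by
          by_contra hcon; exact hx ⟨h, not_lt.1 hcon⟩
        have : Real.smoothTransition =ᶠ[𝓝 x] fun _ => 1 := by
          filter_upwards [lt_mem_nhds h1] with y hy
          exact Real.smoothTransition.one_of_one_le hy.le
        rw [this.deriv_eq]; simp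
    rw [this]; simp

lemma aux_1d {s ε : ℝ} (hs : 1 < s) (hε : 0 < ε) : ∃ f : ℝ → ℝ, ∃ α β : ℝ, ContDiff ℝ (⊤ : ℕ∞) f ∧
    0 < α ∧ (∀ t, t ∉ Icc α β → f t = 0) ∧ (∀ t, 0 ≤ f t) ∧
    0 < ∫ t, f t * t ^ (-s) ∧
    (∫ t, |deriv f t| * t ^ (-(s - 1))) ≤ (s - 1 + ε) * ∫ t, f t * t ^ (-s) := by
  obtain ⟨C, hC0, hC⟩ := aux_S
  set a := s - 1 with ha
  have ha0 : 0 < a := by linarith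
  obtain ⟨k, hk4, hklog⟩ : ∃ k : ℝ, 4 ≤ k ∧ 2 * C / ε + 1 ≤ Real.log (k / 2) := by
    refine ⟨max 4 (2 * Real.exp (2 * C / ε + 1)), le_max_left _ _, ?_⟩
    rw [Real.le_log_iff_exp_le (by positivity)]
    rw [le_div_iff₀ two_pos, mul_comm]
    exact le_max_right _ _
  have hk0 : 0 < k := by linarith
  let A : ℝ → ℝ := fun t => Real.smoothTransition (k * t - 1) * Real.smoothTransition (2 - t)
  let f : ℝ → ℝ := fun t => t ^ a * A t
  have hS : ContDiff ℝ (⊤ : ℕ∞) Real.smoothTransition := Real.smoothTransition.contDiff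
  have hA : ContDiff ℝ (⊤ : ℕ∞) A := by
    refine (hS.comp (by fun_prop)).mul (hS.comp (by fun_prop))
  have hA0 : ∀ t, 0 ≤ A t := fun t =>
    mul_nonneg (Real.smoothTransition.nonneg _) (Real.smoothTransition.nonneg _)
  have hAz : ∀ t, t ∉ Icc (1 / k) 2 → A t = 0 := by
    intro t ht
    rcases lt_or_ge t (1 / k) with h | h
    · simp only [A]
      rw [Real.smoothTransition.zero_of_nonpos, zero_mul]
      rw [lt_div_iff₀ hk0] at h; linarith
    · have : 2 < t := by by_contra hcon; exact ht ⟨h, not_lt.1 hcon⟩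
      simp only [A]
      rw [Real.smoothTransition.zero_of_nonpos (x := 2 - t) (by linarith), mul_zero]
  have hfz : ∀ t, t ∉ Icc (1 / k) 2 → f t = 0 := fun t ht => by simp [f, hAz t ht]
  have hkinv : 0 < 1 / k := by positivity
  have hf0 : ∀ t, 0 ≤ f t := fun t => by
    by_cases ht : t ∈ Icc (1 / k) 2
    · exact mul_nonneg (Real.rpow_nonneg (hkinv.le.trans ht.1) _) (hA0 t)
    · rw [hfz t ht]
  have hlow : ∀ t, t < 1 / k → f =ᶠ[𝓝 t] fun _ => 0 := fun t ht => by
    filter_upwards [gt_mem_nhds ht] with y hy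
    exact hfz y fun h => absurd h.1 (not_le.2 hy)
  have hf : ContDiff ℝ (⊤ : ℕ∞) f := by
    rw [contDiff_iff_contDiffAt]
    intro t
    rcases lt_or_ge t (1 / k) with h | h
    · exact contDiffAt_const.congr_of_eventuallyEq (hlow t h)
    · exact (Real.contDiffAt_rpow_const_of_ne (hkinv.trans_le h).ne').mul hA.contDiffAt
  have hfc := hf.continuous
  have hgi := aux_int1 hfc hkinv hfz (-s)
  have hdz : ∀ t, t ∉ Icc (1 / k) 2 → |deriv f t| = 0 := by
    intro t ht
    have : f =ᶠ[𝓝 t] fun _ => 0 := by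
      filter_upwards [isClosed_Icc.isOpen_compl.mem_nhds ht] with y hy
      exact hfz y hy
    rw [this.deriv_eq]; simp
  have hdi := aux_int1 (hf.continuous_deriv (by simp)).abs hkinv hdz (-a)
  have hfA : ∀ t, 0 < t → f t * t ^ (-s) = A t / t := fun t ht => by
    simp only [f]
    have : t ^ (-s) = t ^ (-a) / t := by
      rw [← Real.rpow_sub_one ht.ne']; congr 1; rw [ha]; ring
    rw [this, Real.rpow_neg ht.le]
    have := (Real.rpow_pos_of_pos ht a).ne'
    field_simp
  have hlb : 2 * C / ε + 1 ≤ ∫ t, f t * t ^ (-s) := by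
    refine hklog.trans ?_
    have h2k : 2 / k ≤ 1 := by rw [div_le_one hk0]; linarith
    have h2k0 : 0 < 2 / k := by positivity
    have e1 : Real.log (k / 2) = ∫ t in (2 / k)..1, t⁻¹ := by
      rw [integral_inv_of_pos h2k0 one_pos]; congr 1; field_simp
    rw [e1, intervalIntegral.integral_of_le h2k]
    have e2 : ∫ t in Ioc (2 / k) 1, t⁻¹ = ∫ t in Ioc (2 / k) 1, f t * t ^ (-s) := by
      refine setIntegral_congr_fun measurableSet_Ioc fun t ht => ?_
      have ht0 : 0 < t := h2k0.trans ht.1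
      rw [hfA t ht0]
      have hh := ht.1
      rw [div_lt_iff₀ hk0] at hh
      simp only [A]
      rw [Real.smoothTransition.one_of_one_le (by linarith),
        Real.smoothTransition.one_of_one_le (by linarith [ht.2])]
      simp
    rw [e2]
    refine setIntegral_le_integral hgi (Eventually.of_forall fun t => ?_)
    by_cases ht : t ∈ Icc (1 / k) 2
    · exact mul_nonneg (hf0 t) (Real.rpow_nonneg (hkinv.le.trans ht.1) _)
    · simp [hfz t ht]
  have hpos : 0 < ∫ t, f t * t ^ (-s) := lt_of_lt_of_le (by positivity) hlb
  refine ⟨f, 1 / k, 2, hf, hkinv, hfz, hf0, hpos, ?_⟩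
  let R1 : ℝ → ℝ := (Icc (1 / k) (2 / k)).indicator fun _ => k * C
  let R2 : ℝ → ℝ := (Icc (1 : ℝ) 2).indicator fun _ => C
  have hR1i : Integrable R1 := by
    rw [integrable_indicator_iff measurableSet_Icc]
    exact integrableOn_const isCompact_Icc.measure_lt_top.ne
  have hR2i : Integrable R2 := by
    rw [integrable_indicator_iff measurableSet_Icc]
    exact integrableOn_const isCompact_Icc.measure_lt_top.ne
  have hR1v : ∫ t, R1 t = C := by
    simp only [R1]
    rw [integral_indicator measurableSet_Icc, setIntegral_const]
    have : (1 / k : ℝ) ≤ 2 / k := by gcongr; norm_num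
    simp only [Real.volume_real_Icc_of_le this, smul_eq_mul]
    field_simp; ring
  have hR2v : ∫ t, R2 t = C := by
    simp only [R2]
    rw [integral_indicator measurableSet_Icc, setIntegral_const]
    simp only [Real.volume_real_Icc_of_le (one_le_two (α := ℝ)), smul_eq_mul]
    ring
  have hA' : ∀ t, |deriv A t| ≤ R1 t + R2 t := by
    intro t
    have hSd : ∀ x, HasDerivAt Real.smoothTransition (deriv Real.smoothTransition x) x := fun x =>
      (hS.differentiable (by simp)).differentiableAt.hasDerivAt
    have h1 : HasDerivAt (fun t => Real.smoothTransition (k * t - 1))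
        (deriv Real.smoothTransition (k * t - 1) * k) t := by
      refine (hSd _).comp t ?_
      simpa using ((hasDerivAt_id t).const_mul k).sub_const 1
    have h2 : HasDerivAt (fun t => Real.smoothTransition (2 - t))
        (deriv Real.smoothTransition (2 - t) * (-1)) t := by
      refine (hSd _).comp t ?_
      simpa using (hasDerivAt_id t).const_sub 2
    have h3 : HasDerivAt A _ t := h1.mul h2
    rw [h3.deriv]
    refine (abs_add_le _ _).trans (add_le_add ?_ ?_)
    · rw [abs_mul, abs_mul, abs_of_pos hk0, abs_of_nonneg (Real.smoothTransition.nonneg _)]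
      have hc1 := hC (k * t - 1)
      have : (Icc (0 : ℝ) 1).indicator (fun _ => C) (k * t - 1) * k = R1 t := by
        simp only [R1, indicator]
        have : (k * t - 1 ∈ Icc (0 : ℝ) 1) ↔ t ∈ Icc (1 / k) (2 / k) := by
          simp only [mem_Icc, div_le_iff₀ hk0, le_div_iff₀ hk0]
          constructor <;> rintro ⟨h, h'⟩ <;> constructor <;> linarith
        simp only [this]
        split_ifs <;> ring
      rw [← this]
      calc _ ≤ |deriv Real.smoothTransition (k * t - 1)| * k * 1 :=
            mul_le_mul_of_nonneg_left (Real.smoothTransition.le_one _) (by positivity)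
        _ ≤ _ := by rw [mul_one]; exact mul_le_mul_of_nonneg_right hc1 hk0.le
    · rw [abs_mul, abs_mul, abs_neg, abs_one, mul_one,
        abs_of_nonneg (Real.smoothTransition.nonneg _)]
      have hc1 := hC (2 - t)
      have : (Icc (0 : ℝ) 1).indicator (fun _ => C) (2 - t) = R2 t := by
        simp only [R2, indicator]
        have : (2 - t ∈ Icc (0 : ℝ) 1) ↔ t ∈ Icc (1 : ℝ) 2 := by
          simp only [mem_Icc]
          constructor <;> rintro ⟨h, h'⟩ <;> constructor <;> linarith
        simp only [this]
        split_ifs <;> rfl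
      rw [← this]
      calc _ ≤ 1 * |deriv Real.smoothTransition (2 - t)| :=
            mul_le_mul_of_nonneg_right (Real.smoothTransition.le_one _) (by positivity)
        _ ≤ _ := by rw [one_mul]; exact hc1
  have hR0 : ∀ t, 0 ≤ R1 t + R2 t := fun t => (abs_nonneg _).trans (hA' t)
  have hpt : ∀ t, |deriv f t| * t ^ (-a) ≤ a * (f t * t ^ (-s)) + (R1 t + R2 t) := by
    intro t
    rcases lt_or_ge t (1 / k) with h | h
    · rw [(hlow t h).deriv_eq, hfz t fun h' => absurd h'.1 (not_le.2 h)]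
      simpa using hR0 t
    · have ht : 0 < t := hkinv.trans_le h
      have hd : HasDerivAt f _ t :=
        (Real.hasDerivAt_rpow_const (p := a) (Or.inl ht.ne')).mul
          (hA.differentiable (by simp)).differentiableAt.hasDerivAt
      rw [hd.deriv, hfA t ht, Real.rpow_sub_one ht.ne', Real.rpow_neg ht.le]
      have hp := Real.rpow_pos_of_pos ht a
      have e : |a * (t ^ a / t) * A t + t ^ a * deriv A t| = t ^ a * |a * (A t / t) + deriv A t| := by
        rw [← abs_of_pos hp, ← abs_mul, abs_of_pos hp]; congr 1; ring
      rw [e, mul_right_comm, mul_inv_cancel₀ hp.ne', one_mul]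
      refine (abs_add_le _ _).trans (add_le_add ?_ (hA' t))
      rw [abs_of_nonneg]
      exact mul_nonneg ha0.le (div_nonneg (hA0 t) ht.le)
  have hRi : Integrable (fun t => R1 t + R2 t) := hR1i.add hR2i
  calc _ ≤ ∫ t, (a * (f t * t ^ (-s)) + (R1 t + R2 t)) :=
        integral_mono hdi ((hgi.const_mul a).add hRi) hpt
    _ = a * (∫ t, f t * t ^ (-s)) + (C + C) := by
        rw [integral_add (hgi.const_mul a) hRi, integral_add hR1i hR2i, hR1v, hR2v,
          integral_const_mul]
    _ ≤ _ := by
        have : 2 * C / ε * ε = 2 * C := by field_simp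
        nlinarith

lemma aux_bump {η : ℝ} (hη : 0 < η) : ∃ b : ℝ → ℝ, ContDiff ℝ (⊤ : ℕ∞) b ∧ HasCompactSupport b ∧
    (∀ t, 0 ≤ b t) ∧ 0 < ∫ t, b t ∧ (∫ t, |deriv b t|) ≤ η * ∫ t, b t := by
  let B : ContDiffBump (0 : ℝ) := ⟨1, 2, one_pos, one_lt_two⟩
  have hB : ContDiff ℝ (⊤ : ℕ∞) B := B.contDiff
  set I := ∫ t, B t
  set J := ∫ t, |deriv B t|
  have hI : 0 < I := B.integral_pos
  have hJ : 0 ≤ J := integral_nonneg fun t => abs_nonneg _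
  set δ := η * I / (J + 1) with hδ
  have hδ0 : 0 < δ := by positivity
  refine ⟨fun t => B (δ * t), hB.comp (by fun_prop), ?_, fun t => B.nonneg, ?_, ?_⟩
  · exact B.hasCompactSupport.comp_homeomorph (Homeomorph.mulLeft₀ δ hδ0.ne')
  · rw [Measure.integral_comp_mul_left (fun t => B t) δ, smul_eq_mul]
    positivity
  · have hd : ∀ t, deriv (fun t => B (δ * t)) t = δ * deriv B (δ * t) := by
      intro t
      have := deriv_comp_mul_left δ (fun t => B t) t
      simpa using this
    simp_rw [hd, abs_mul, abs_of_pos hδ0]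
    rw [integral_const_mul, Measure.integral_comp_mul_left (fun t => B t) δ,
      Measure.integral_comp_mul_left (fun t => |deriv B t|) δ, smul_eq_mul, smul_eq_mul,
      abs_of_pos (inv_pos.2 hδ0)]
    change δ * (δ⁻¹ * J) ≤ η * (δ⁻¹ * I)
    rw [← mul_assoc, mul_inv_cancel₀ hδ0.ne', one_mul]
    have : η * (δ⁻¹ * I) = J + 1 := by rw [hδ]; field_simp
    linarith

lemma aux_prodint {n : ℕ} (G : Fin n → ℝ → ℝ) :
    ∫ z : EuclideanSpace ℝ (Fin n), ∏ j, G j (z j) = ∏ j, ∫ t, G j t := by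
  rw [← MeasureTheory.integral_fintype_prod_volume_eq_prod]
  exact (EuclideanSpace.volume_preserving_symm_measurableEquiv_toLp (Fin n)).integral_comp'
    (fun x : Fin n → ℝ => ∏ j, G j (x j))

lemma aux_prodint' {n : ℕ} (G : Fin n → ℝ → ℝ) (hG : ∀ j, Integrable (G j)) :
    Integrable fun z : EuclideanSpace ℝ (Fin n) => ∏ j, G j (z j) := by
  have h : Integrable (fun x : Fin n → ℝ => ∏ j, G j (x j)) := Integrable.fintype_prod hG
  exact ((EuclideanSpace.volume_preserving_symm_measurableEquiv_toLp (Fin n)).integrable_comp_emb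
    (MeasurableEquiv.measurableEmbedding _)).2 h

lemma aux_model {n : ℕ} (i0 : Fin n) {s ε : ℝ} (hs : 1 < s) (hε : 0 < ε) :
    ∃ v : EuclideanSpace ℝ (Fin n) → ℝ, ContDiff ℝ (⊤ : ℕ∞) v ∧ HasCompactSupport v ∧
      (∃ c > 0, ∀ z ∈ tsupport v, c ≤ z i0) ∧
      (∫ z, ‖fderiv ℝ v z‖ * (z i0) ^ (-(s - 1))) <
        (s - 1 + ε) * ∫ z, |v z| * (z i0) ^ (-s) := by
  obtain ⟨f, α, β, hf, hα, hfz, hf0, hX, hY⟩ := aux_1d hs (half_pos hε)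
  set X := ∫ t, f t * t ^ (-s) with hXd
  set Y := ∫ t, |deriv f t| * t ^ (-(s - 1)) with hYd
  set Q := ∫ t, f t * t ^ (-(s - 1)) with hQd
  have hpw : ∀ (g : ℝ → ℝ) (p : ℝ), (∀ t, 0 ≤ g t) → (∀ t, t ∉ Icc α β → g t = 0) → ∀ t,
      0 ≤ g t * t ^ p := fun g p hg hgz t => by
    by_cases ht : t ∈ Icc α β
    · exact mul_nonneg (hg t) (Real.rpow_nonneg (hα.le.trans ht.1) _)
    · simp [hgz t ht]
  have hQ0 : 0 ≤ Q := integral_nonneg (hpw f _ hf0 hfz)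
  have hη : 0 < (ε / 2) * X / (n * Q + 1) := by positivity
  set η := (ε / 2) * X / (n * Q + 1) with hηd
  obtain ⟨b, hb, hbc, hb0, hB, hbJ⟩ := aux_bump hη
  set B := ∫ t, b t
  set J := ∫ t, |deriv b t|
  have hdz : ∀ t, t ∉ Icc α β → |deriv f t| = 0 := by
    intro t ht
    have : f =ᶠ[𝓝 t] fun _ => 0 := by
      filter_upwards [isClosed_Icc.isOpen_compl.mem_nhds ht] with y hy
      exact hfz y hy
    rw [this.deriv_eq]; simp
  let F : Fin n → ℝ → ℝ := fun j => if j = i0 then f else b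
  have hF : ∀ j, ContDiff ℝ (⊤ : ℕ∞) (F j) := fun j => by
    by_cases h : j = i0 <;> simp only [F, h, if_true, if_false] <;> assumption
  have hF0 : ∀ j t, 0 ≤ F j t := fun j => by
    by_cases h : j = i0 <;> simp only [F, h, if_true, if_false] <;> assumption
  have hFc : ∀ j, HasCompactSupport (F j) := fun j => by
    by_cases h : j = i0 <;> simp only [F, h, if_true, if_false]
    · exact HasCompactSupport.intro isCompact_Icc hfz
    · exact hbc
  let v : EuclideanSpace ℝ (Fin n) → ℝ := fun z => ∏ j, F j (z j)
  have hv : ContDiff ℝ (⊤ : ℕ∞) v := by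
    refine contDiff_prod fun j _ => (hF j).comp ?_
    exact (EuclideanSpace.proj j : EuclideanSpace ℝ (Fin n) →L[ℝ] ℝ).contDiff
  have hv0 : ∀ z, 0 ≤ v z := fun z => Finset.prod_nonneg fun j _ => hF0 j _
  have hvz : ∀ z : EuclideanSpace ℝ (Fin n), z i0 ∉ Icc α β → v z = 0 := fun z hz => by
    refine Finset.prod_eq_zero (Finset.mem_univ i0) ?_
    simp only [F, if_true]; exact hfz _ hz
  have hvc : HasCompactSupport v := by
    refine HasCompactSupport.intro (K := (WithLp.toLp 2) '' (Set.univ.pi fun j => tsupport (F j))) ?_ ?_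
    · exact (isCompact_univ_pi fun j => hFc j).image (PiLp.continuous_toLp 2 _)
    · intro z hz
      by_contra hne
      refine hz ⟨WithLp.ofLp z, fun j _ => ?_, rfl⟩
      refine subset_tsupport _ fun h0 => hne ?_
      exact Finset.prod_eq_zero (Finset.mem_univ j) h0
  have hvs : ∀ z ∈ tsupport v, z i0 ∈ Icc α β := by
    intro z hz
    have hcl : IsClosed {z : EuclideanSpace ℝ (Fin n) | z i0 ∈ Icc α β} :=
      isClosed_Icc.preimage (EuclideanSpace.proj i0 : EuclideanSpace ℝ (Fin n) →L[ℝ] ℝ).continuous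
    exact closure_minimal (fun z hz => by by_contra h; exact hz (hvz z h)) hcl hz
  refine ⟨v, hv, hvc, ⟨α, hα, fun z hz => (hvs z hz).1⟩, ?_⟩
  let P : ℝ := ∏ j ∈ Finset.univ.erase i0, B
  have hP : 0 < P := Finset.prod_pos fun _ _ => hB
  have hR : ∫ z, |v z| * (z i0) ^ (-s) = X * P := by
    let G : Fin n → ℝ → ℝ := fun j t => F j t * (if j = i0 then t ^ (-s) else 1)
    have : ∀ z : EuclideanSpace ℝ (Fin n), |v z| * (z i0) ^ (-s) = ∏ j, G j (z j) := fun z => by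
      rw [abs_of_nonneg (hv0 z)]
      simp only [G, v]
      rw [Finset.prod_mul_distrib, Finset.prod_ite_eq']; simp
    simp_rw [this]
    rw [aux_prodint, ← Finset.mul_prod_erase _ _ (Finset.mem_univ i0)]
    congr 1
    · simp [G, F, hXd]
    · refine Finset.prod_congr rfl fun j hj => ?_
      have : j ≠ i0 := Finset.ne_of_mem_erase hj
      simp [G, F, this, B]
  let W : Fin n → Fin n → ℝ → ℝ := fun i j t =>
    (if j = i then |deriv (F j) t| else F j t) * (if j = i0 then t ^ (-(s - 1)) else 1)
  have hbd : Integrable fun t => |deriv b t| :=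
    ((hb.continuous_deriv (by simp)).integrable_of_hasCompactSupport hbc.deriv).abs
  have hWi : ∀ i j, Integrable (W i j) := by
    intro i j
    by_cases hj : j = i0
    · subst hj
      by_cases hi : j = i
      · simp only [W, hi, if_true, F]
        exact aux_int1 (hf.continuous_deriv (by simp)).abs hα hdz _
      · simp only [W, hi, if_true, if_false, F]
        exact aux_int1 hf.continuous hα hfz _
    · by_cases hi : j = i
      · subst hi
        simpa only [W, hj, if_true, if_false, F, mul_one] using hbd
      · simpa only [W, hj, hi, if_true, if_false, F, mul_one] using
          hb.continuous.integrable_of_hasCompactSupport hbc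
  have hpt : ∀ z : EuclideanSpace ℝ (Fin n), ‖fderiv ℝ v z‖ * (z i0) ^ (-(s - 1)) ≤
      ∑ i, ∏ j, W i j (z j) := by
    intro z
    by_cases hz : z ∈ tsupport v
    swap
    · have : fderiv ℝ v z = 0 := by
        by_contra h; exact hz (support_fderiv_subset ℝ h)
      rw [this, norm_zero, zero_mul]
      refine Finset.sum_nonneg fun i _ => Finset.prod_nonneg fun j _ => ?_
      by_cases hj : j = i0
      · subst hj
        by_cases hi : j = i
        · simp only [W, hi, if_true, F]
          exact hpw _ _ (fun t => abs_nonneg _) hdz _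
        · simp only [W, hi, if_true, if_false, F]
          exact hpw _ _ hf0 hfz _
      · simp only [W, hj, if_false, mul_one]
        split_ifs
        · exact abs_nonneg _
        · exact hF0 _ _
    have hz0 : 0 < z i0 := hα.trans_le (hvs z hz).1
    have hd : ∀ j, HasFDerivAt (fun z : EuclideanSpace ℝ (Fin n) => F j (z j))
        (deriv (F j) (z j) • (EuclideanSpace.proj j : EuclideanSpace ℝ (Fin n) →L[ℝ] ℝ)) z :=
      fun j => by
        have h1 : HasDerivAt (F j) (deriv (F j) (z j)) (z j) :=
          ((hF j).differentiable (by simp)).differentiableAt.hasDerivAt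
        exact h1.comp_hasFDerivAt z
          (EuclideanSpace.proj j : EuclideanSpace ℝ (Fin n) →L[ℝ] ℝ).hasFDerivAt
    have hD : HasFDerivAt v _ z := HasFDerivAt.finsetProd (u := Finset.univ) fun j _ => hd j
    rw [hD.fderiv]
    have hproj : ∀ j, ‖(EuclideanSpace.proj j : EuclideanSpace ℝ (Fin n) →L[ℝ] ℝ)‖ ≤ 1 := fun j =>
      ContinuousLinearMap.opNorm_le_bound _ zero_le_one fun x => by
        rw [one_mul]; exact PiLp.norm_apply_le x j
    refine (mul_le_mul_of_nonneg_right (norm_sum_le _ _) (Real.rpow_nonneg hz0.le _)).trans ?_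
    rw [Finset.sum_mul]
    refine Finset.sum_le_sum fun i _ => ?_
    simp only [W]
    rw [Finset.prod_mul_distrib, Finset.prod_ite_eq' (s := Finset.univ) i0]
    simp only [Finset.mem_univ, if_true]
    refine mul_le_mul_of_nonneg_right ?_ (Real.rpow_nonneg hz0.le _)
    rw [norm_smul, norm_smul, ← Finset.mul_prod_erase _ _ (Finset.mem_univ i)]
    simp only [if_true]
    have e : ∏ x ∈ Finset.univ.erase i, (if x = i then |deriv (F x) (z x)| else F x (z x)) =
        ∏ x ∈ Finset.univ.erase i, F x (z x) :=
      Finset.prod_congr rfl fun j hj => by simp [Finset.ne_of_mem_erase hj]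
    have hp0 : 0 ≤ ∏ x ∈ Finset.univ.erase i, F x (z x) := Finset.prod_nonneg fun j _ => hF0 j _
    rw [e, Real.norm_of_nonneg hp0, mul_comm, Real.norm_eq_abs]
    refine mul_le_mul_of_nonneg_right ?_ hp0
    exact mul_le_of_le_one_right (abs_nonneg _) (hproj i)
  have hWint : ∀ i, ∫ z : EuclideanSpace ℝ (Fin n), ∏ j, W i j (z j) ≤
      (if i = i0 then Y * P else 0) + Q * η * P := by
    intro i
    rw [aux_prodint, ← Finset.mul_prod_erase _ _ (Finset.mem_univ i0)]
    by_cases hi : i = i0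
    · subst hi
      have e1 : ∫ t, W i i t = Y := by simp [W, F, hYd]
      have e2 : ∏ j ∈ Finset.univ.erase i, ∫ t, W i j t = P :=
        Finset.prod_congr rfl fun j hj => by
          have : j ≠ i := Finset.ne_of_mem_erase hj
          simp [W, F, this, B]
      rw [e1, e2]; simp only [if_true]
      have : 0 ≤ Q * η * P := by positivity
      linarith
    · have hi' : i0 ≠ i := fun h => hi h.symm
      have e1 : ∫ t, W i i0 t = Q := by simp [W, F, hQd, hi']
      rw [e1, if_neg hi, zero_add, mul_assoc]
      refine mul_le_mul_of_nonneg_left ?_ hQ0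
      have e3 : η * P = ∏ j ∈ Finset.univ.erase i0, ((if j = i then η else 1) * B) := by
        rw [Finset.prod_mul_distrib, Finset.prod_ite_eq', if_pos (by simp [hi])]
      rw [e3]
      refine Finset.prod_le_prod (fun j hj => ?_) fun j hj => ?_
      · have hj' : j ≠ i0 := Finset.ne_of_mem_erase hj
        refine integral_nonneg fun t => ?_
        simp only [W, hj', if_false, mul_one, Pi.zero_apply]
        split_ifs
        · exact abs_nonneg _
        · exact hF0 _ _
      · have hj' : j ≠ i0 := Finset.ne_of_mem_erase hj
        by_cases h : j = i
        · subst h; simpa [W, F, hj'] using hbJ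
        · simp [W, F, hj', h, B]
  have hlhs : Integrable fun z : EuclideanSpace ℝ (Fin n) => ∑ i, ∏ j, W i j (z j) :=
    integrable_finsetSum _ fun i _ => aux_prodint' _ (hWi i)
  have hmain : ∫ z, ‖fderiv ℝ v z‖ * (z i0) ^ (-(s - 1)) ≤ Y * P + n * (Q * η * P) := by
    calc _ ≤ ∫ z : EuclideanSpace ℝ (Fin n), ∑ i, ∏ j, W i j (z j) := by
          refine integral_mono_of_nonneg (Eventually.of_forall fun z => ?_) hlhs
            (Eventually.of_forall hpt)
          by_cases hz : z ∈ tsupport v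
          · exact mul_nonneg (norm_nonneg _) (Real.rpow_nonneg (hα.le.trans (hvs z hz).1) _)
          · have : fderiv ℝ v z = 0 := by
              by_contra h; exact hz (support_fderiv_subset ℝ h)
            simp [this]
      _ = ∑ i, ∫ z : EuclideanSpace ℝ (Fin n), ∏ j, W i j (z j) :=
          integral_finsetSum _ fun i _ => aux_prodint' _ (hWi i)
      _ ≤ ∑ i, ((if i = i0 then Y * P else 0) + Q * η * P) := Finset.sum_le_sum fun i _ => hWint i
      _ = _ := by
          rw [Finset.sum_add_distrib, Finset.sum_ite_eq']; simp
  refine hmain.trans_lt ?_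
  rw [hR]
  have h1 : n * Q * η < ε / 2 * X := by
    have : η * (n * Q + 1) = ε / 2 * X := by rw [hηd]; field_simp
    nlinarith
  have h2 : Y + n * Q * η < (s - 1 + ε) * X := by nlinarith
  nlinarith

lemma aux_geom {n : ℕ} (i0 : Fin n) {Ω : Set (EuclideanSpace ℝ (Fin n))} (hΩo : IsOpen Ω)
    (hΩne : Ω.Nonempty) (hne : Ωᶜ.Nonempty) :
    ∃ (y : EuclideanSpace ℝ (Fin n)) (r : ℝ)
      (A : EuclideanSpace ℝ (Fin n) ≃ₗᵢ[ℝ] EuclideanSpace ℝ (Fin n)), y ∈ Ωᶜ ∧ 0 < r ∧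
      ∀ w, r - ‖r • EuclideanSpace.single i0 (1 : ℝ) - w‖ ≤ infDist (y + A w) Ωᶜ := by
  obtain ⟨x0, hx0⟩ := hΩne
  obtain ⟨y, hy, hyd⟩ := hΩo.isClosed_compl.exists_infDist_eq_dist hne x0
  have hr : 0 < dist x0 y := by
    rw [← hyd]
    exact (hΩo.isClosed_compl.notMem_iff_infDist_pos hne).1 (by simpa using hx0)
  set r := dist x0 y with hrd
  set e0 : EuclideanSpace ℝ (Fin n) := EuclideanSpace.single i0 (1 : ℝ)
  have hn : ‖e0‖ = ‖r⁻¹ • (x0 - y)‖ := by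
    rw [norm_smul, ← dist_eq_norm, ← hrd, norm_inv, Real.norm_of_nonneg hr.le,
      inv_mul_cancel₀ hr.ne']
    simp [e0]
  refine ⟨y, r, (Submodule.span ℝ {e0 - r⁻¹ • (x0 - y)})ᗮ.reflection, hy, hr, fun w => ?_⟩
  set A := (Submodule.span ℝ {e0 - r⁻¹ • (x0 - y)})ᗮ.reflection
  have hA : A e0 = r⁻¹ • (x0 - y) := Submodule.reflection_sub hn
  have hx : y + A (r • e0) = x0 := by
    rw [map_smul, hA, smul_smul, mul_inv_cancel₀ hr.ne', one_smul]; abel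
  have h := infDist_le_infDist_add_dist (s := Ωᶜ) (x := x0) (y := y + A w)
  have h2 : dist x0 (y + A w) = ‖r • e0 - w‖ := by
    rw [← hx, dist_add_left, A.dist_map, dist_eq_norm]
  rw [hyd, h2] at h
  linarith

lemma aux_quad {n : ℕ} (i0 : Fin n) {r T : ℝ} (hr : 0 < r)
    (z : EuclideanSpace ℝ (Fin n)) :
    T * z i0 - T ^ 2 * ‖z‖ ^ 2 / (2 * r) ≤
      r - ‖r • EuclideanSpace.single i0 (1 : ℝ) - T • z‖ := by
  have h1 : ‖r • EuclideanSpace.single i0 (1 : ℝ) - T • z‖ ^ 2 =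
      r ^ 2 - 2 * r * T * z i0 + T ^ 2 * ‖z‖ ^ 2 := by
    rw [norm_sub_sq_real, norm_smul, norm_smul, inner_smul_left, inner_smul_right,
      EuclideanSpace.inner_single_left]
    simp [mul_pow]; ring
  have hz : |z i0| ≤ ‖z‖ := PiLp.norm_apply_le z i0
  set q := ‖r • EuclideanSpace.single i0 (1 : ℝ) - T • z‖
  set N := T ^ 2 * ‖z‖ ^ 2 / (2 * r) with hN
  have hN' : N * (2 * r) = T ^ 2 * ‖z‖ ^ 2 := by rw [hN]; field_simp
  have hzz : (T * z i0) ^ 2 ≤ T ^ 2 * ‖z‖ ^ 2 := by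
    rw [mul_pow, ← sq_abs (z i0)]; gcongr
  have hX : 0 ≤ r - T * z i0 + N := by
    have : 0 ≤ (r - T * z i0 + N) * (2 * r) := by nlinarith [sq_nonneg (r - T * z i0)]
    exact nonneg_of_mul_nonneg_left this (by positivity)
  have : q ≤ r - T * z i0 + N := by
    refine le_of_sq_le_sq ?_ hX
    nlinarith [sq_nonneg (T * z i0 - N)]
  linarith

lemma aux_odd {n : ℕ} (i0 : Fin n) (Λ : ℝ) :
    ∫ z in closedBall (Λ • EuclideanSpace.single i0 (1 : ℝ) : EuclideanSpace ℝ (Fin n)) Λ,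
      (z i0 - Λ) = 0 := by
  set q : EuclideanSpace ℝ (Fin n) := Λ • EuclideanSpace.single i0 (1 : ℝ) with hq
  rw [← integral_indicator measurableSet_closedBall]
  set g := (closedBall q Λ).indicator (fun z : EuclideanSpace ℝ (Fin n) => z i0 - Λ) with hg
  have h1 : ∫ z, g (q + q - z) = ∫ z, g z := integral_sub_left_eq_self g volume (q + q)
  have h2 : ∀ z, g (q + q - z) = - g z := fun z => by
    have hm : q + q - z ∈ closedBall q Λ ↔ z ∈ closedBall q Λ := by
      rw [mem_closedBall, mem_closedBall, dist_eq_norm, dist_eq_norm, ← norm_neg]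
      congr! 2; abel
    by_cases h : z ∈ closedBall q Λ
    · rw [hg, indicator_of_mem h, indicator_of_mem (hm.2 h)]
      simp [hq]; ring
    · rw [hg, indicator_of_notMem h, indicator_of_notMem (fun h' => h (hm.1 h'))]; simp
  simp_rw [h2] at h1
  rw [integral_neg] at h1
  linarith

lemma aux_L1 {n : ℕ} (i0 : Fin n) {Ω : Set (EuclideanSpace ℝ (Fin n))} (hΩo : IsOpen Ω)
    (hne : Ωᶜ.Nonempty)
    (hsub : ∀ φ : EuclideanSpace ℝ (Fin n) → ℝ, ContDiff ℝ (⊤ : ℕ∞) φ →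
      HasCompactSupport φ → tsupport φ ⊆ Ω → (∀ z, 0 ≤ φ z) →
      (∫ x, infDist x Ωᶜ * lapl φ x) ≤ 0)
    {y : EuclideanSpace ℝ (Fin n)} {r : ℝ}
    {A : EuclideanSpace ℝ (Fin n) ≃ₗᵢ[ℝ] EuclideanSpace ℝ (Fin n)} (hy : y ∈ Ωᶜ) (hr : 0 < r)
    (hA : ∀ w, r - ‖r • EuclideanSpace.single i0 (1 : ℝ) - w‖ ≤ infDist (y + A w) Ωᶜ)
    {T Λ : ℝ} (hT : 0 < T) (hΛ : 0 < Λ) (hTΛ : T * Λ ≤ r) :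
    (∀ z ∈ closedBall (Λ • EuclideanSpace.single i0 (1 : ℝ)) Λ,
      z i0 - 2 * T * Λ ^ 2 / r ≤ infDist (y + T • A z) Ωᶜ / T) ∧
    (∫ z in closedBall (Λ • EuclideanSpace.single i0 (1 : ℝ)) Λ,
      |infDist (y + T • A z) Ωᶜ / T - z i0|) ≤
      2 * (2 * T * Λ ^ 2 / r) * volume.real
        (closedBall (Λ • EuclideanSpace.single i0 (1 : ℝ) : EuclideanSpace ℝ (Fin n)) Λ) := by
  set e0 : EuclideanSpace ℝ (Fin n) := EuclideanSpace.single i0 (1 : ℝ) with he0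
  have hne0 : ‖e0‖ = 1 := by simp [e0]
  set d : EuclideanSpace ℝ (Fin n) → ℝ := fun x => infDist x Ωᶜ with hdd
  have hlip : LipschitzWith 1 d := lipschitz_infDist_pt _
  set τ := 2 * T * Λ ^ 2 / r with hτ
  have hlow : ∀ z ∈ closedBall (Λ • e0) Λ, z i0 - τ ≤ d (y + T • A z) / T := by
    intro z hz
    have h1 : ‖z‖ ≤ 2 * Λ := by
      have h2 : ‖z - Λ • e0‖ ≤ Λ := by rwa [← dist_eq_norm]
      have h3 : ‖Λ • e0‖ = Λ := by rw [norm_smul, hne0, mul_one, Real.norm_of_nonneg hΛ.le]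
      have h4 : ‖z‖ ≤ ‖z - Λ • e0‖ + ‖Λ • e0‖ := by
        simpa using norm_add_le (z - Λ • e0) (Λ • e0)
      linarith
    have h2 := (aux_quad i0 (T := T) hr z).trans (hA (T • z))
    rw [map_smul] at h2
    rw [le_div_iff₀ hT]
    have h3 : T ^ 2 * ‖z‖ ^ 2 / (2 * r) ≤ τ * T := by
      rw [div_le_iff₀ (by positivity)]
      have : τ * T * (2 * r) = T ^ 2 * (2 * Λ) ^ 2 := by rw [hτ]; field_simp
      rw [this]; gcongr
    change _ ≤ infDist _ _
    linarith
  refine ⟨hlow, ?_⟩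
  have hc : d (y + T • A (Λ • e0)) = T * Λ := by
    have e : T • A (Λ • e0) = A ((T * Λ) • e0) := by rw [map_smul, map_smul, smul_smul]
    apply le_antisymm
    · refine (infDist_le_dist_of_mem hy).trans ?_
      rw [dist_eq_norm, add_sub_cancel_left, e, A.norm_map, norm_smul, hne0, mul_one,
        Real.norm_of_nonneg (by positivity)]
    · rw [e]
      refine le_trans ?_ (hA _)
      rw [← sub_smul, norm_smul, hne0, mul_one, Real.norm_of_nonneg (by linarith)]
      linarith
  have hp : ball (y + T • A (Λ • e0)) (T * Λ) ⊆ Ω := by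
    intro x hx
    by_contra hxn
    have := infDist_le_dist_of_mem (x := y + T • A (Λ • e0)) (s := Ωᶜ) hxn
    rw [mem_ball, dist_comm] at hx
    have hc' : infDist (y + T • A (Λ • e0)) Ωᶜ = T * Λ := hc
    linarith
  have hm := aux_mean_blow hΩo hlip hsub A hT hΛ hp
  rw [hc] at hm
  have hcont : Continuous fun z => d (y + T • A z) :=
    hlip.continuous.comp (by have := A.continuous; fun_prop)
  have hcz : Continuous fun z : EuclideanSpace ℝ (Fin n) => z i0 :=
    (EuclideanSpace.proj i0 : EuclideanSpace ℝ (Fin n) →L[ℝ] ℝ).continuous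
  have hio : ∀ g : EuclideanSpace ℝ (Fin n) → ℝ, Continuous g →
      IntegrableOn g (closedBall (Λ • e0) Λ) := fun g hg =>
    hg.continuousOn.integrableOn_compact (isCompact_closedBall _ _)
  have hi1 := hio (fun z => T⁻¹ * (d (y + T • A z) - T * Λ)) (by fun_prop)
  have hi2 := hio (fun z => z i0 - Λ) (by fun_prop)
  have hi3 := hio (fun z => 2 * τ) (by fun_prop)
  have hi4 := hio (fun z => T⁻¹ * (d (y + T • A z) - T * Λ) - (z i0 - Λ)) (by fun_prop)
  calc _ ≤ ∫ z in closedBall (Λ • e0) Λ,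
        (T⁻¹ * (d (y + T • A z) - T * Λ) - (z i0 - Λ) + 2 * τ) := by
        refine setIntegral_mono_on (hio _ (by fun_prop)) (hio _ (by fun_prop))
          measurableSet_closedBall fun z hz => ?_
        have h := hlow z hz
        have e : T⁻¹ * (d (y + T • A z) - T * Λ) - (z i0 - Λ) = d (y + T • A z) / T - z i0 := by
          field_simp; ring
        rw [e]
        change |d (y + T • A z) / T - z i0| ≤ _
        have hτ0 : 0 ≤ τ := by positivity
        rw [abs_le]; constructor <;> linarith
    _ = T⁻¹ * (∫ z in closedBall (Λ • e0) Λ, (d (y + T • A z) - T * Λ)) - 0 +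
        2 * τ * volume.real (closedBall (Λ • e0) Λ) := by
        rw [integral_add hi4 hi3, integral_sub hi1 hi2, integral_const_mul, he0, aux_odd,
          setIntegral_const, smul_eq_mul, mul_comm (volume.real _)]
    _ ≤ _ := by
        have : T⁻¹ * (∫ z in closedBall (Λ • e0) Λ, (d (y + T • A z) - T * Λ)) ≤ 0 :=
          mul_nonpos_of_nonneg_of_nonpos (by positivity) hm
        linarith

lemma aux_pert {n : ℕ} {S K : Set (EuclideanSpace ℝ (Fin n))} (hS : IsCompact S) (hKS : K ⊆ S)
    {h D D' : EuclideanSpace ℝ (Fin n) → ℝ} (hh : Continuous h) (hD : Continuous D)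
    (hD' : Continuous D') {M a c : ℝ} (hM : ∀ z, |h z| ≤ M) (ha : 0 ≤ a) (hc : 0 < c)
    (hK : ∀ z ∉ K, h z = 0) (h1 : ∀ z ∈ K, c ≤ D z) (h2 : ∀ z ∈ K, c ≤ D' z) :
    |(∫ z, h z * D z ^ (-a)) - ∫ z, h z * D' z ^ (-a)| ≤
      M * (a * c ^ (-a - 1)) * ∫ z in S, |D z - D' z| := by
  have hint : ∀ F : EuclideanSpace ℝ (Fin n) → ℝ, Continuous F → (∀ z ∈ K, c ≤ F z) →
      Integrable fun z => h z * F z ^ (-a) := by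
    intro F hF hFK
    have e : (fun z => h z * F z ^ (-a)) = fun z => h z * (max (F z) c) ^ (-a) := by
      ext z
      by_cases hz : z ∈ K
      · rw [max_eq_left (hFK z hz)]
      · simp [hK z hz]
    rw [e]
    refine Continuous.integrable_of_hasCompactSupport ?_ ?_
    · exact hh.mul ((hF.max continuous_const).rpow_const
        fun x => Or.inl (lt_max_of_lt_right hc).ne')
    · exact (HasCompactSupport.intro hS fun z hz => hK z fun h' => hz (hKS h')).mul_right
  rw [← integral_sub (hint D hD h1) (hint D' hD' h2), ← integral_const_mul,
    ← integral_indicator hS.measurableSet]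
  refine (abs_integral_le_integral_abs).trans ?_
  refine integral_mono ((hint D hD h1).sub (hint D' hD' h2)).abs ?_ fun z => ?_
  · rw [integrable_indicator_iff hS.measurableSet]
    exact (Continuous.continuousOn (by fun_prop)).integrableOn_compact hS
  · have hM0 : 0 ≤ M := (abs_nonneg _).trans (hM z)
    by_cases hz : z ∈ K
    · rw [indicator_of_mem (hKS hz)]
      simp only
      rw [← mul_sub, abs_mul, mul_assoc M]
      exact mul_le_mul (hM z) (aux_rpow_lip ha hc (h1 z hz) (h2 z hz)) (abs_nonneg _) hM0
    · simp only [hK z hz, zero_mul, sub_self, abs_zero]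
      exact indicator_nonneg (fun z _ => by positivity) z

lemma aux_sharp {n : ℕ} (i0 : Fin n) {Ω : Set (EuclideanSpace ℝ (Fin n))} (hΩo : IsOpen Ω)
    (hΩne : Ω.Nonempty) (hne : Ωᶜ.Nonempty)
    (hsub : ∀ φ : EuclideanSpace ℝ (Fin n) → ℝ, ContDiff ℝ (⊤ : ℕ∞) φ →
      HasCompactSupport φ → tsupport φ ⊆ Ω → (∀ z, 0 ≤ φ z) →
      (∫ x, infDist x Ωᶜ * lapl φ x) ≤ 0) {s ε : ℝ} (hs : 1 < s) (hε : 0 < ε) :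
    ∃ u : EuclideanSpace ℝ (Fin n) → ℝ, ContDiff ℝ (⊤ : ℕ∞) u ∧
        HasCompactSupport u ∧ tsupport u ⊆ Ω ∧ u ≠ 0 ∧
        (∫ x in Ω, ‖fderiv ℝ u x‖ / (Metric.infDist x Ωᶜ) ^ (s - 1)) <
          (s - 1 + ε) * ∫ x in Ω, |u x| / (Metric.infDist x Ωᶜ) ^ s := by
  obtain ⟨v, hv, hvc, ⟨c, hc, hcv⟩, hlt⟩ := aux_model i0 hs hε
  obtain ⟨y, r, A, hy, hr, hA⟩ := aux_geom i0 hΩo hΩne hne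
  set d : EuclideanSpace ℝ (Fin n) → ℝ := fun x => infDist x Ωᶜ with hdd
  have hlip : LipschitzWith 1 d := lipschitz_infDist_pt _
  have hd0 : ∀ x, 0 ≤ d x := fun x => infDist_nonneg
  have hcz : Continuous fun z : EuclideanSpace ℝ (Fin n) => z i0 :=
    (EuclideanSpace.proj i0 : EuclideanSpace ℝ (Fin n) →L[ℝ] ℝ).continuous
  have hu0 : ∀ x ∉ tsupport v, |v x| = 0 := fun x hx => by
    rw [image_eq_zero_of_notMem_tsupport hx, abs_zero]
  have hfu0 : ∀ x ∉ tsupport v, ‖fderiv ℝ v x‖ = 0 := fun x hx => by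
    rw [image_eq_zero_of_notMem_tsupport fun h => hx (tsupport_fderiv_subset ℝ h), norm_zero]
  have hcv1 : Continuous fun z => ‖fderiv ℝ v z‖ := (hv.continuous_fderiv (by simp)).norm
  have hcv2 : Continuous fun z => |v z| := hv.continuous.abs
  obtain ⟨M1, hM1⟩ := (HasCompactSupport.fderiv (𝕜 := ℝ) hvc).norm.exists_bound_of_continuous hcv1
  obtain ⟨M2, hM2⟩ := hvc.abs.exists_bound_of_continuous hcv2
  obtain ⟨ρ, hρ⟩ := hvc.isBounded.exists_norm_le
  set e0 : EuclideanSpace ℝ (Fin n) := EuclideanSpace.single i0 (1 : ℝ) with he0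
  obtain ⟨Λ, hΛ, hΛc⟩ : ∃ Λ : ℝ, 0 < Λ ∧ ρ ^ 2 ≤ 2 * Λ * c :=
    ⟨ρ ^ 2 / (2 * c) + 1, by positivity, by
      have : 2 * (ρ ^ 2 / (2 * c) + 1) * c = ρ ^ 2 + 2 * c := by field_simp
      rw [this]; linarith⟩
  have hvS : tsupport v ⊆ closedBall (Λ • e0) Λ := by
    intro z hz
    rw [mem_closedBall, dist_eq_norm]
    refine le_of_sq_le_sq ?_ hΛ.le
    have h1 : ‖z - Λ • e0‖ ^ 2 = ‖z‖ ^ 2 - 2 * Λ * z i0 + Λ ^ 2 := by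
      rw [norm_sub_sq_real, norm_smul, inner_smul_right, he0, EuclideanSpace.inner_single_right]
      simp; ring
    have h2 : ‖z‖ ^ 2 ≤ ρ ^ 2 := by gcongr; exact hρ z hz
    have h3 : 2 * Λ * c ≤ 2 * Λ * z i0 := by gcongr; exact hcv z hz
    rw [h1]; linarith
  set κ := s - 1 + ε with hκ
  have hκ0 : 0 < κ := by linarith
  set V := volume.real (closedBall (Λ • e0) Λ)
  have hV : 0 ≤ V := measureReal_nonneg
  set L := ∫ z, ‖fderiv ℝ v z‖ * (z i0) ^ (-(s - 1))
  set R := ∫ z, |v z| * (z i0) ^ (-s)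
  set C1 := M1 * ((s - 1) * (c / 2) ^ (-(s - 1) - 1))
  set C2 := M2 * (s * (c / 2) ^ (-s - 1))
  have hM10 : 0 ≤ M1 := (norm_nonneg _).trans (hM1 0)
  have hM20 : 0 ≤ M2 := (norm_nonneg _).trans (hM2 0)
  have hs1 : 0 ≤ s - 1 := by linarith
  have hC1 : 0 ≤ C1 := by positivity
  have hC2 : 0 ≤ C2 := by positivity
  set C := (C1 + κ * C2) * (2 * V) with hC
  have hC0 : 0 ≤ C := by positivity
  obtain ⟨τ, hτ0, hτc, hτΛ, hτC⟩ : ∃ τ : ℝ, 0 < τ ∧ τ ≤ c / 2 ∧ τ ≤ 2 * Λ ∧ C * τ < κ * R - L := by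
    have hδ : 0 < κ * R - L := by linarith
    refine ⟨min (c / 2) (min (2 * Λ) ((κ * R - L) / (C + 1))), by positivity, min_le_left _ _,
      (min_le_right _ _).trans (min_le_left _ _), ?_⟩
    have h : min (c / 2) (min (2 * Λ) ((κ * R - L) / (C + 1))) ≤ (κ * R - L) / (C + 1) :=
      (min_le_right _ _).trans (min_le_right _ _)
    calc _ ≤ C * ((κ * R - L) / (C + 1)) := by gcongr
      _ < _ := by
        rw [← mul_div_assoc, div_lt_iff₀ (by positivity)]; nlinarith
  set T := τ * r / (2 * Λ ^ 2) with hTd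
  have hT : 0 < T := by positivity
  have hTτ : 2 * T * Λ ^ 2 / r = τ := by rw [hTd]; field_simp
  have hTΛ : T * Λ ≤ r := by
    have : T * Λ = r * (τ / (2 * Λ)) := by rw [hTd]; field_simp
    rw [this]
    exact mul_le_of_le_one_right hr.le ((div_le_one (by positivity)).2 hτΛ)
  obtain ⟨hlow, hL1⟩ := aux_L1 i0 hΩo hne hsub hy hr hA hT hΛ hTΛ
  rw [hTτ] at hlow hL1
  set D : EuclideanSpace ℝ (Fin n) → ℝ := fun z => d (y + T • A z) / T with hDd
  have hDc : Continuous D :=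
    (hlip.continuous.comp (by have := A.continuous; fun_prop)).div_const T
  have hD0 : ∀ z, 0 ≤ D z := fun z => div_nonneg (hd0 _) hT.le
  have hDK : ∀ z ∈ tsupport v, c / 2 ≤ D z := fun z hz => by
    have h1 := hlow z (hvS hz)
    have h2 := hcv z hz
    change z i0 - τ ≤ D z at h1
    linarith
  have hzK : ∀ z ∈ tsupport v, c / 2 ≤ z i0 := fun z hz => by
    have h2 := hcv z hz
    linarith
  have hp1 := aux_pert (isCompact_closedBall _ _) hvS hcv1 hDc hcz (M := M1) (a := s - 1)
    (fun z => hM1 z) hs1 (half_pos hc) hfu0 hDK hzK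
  have hp2 := aux_pert (isCompact_closedBall _ _) hvS hcv2 hDc hcz (M := M2) (a := s)
    (fun z => hM2 z) (by linarith) (half_pos hc) hu0 hDK hzK
  set LT := ∫ z, ‖fderiv ℝ v z‖ * D z ^ (-(s - 1)) with hLT
  set RT := ∫ z, |v z| * D z ^ (-s) with hRT
  have hmain : LT < κ * RT := by
    set I := ∫ z in closedBall (Λ • e0) Λ, |D z - z i0|
    have hI : I ≤ 2 * τ * V := hL1
    have a1 : LT ≤ L + C1 * (2 * τ * V) := by
      have := (le_abs_self _).trans hp1
      have h' : C1 * I ≤ C1 * (2 * τ * V) := by gcongr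
      linarith
    have a2 : R - C2 * (2 * τ * V) ≤ RT := by
      have := neg_le_of_abs_le hp2
      have h' : C2 * I ≤ C2 * (2 * τ * V) := by gcongr
      linarith
    have a3 : κ * (R - C2 * (2 * τ * V)) ≤ κ * RT := by gcongr
    have a4 : C * τ = C1 * (2 * τ * V) + κ * (C2 * (2 * τ * V)) := by rw [hC]; ring
    linarith
  let u : EuclideanSpace ℝ (Fin n) → ℝ := fun x => v (A.symm (T⁻¹ • (x - y)))
  have huv : ∀ z, u (y + T • A z) = v z := fun z => by
    simp only [u]
    rw [add_sub_cancel_left, smul_smul, inv_mul_cancel₀ hT.ne', one_smul, A.symm_apply_apply]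
  have hinv : ∀ x, x = y + T • A (A.symm (T⁻¹ • (x - y))) := fun x => by
    rw [A.apply_symm_apply, smul_smul, mul_inv_cancel₀ hT.ne', one_smul]; abel
  have hu : ContDiff ℝ (⊤ : ℕ∞) u := by
    refine hv.comp (A.symm.contDiff.comp ?_)
    fun_prop
  have hΨ : Continuous fun z => y + T • A z := by have := A.continuous; fun_prop
  let K : Set (EuclideanSpace ℝ (Fin n)) := (fun z => y + T • A z) '' tsupport v
  have hKc : IsCompact K := hvc.isCompact.image hΨ
  have huK : ∀ x ∉ K, u x = 0 := fun x hx => by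
    refine image_eq_zero_of_notMem_tsupport (f := v) fun h => hx ⟨_, h, (hinv x).symm⟩
  have hKΩ : K ⊆ Ω := by
    rintro _ ⟨z, hz, rfl⟩
    by_contra hn
    have h1 := hDK z hz
    have h2 : d (y + T • A z) = 0 := infDist_zero_of_mem hn
    simp only [hDd, h2, zero_div] at h1
    linarith
  have huc : HasCompactSupport u := HasCompactSupport.intro hKc huK
  have hus : tsupport u ⊆ Ω := by
    refine (closure_minimal (fun x hx => ?_) hKc.isClosed).trans hKΩ
    by_contra h; exact hx (huK x h)
  have hfd : ∀ z, ‖fderiv ℝ v z‖ = T * ‖fderiv ℝ u (y + T • A z)‖ := fun z => by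
    have h1 : HasFDerivAt (fun z => y + T • A z)
        (T • (A.toContinuousLinearEquiv : EuclideanSpace ℝ (Fin n) →L[ℝ] _)) z :=
      ((A.toContinuousLinearEquiv.hasFDerivAt (x := z)).const_smul T).const_add y
    have h2 := HasFDerivAt.comp (g := u) z
      ((hu.differentiable (by simp)).differentiableAt.hasFDerivAt
        (x := y + T • A z)) h1
    rw [show (u ∘ fun z => y + T • A z) = v from funext huv] at h2
    have h3 : fderiv ℝ v z = _ := h2.fderiv
    rw [h3, ContinuousLinearMap.comp_smul, norm_smul, Real.norm_of_nonneg hT.le]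
    congr 1
    exact ContinuousLinearMap.opNorm_comp_linearIsometryEquiv _ A
  have hdD : ∀ z, d (y + T • A z) = T * D z := fun z => by
    simp only [hDd]; field_simp
  have hI1 : ∫ x in Ω, ‖fderiv ℝ u x‖ / d x ^ (s - 1) = T ^ n * (T ^ (-s) * LT) := by
    rw [setIntegral_eq_integral_of_forall_compl_eq_zero (fun x hx => by
      rw [image_eq_zero_of_notMem_tsupport
        fun h => hx (hus (tsupport_fderiv_subset ℝ h)), norm_zero, zero_div])]
    have h := aux_cv (fun x => ‖fderiv ℝ u x‖ / d x ^ (s - 1)) y A hT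
    have h' : ∀ z, ‖fderiv ℝ u (y + T • A z)‖ / d (y + T • A z) ^ (s - 1) =
        T ^ (-s) * (‖fderiv ℝ v z‖ * D z ^ (-(s - 1))) := fun z => by
      rw [hfd, hdD, Real.mul_rpow hT.le (hD0 z), Real.rpow_neg (hD0 z),
        Real.rpow_neg hT.le, Real.rpow_sub_one hT.ne' s]
      field_simp
    simp only [h'] at h
    rw [integral_const_mul, ← hLT] at h
    rw [h]; field_simp
  have hI2 : ∫ x in Ω, |u x| / d x ^ s = T ^ n * (T ^ (-s) * RT) := by
    rw [setIntegral_eq_integral_of_forall_compl_eq_zero (fun x hx => by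
      rw [image_eq_zero_of_notMem_tsupport fun h => hx (hus h), abs_zero, zero_div])]
    have h := aux_cv (fun x => |u x| / d x ^ s) y A hT
    have h' : ∀ z, |u (y + T • A z)| / d (y + T • A z) ^ s =
        T ^ (-s) * (|v z| * D z ^ (-s)) := fun z => by
      rw [huv, hdD, Real.mul_rpow hT.le (hD0 z), Real.rpow_neg (hD0 z), Real.rpow_neg hT.le]
      field_simp
    simp only [h'] at h
    rw [integral_const_mul, ← hRT] at h
    rw [h]; field_simp
  have hfin : (∫ x in Ω, ‖fderiv ℝ u x‖ / d x ^ (s - 1)) < κ * ∫ x in Ω, |u x| / d x ^ s := by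
    rw [hI1, hI2]
    have : 0 < T ^ n * T ^ (-s) := by positivity
    nlinarith
  refine ⟨u, hu, huc, hus, fun h0 => ?_, hfin⟩
  rw [h0] at hfin
  simp at hfin


end Aux

/-- `L^1` weighted Hardy inequality with sharp constant on sets with
`−Δd ≥ 0` in the sense of distributions. -/
theorem l1_weighted_hardy_sharp (n : ℕ) (hn : 1 ≤ n)
    (Ω : Set (EuclideanSpace ℝ (Fin n))) (hΩo : IsOpen Ω) (hΩne : Ω.Nonempty)
    (hΩuniv : Ω ≠ Set.univ)
    (hsub : ∀ φ : EuclideanSpace ℝ (Fin n) → ℝ, ContDiff ℝ (⊤ : ℕ∞) φ →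
      HasCompactSupport φ → tsupport φ ⊆ Ω → (∀ z, 0 ≤ φ z) →
      (∫ x in Ω, Metric.infDist x Ωᶜ * lapl φ x) ≤ 0)
    (s : ℝ) (hs : 1 < s) :
    (∀ u : EuclideanSpace ℝ (Fin n) → ℝ, ContDiff ℝ (⊤ : ℕ∞) u →
      HasCompactSupport u → tsupport u ⊆ Ω →
      (∫ x in Ω, ‖fderiv ℝ u x‖ / (Metric.infDist x Ωᶜ) ^ (s - 1)) ≥
        (s - 1) * ∫ x in Ω, |u x| / (Metric.infDist x Ωᶜ) ^ s) ∧
    (∀ ε : ℝ, 0 < ε →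
      ∃ u : EuclideanSpace ℝ (Fin n) → ℝ, ContDiff ℝ (⊤ : ℕ∞) u ∧
        HasCompactSupport u ∧ tsupport u ⊆ Ω ∧ u ≠ 0 ∧
        (∫ x in Ω, ‖fderiv ℝ u x‖ / (Metric.infDist x Ωᶜ) ^ (s - 1)) <
          (s - 1 + ε) * ∫ x in Ω, |u x| / (Metric.infDist x Ωᶜ) ^ s) := by
  have hne : Ωᶜ.Nonempty := Set.nonempty_compl.2 hΩuniv
  have hsub' : ∀ φ : EuclideanSpace ℝ (Fin n) → ℝ, ContDiff ℝ (⊤ : ℕ∞) φ →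
      HasCompactSupport φ → tsupport φ ⊆ Ω → (∀ z, 0 ≤ φ z) →
      (∫ x, Metric.infDist x Ωᶜ * lapl φ x) ≤ 0 := by
    intro φ h1 h2 h3 h4
    rw [← setIntegral_eq_integral_of_forall_compl_eq_zero (s := Ω) (fun x hx => by
      rw [infDist_zero_of_mem (s := Ωᶜ) hx, zero_mul])]
    exact hsub φ h1 h2 h3 h4
  exact ⟨fun u hu huc hus => aux_hardy hΩo hne hsub' hs hu huc hus,
    fun ε hε => aux_sharp ⟨0, hn⟩ hΩo hΩne hne hsub' hs hε⟩
end
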